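/- arXiv:1409.6445 — 3 statements merged into one kernel-verified Lean document; each statement's English description precedes it below -/
import Mathlib

section
/- Assume the finite-state Euler–Maruyama setting with multiplicative noise, the global Lipschitz condition with constant L, condition (H) with parameters c_0 and (β_i), the averaging condition Σ_i μ_i β_i < 0, and min{−q_ii/β_i : i ∈ S, β_i > 0} > 1; let η_2, ξ^{(2)}, ξ̂_2, ξ̄_2, β̂ be as in Theorem 3.4. On a probability space carrying an i.i.d. sequence (Z_k)_{k≥0} of standard Gaussian vectors in ℝ^m and an independent discrete-time Markov chain (J_k)_{k≥0} on S with one-step transition matrix exp(δQ) and J_0 = i, define for each x ∈ ℝⁿ the synchronously coupled Euler–Maruyama sequences Ȳ^x_0 = x, Ȳ^x_{k+1} = Ȳ^x_k + δ·b(Ȳ^x_k, J_k) + √δ·σ(Ȳ^x_k, J_k) Z_k. Then for every δ ∈ (0,1) with δ < (1/(32L²)) ∧ (η_2/β̂)², every x, y ∈ ℝⁿ, i ∈ S, and every k ≥ 0: E|Ȳ^x_k − Ȳ^y_k|² ≤ ξ̂_2 ξ̄_2 |x−y|² e^{−(η_2 − β̂ √δ) k δ}. -/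
open MeasureTheory ProbabilityTheory

/-- `Q` has nonnegative off-diagonal entries and every row sums to zero
(a conservative Q-matrix). -/
def IsConservativeQMatrix {N : ℕ} (Q : Matrix (Fin N) (Fin N) ℝ) : Prop :=
  (∀ i j, i ≠ j → 0 ≤ Q i j) ∧ ∀ i, ∑ j, Q i j = 0

/-- Irreducibility: any two distinct states are connected by a finite chain of
transitions with strictly positive rates. -/
def MatrixIrreducible {N : ℕ} (Q : Matrix (Fin N) (Fin N) ℝ) : Prop :=
  ∀ i j : Fin N, i ≠ j → ∃ (k : ℕ) (c : ℕ → Fin N),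
    c 0 = i ∧ c k = j ∧ ∀ l < k, 0 < Q (c l) (c (l + 1))

/-- The set of real parts of the (complex) eigenvalues of a real matrix. -/
def spectrumRe {N : ℕ} (M : Matrix (Fin N) (Fin N) ℝ) : Set ℝ :=
  {x : ℝ | ∃ γ ∈ spectrum ℂ (M.map Complex.ofReal), γ.re = x}

/-- The matrix exponential `exp M = ∑ₖ Mᵏ/k!`. -/
noncomputable def matExp {N : ℕ} (M : Matrix (Fin N) (Fin N) ℝ) :
    Matrix (Fin N) (Fin N) ℝ :=
  ∑' k : ℕ, ((k.factorial : ℝ)⁻¹) • M ^ k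

/-- Standard Gaussian measure on `ℝ^m`. -/
noncomputable def stdGaussianPi (m : ℕ) : Measure (Fin m → ℝ) :=
  Measure.pi fun _ => gaussianReal 0 1

/-- The distribution on `Fin N` with weights given by row `i` of `P`. -/
noncomputable def rowMeasure {N : ℕ} (P : Matrix (Fin N) (Fin N) ℝ) (i : Fin N) :
    Measure (Fin N) :=
  ∑ j : Fin N, ENNReal.ofReal (P i j) • Measure.dirac j

/-- Hilbert–Schmidt norm of a real matrix. -/
noncomputable def hsNorm {n m : ℕ} (M : Matrix (Fin n) (Fin m) ℝ) : ℝ :=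
  Real.sqrt (∑ i, ∑ j, (M i j) ^ 2)

/-- One step of the Euler–Maruyama scheme as a transition kernel on `ℝⁿ × S`:
starting from `(x, i)`, the next state is
`(x + δ b(x,i) + √δ σ(x,i) Z, J)` with `Z` standard Gaussian on `ℝ^m` and
`J` distributed according to row `i` of `exp(δ Q)`, independently. -/
noncomputable def EMKernel {n m N : ℕ} (Q : Matrix (Fin N) (Fin N) ℝ)
    (b : EuclideanSpace ℝ (Fin n) → Fin N → EuclideanSpace ℝ (Fin n))
    (σ : EuclideanSpace ℝ (Fin n) → Fin N → Matrix (Fin n) (Fin m) ℝ)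
    (δ : ℝ) (q : EuclideanSpace ℝ (Fin n) × Fin N) :
    Measure (EuclideanSpace ℝ (Fin n) × Fin N) :=
  Measure.map
    (fun zj : (Fin m → ℝ) × Fin N =>
      (q.1 + δ • b q.1 q.2 +
        Real.sqrt δ • ((WithLp.equiv 2 (Fin n → ℝ)).symm ((σ q.1 q.2).mulVec zj.1)),
        zj.2))
    ((stdGaussianPi m).prod (rowMeasure (matExp (δ • Q)) q.2))

/-- `π` is an invariant measure of the kernel `K`. -/
def IsInvariantMeasure {α : Type*} [MeasurableSpace α] (K : α → Measure α)
    (π : Measure α) : Prop :=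
  ∀ A : Set α, MeasurableSet A → ∫⁻ q, K q A ∂π = π A

/-!
Given the path of the environment `J`, the difference `D k` of the two coupled schemes is driven by
the noise alone. Since `Z k` is centred, has identity covariance and is independent of the past, one
step in state `s` multiplies the mean square of the difference by at most
`1 + δ β s + δ² L² ≤ w s := exp (δ β s + δ² L²)`, so that the conditional second moment of `D k` is
at most `∏ l < k, w (J l)` times `‖x - y‖²`.

It remains to average this Feynman–Kac product over the chain. The eigenvector `ξ` of `Q + diag β`
is almost superharmonic for it: `w s * (exp (δ Q) ξ) s ≤ ρ * ξ s` with
`ρ = exp (-(η - βhat √δ) δ)`, hence `E[(∏ l < k, w (J l)) ξ (J k)] ≤ ρ ^ k * ξ i`. To see the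
inequality, put `u t = (exp (t Q) ξ) s`. As `Q ξ = -(η + β) ξ`, we have `u' = -(η + β s) u` up to an
average of `(β s - β c) ξ c` over the law of the chain at time `t`; this average does not see the
event that the chain is still in `s`, and is therefore `O(t) u`. Grönwall's inequality then yields
`u δ ≤ exp (-(η + β s) δ + O(δ²)) ξ s`.
-/

section Comparison

theorem le_mul_exp_of_hasDerivAt_le {u u' g g' : ℝ → ℝ} (hu : ∀ t, HasDerivAt u (u' t) t)
    (hg : ∀ t, HasDerivAt g (g' t) t) (h : ∀ t, 0 ≤ t → u' t ≤ g' t * u t) {t : ℝ} (ht : 0 ≤ t) :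
    u t ≤ u 0 * Real.exp (g t - g 0) := by
  have hd : ∀ s, HasDerivAt (fun s => u s * Real.exp (-g s))
      (u' s * Real.exp (-g s) + u s * (Real.exp (-g s) * -g' s)) s :=
    fun s => (hu s).mul (hg s).neg.exp
  have hanti : AntitoneOn (fun s => u s * Real.exp (-g s)) (Set.Ici 0) := by
    refine antitoneOn_of_deriv_nonpos (convex_Ici 0)
      (fun s _ => (hd s).continuousAt.continuousWithinAt)
      (fun s _ => (hd s).differentiableAt.differentiableWithinAt) fun s hs => ?_
    rw [interior_Ici] at hs
    rw [(hd s).deriv]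
    have := mul_le_mul_of_nonneg_right (h s hs.le) (Real.exp_pos (-g s)).le
    linarith
  have hle : u t * Real.exp (-g t) ≤ u 0 * Real.exp (-g 0) :=
    hanti (Set.mem_Ici.2 le_rfl) (Set.mem_Ici.2 ht) ht
  calc u t = u t * Real.exp (-g t) * Real.exp (g t) := by
        rw [mul_assoc, ← Real.exp_add, neg_add_cancel, Real.exp_zero, mul_one]
    _ ≤ u 0 * Real.exp (-g 0) * Real.exp (g t) := by gcongr
    _ = u 0 * Real.exp (g t - g 0) := by
        rw [mul_assoc, ← Real.exp_add, neg_add_eq_sub]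

end Comparison

section Averages

variable {S : Type*} [Fintype S] {p v κ : S → ℝ} {R D : ℝ}

theorem le_mul_sum_of_le_mul (hp : ∀ j, 0 ≤ p j) (hp1 : ∑ j, p j = 1)
    (hv : ∀ j k, v j ≤ R * v k) (j : S) : v j ≤ R * ∑ k, p k * v k :=
  calc v j = ∑ k, p k * v j := by rw [← Finset.sum_mul, hp1, one_mul]
    _ ≤ ∑ k, p k * (R * v k) :=
      Finset.sum_le_sum fun k _ => mul_le_mul_of_nonneg_left (hv j k) (hp k)
    _ = R * ∑ k, p k * v k := by simp only [Finset.mul_sum, mul_left_comm]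

theorem sum_mul_sub_mul_le (hp : ∀ j, 0 ≤ p j) (hp1 : ∑ j, p j = 1) (hv0 : ∀ j, 0 ≤ v j)
    (hv : ∀ j k, v j ≤ R * v k) {i : S} (hκ : ∀ j, κ i - κ j ≤ D) :
    ∑ j, p j * ((κ i - κ j) * v j) ≤ (1 - p i) * (D * (R * ∑ j, p j * v j)) := by
  classical
  have hD : 0 ≤ D := by simpa only [sub_self] using hκ i
  calc ∑ j, p j * ((κ i - κ j) * v j)
      = ∑ j ∈ Finset.univ.erase i, p j * ((κ i - κ j) * v j) := by
        rw [Finset.sum_erase]; simp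
    _ ≤ ∑ j ∈ Finset.univ.erase i, p j * (D * (R * ∑ k, p k * v k)) := by
        gcongr with j
        · exact hp j
        · exact hv0 j
        · exact hκ j
        · exact le_mul_sum_of_le_mul hp hp1 hv j
    _ = (1 - p i) * (D * (R * ∑ j, p j * v j)) := by
        rw [← Finset.sum_mul, Finset.sum_erase_eq_sub (Finset.mem_univ i), hp1]

end Averages

/-- A matrix with nonnegative off-diagonal entries (a Metzler matrix). These are the matrices `Q`
for which `exp (t • Q)` has nonnegative entries for all `t ≥ 0`. -/
def IsMetzler {S : Type*} (Q : Matrix S S ℝ) : Prop :=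
  ∀ i j, i ≠ j → 0 ≤ Q i j

theorem IsMetzler.smul {S : Type*} {Q : Matrix S S ℝ} (hQ : IsMetzler Q) {t : ℝ} (ht : 0 ≤ t) :
    IsMetzler (t • Q) :=
  fun i j hij => mul_nonneg ht (hQ i j hij)

theorem IsMetzler.exists_nonneg_add_smul_one {S : Type*} [Finite S] [DecidableEq S]
    {Q : Matrix S S ℝ} (hQ : IsMetzler Q) :
    ∃ c : ℝ, ∀ i j, 0 ≤ (Q + c • (1 : Matrix S S ℝ)) i j := by
  have := Fintype.ofFinite S
  refine ⟨∑ i, |Q i i|, fun i j => ?_⟩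
  rcases eq_or_ne i j with rfl | hij
  · have := Finset.single_le_sum (f := fun i => |Q i i|) (fun i _ => abs_nonneg _)
      (Finset.mem_univ i)
    simpa using by linarith [neg_abs_le (Q i i)]
  · simpa [hij] using hQ i j hij

section MatrixExponential

open NormedSpace (exp)
open scoped Matrix Matrix.Norms.Operator

variable {S : Type*} [Fintype S] [DecidableEq S] {Q : Matrix S S ℝ}

theorem exp_apply_eq_tsum (Q : Matrix S S ℝ) (i j : S) :
    exp Q i j = ∑' k : ℕ, (k.factorial : ℝ)⁻¹ * (Q ^ k) i j := by
  have h := (NormedSpace.exp_series_hasSum_exp' (𝕂 := ℝ) Q).map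
    (Matrix.entryAddMonoidHom ℝ i j) (continuous_id.matrix_elem i j)
  exact h.tsum_eq.symm

theorem exp_apply_nonneg_of_nonneg (hQ : ∀ i j, 0 ≤ Q i j) (i j : S) : 0 ≤ exp Q i j := by
  have hpow : ∀ (k : ℕ) (i j : S), 0 ≤ (Q ^ k) i j := by
    intro k
    induction k with
    | zero => intro i j; rw [pow_zero, Matrix.one_apply]; positivity
    | succ k ih =>
      intro i j
      rw [pow_succ, Matrix.mul_apply]
      exact Finset.sum_nonneg fun l _ => mul_nonneg (ih i l) (hQ l j)
  rw [exp_apply_eq_tsum]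
  exact tsum_nonneg fun k => mul_nonneg (by positivity) (hpow k i j)

theorem hasDerivAt_exp_smul_mulVec (Q : Matrix S S ℝ) (v : S → ℝ) (i : S) (t : ℝ) :
    HasDerivAt (fun t : ℝ => (exp (t • Q) *ᵥ v) i) ((exp (t • Q) *ᵥ (Q *ᵥ v)) i) t := by
  let F : Matrix S S ℝ →L[ℝ] ℝ := LinearMap.toContinuousLinearMap
    (LinearMap.proj i ∘ₗ (Matrix.mulVecBilin ℝ ℝ).flip v)
  rw [Matrix.mulVec_mulVec]
  exact F.hasFDerivAt.comp_hasDerivAt t (hasDerivAt_exp_smul_const (𝕂 := ℝ) Q t)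

theorem exp_mulVec_of_mulVec_eq_zero {v : S → ℝ} (hv : Q *ᵥ v = 0) : exp Q *ᵥ v = v := by
  funext i
  have hd : ∀ t : ℝ, HasDerivAt (fun t : ℝ => (exp (t • Q) *ᵥ v) i) 0 t := fun t => by
    simpa only [hv, Matrix.mulVec_zero, Pi.zero_apply] using hasDerivAt_exp_smul_mulVec Q v i t
  have hconst := is_const_of_deriv_eq_zero (fun t => (hd t).differentiableAt)
    (fun t => (hd t).deriv) 1 0
  simpa only [one_smul, zero_smul, NormedSpace.exp_zero, Matrix.one_mulVec] using hconst

theorem sum_exp_apply (hQ : Q *ᵥ 1 = 0) (i : S) : ∑ j, exp Q i j = 1 := by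
  simpa [Matrix.mulVec, dotProduct] using congrFun (exp_mulVec_of_mulVec_eq_zero hQ) i

namespace IsMetzler

theorem exp_apply_nonneg (hQ : IsMetzler Q) (i j : S) : 0 ≤ exp Q i j := by
  obtain ⟨c, hc⟩ := hQ.exists_nonneg_add_smul_one
  have hcomm : Commute (Q + c • (1 : Matrix S S ℝ)) (-c • (1 : Matrix S S ℝ)) :=
    (Commute.one_right _).smul_right _
  have hscalar : exp (-c • (1 : Matrix S S ℝ)) = Real.exp (-c) • 1 := by
    rw [Real.exp_eq_exp_ℝ, ← Algebra.algebraMap_eq_smul_one, ← Algebra.algebraMap_eq_smul_one]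
    exact (NormedSpace.algebraMap_exp_comm (𝔸 := Matrix S S ℝ) (-c)).symm
  have hexp : exp Q = Real.exp (-c) • exp (Q + c • (1 : Matrix S S ℝ)) := by
    calc exp Q = exp (Q + c • (1 : Matrix S S ℝ) + -c • (1 : Matrix S S ℝ)) := by simp
      _ = exp (Q + c • (1 : Matrix S S ℝ)) * exp (-c • (1 : Matrix S S ℝ)) :=
        NormedSpace.exp_add_of_commute hcomm
      _ = Real.exp (-c) • exp (Q + c • (1 : Matrix S S ℝ)) := by
        rw [hscalar, Matrix.mul_smul, Matrix.mul_one]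
  rw [hexp]
  exact mul_nonneg (Real.exp_pos _).le (exp_apply_nonneg_of_nonneg hc i j)

theorem mul_exp_apply_self_le (hQ : IsMetzler Q) {t : ℝ} (ht : 0 ≤ t) (i : S) :
    Q i i * exp (t • Q) i i ≤ (exp (t • Q) * Q) i i := by
  rw [mul_comm, Matrix.mul_apply, ← Finset.add_sum_erase _ _ (Finset.mem_univ i)]
  exact le_add_of_nonneg_right (Finset.sum_nonneg fun j hj =>
    mul_nonneg ((hQ.smul ht).exp_apply_nonneg i j) (hQ j i (Finset.ne_of_mem_erase hj)))

theorem exp_diag_le_diag_exp (hQ : IsMetzler Q) (i : S) : Real.exp (Q i i) ≤ exp Q i i := by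
  have hd := fun t => (hasDerivAt_exp_smul_mulVec Q (Pi.single i 1) i t).neg
  have hg : ∀ t, HasDerivAt (fun t : ℝ => Q i i * t) (Q i i) t := fun t => by
    simpa using (hasDerivAt_id t).const_mul (Q i i)
  have hle : ∀ t : ℝ, 0 ≤ t → -(exp (t • Q) *ᵥ (Q *ᵥ Pi.single i 1)) i ≤
      Q i i * -(exp (t • Q) *ᵥ Pi.single i 1) i := fun t ht => by
    simp only [Matrix.mulVec_single_one, mul_neg, neg_le_neg_iff]
    exact hQ.mul_exp_apply_self_le ht i
  simpa using le_mul_exp_of_hasDerivAt_le hd hg hle zero_le_one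

-- Since `∑ⱼ pⱼ (κᵢ - κⱼ) vⱼ` has no diagonal term, it is of the order of `1 - pᵢ ≤ -Qᵢᵢ t`.
theorem exp_smul_mulVec_mulVec_le (hQ : IsMetzler Q) (hQ1 : Q *ᵥ 1 = 0) {v κ : S → ℝ} {R D : ℝ}
    (hv0 : ∀ j, 0 ≤ v j) (hv : ∀ j k, v j ≤ R * v k) (hQv : ∀ j, (Q *ᵥ v) j = -(κ j * v j))
    {i : S} (hκ : ∀ j, κ i - κ j ≤ D) {t : ℝ} (ht : 0 ≤ t) :
    (exp (t • Q) *ᵥ (Q *ᵥ v)) i ≤ (-κ i + D * R * -Q i i * t) * (exp (t • Q) *ᵥ v) i := by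
  have hD : 0 ≤ D := by simpa only [sub_self] using hκ i
  set p := exp (t • Q) i
  have hp : ∀ j, 0 ≤ p j := (hQ.smul ht).exp_apply_nonneg i
  have hp1 : ∑ j, p j = 1 := sum_exp_apply (by rw [Matrix.smul_mulVec, hQ1, smul_zero]) i
  have hpi : 1 - p i ≤ -Q i i * t := by
    have := (Real.add_one_le_exp _).trans ((hQ.smul ht).exp_diag_le_diag_exp i)
    rw [Matrix.smul_apply, smul_eq_mul] at this
    linarith
  have hmean : 0 ≤ D * (R * ∑ j, p j * v j) :=
    mul_nonneg hD ((hv0 i).trans (le_mul_sum_of_le_mul hp hp1 hv i))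
  calc (exp (t • Q) *ᵥ (Q *ᵥ v)) i
      = -κ i * ∑ j, p j * v j + ∑ j, p j * ((κ i - κ j) * v j) := by
        rw [funext hQv, Finset.mul_sum, ← Finset.sum_add_distrib]
        exact Finset.sum_congr rfl fun j _ => by ring
    _ ≤ -κ i * ∑ j, p j * v j + -Q i i * t * (D * (R * ∑ j, p j * v j)) := by
        gcongr
        exact (sum_mul_sub_mul_le hp hp1 hv0 hv hκ).trans (mul_le_mul_of_nonneg_right hpi hmean)
    _ = (-κ i + D * R * -Q i i * t) * (exp (t • Q) *ᵥ v) i := by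
        rw [Matrix.mulVec, dotProduct]
        ring

theorem exp_smul_mulVec_le (hQ : IsMetzler Q) (hQ1 : Q *ᵥ 1 = 0) {v κ : S → ℝ} {R D : ℝ}
    (hv0 : ∀ j, 0 ≤ v j) (hv : ∀ j k, v j ≤ R * v k) (hQv : ∀ j, (Q *ᵥ v) j = -(κ j * v j))
    {i : S} (hκ : ∀ j, κ i - κ j ≤ D) {t : ℝ} (ht : 0 ≤ t) :
    (exp (t • Q) *ᵥ v) i ≤ v i * Real.exp (-(κ i * t) + D * R * -Q i i * t ^ 2 / 2) := by
  have hg : ∀ t, HasDerivAt (fun t : ℝ => -(κ i * t) + D * R * -Q i i * t ^ 2 / 2)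
      (-κ i + D * R * -Q i i * t) t := fun t => by
    refine (((hasDerivAt_id t).const_mul (κ i)).neg.add
      (((hasDerivAt_pow 2 t).const_mul (D * R * -Q i i)).div_const 2)).congr_deriv ?_
    push_cast
    ring
  simpa using le_mul_exp_of_hasDerivAt_le (hasDerivAt_exp_smul_mulVec Q v i) hg
    (fun t ht => hQ.exp_smul_mulVec_mulVec_le hQ1 hv0 hv hQv hκ ht) ht

end IsMetzler

end MatrixExponential

section QMatrix

variable {N : ℕ} {Q : Matrix (Fin N) (Fin N) ℝ}

theorem matExp_eq_exp (M : Matrix (Fin N) (Fin N) ℝ) : matExp M = NormedSpace.exp M := by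
  rw [NormedSpace.exp_eq_tsum ℝ]
  rfl

theorem IsConservativeQMatrix.isMetzler (hQ : IsConservativeQMatrix Q) : IsMetzler Q :=
  hQ.1

theorem IsConservativeQMatrix.matExp_smul_apply_nonneg (hQ : IsConservativeQMatrix Q) {δ : ℝ}
    (hδ : 0 ≤ δ) (i j : Fin N) : 0 ≤ matExp (δ • Q) i j := by
  rw [matExp_eq_exp]
  exact (hQ.isMetzler.smul hδ).exp_apply_nonneg i j

theorem IsConservativeQMatrix.mulVec_one (hQ : IsConservativeQMatrix Q) : Q.mulVec 1 = 0 := by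
  funext i
  simpa [Matrix.mulVec, dotProduct] using hQ.2 i

theorem IsConservativeQMatrix.apply_self_nonpos (hQ : IsConservativeQMatrix Q) (i : Fin N) :
    Q i i ≤ 0 := by
  have hoff : 0 ≤ ∑ j ∈ Finset.univ.erase i, Q i j :=
    Finset.sum_nonneg fun j hj => hQ.1 i j (Finset.ne_of_mem_erase hj).symm
  rw [Finset.sum_erase_eq_sub (Finset.mem_univ i), hQ.2 i] at hoff
  linarith

theorem mulVec_eq_neg_mul_of_add_diagonal_mulVec {S : Type*} [Fintype S] [DecidableEq S]
    {Q : Matrix S S ℝ} {β ξ : S → ℝ} {η : ℝ}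
    (hξ : (Q + Matrix.diagonal β).mulVec ξ = -η • ξ) (i : S) :
    Q.mulVec ξ i = -((η + β i) * ξ i) := by
  have h := congrFun hξ i
  rw [Matrix.add_mulVec, Pi.add_apply, Matrix.mulVec_diagonal, Pi.smul_apply, smul_eq_mul] at h
  linarith

theorem IsConservativeQMatrix.exp_mul_sum_matExp_mul_le (hQ : IsConservativeQMatrix Q)
    {β ξ : Fin N → ℝ} {η β₀ q₀ L R A δ : ℝ} (hξ0 : ∀ i, 0 < ξ i)
    (hξ : (Q + Matrix.diagonal β).mulVec ξ = -η • ξ) (hR : ∀ i j, ξ i ≤ R * ξ j)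
    (hβ₀ : ∀ i, |β i| ≤ β₀) (hq₀ : ∀ i, -Q i i ≤ q₀) (hA : L ^ 2 + β₀ * q₀ * R ≤ A) (hδ : 0 ≤ δ)
    (hδ1 : δ ≤ 1) (i : Fin N) :
    Real.exp (δ * β i + δ ^ 2 * L ^ 2) * ∑ j, matExp (δ • Q) i j * ξ j ≤
      Real.exp (-((η - A * √δ) * δ)) * ξ i := by
  have hβ₀0 : 0 ≤ β₀ := (abs_nonneg _).trans (hβ₀ i)
  have hR0 : 0 ≤ R := nonneg_of_mul_nonneg_left ((hξ0 i).le.trans (hR i i)) (hξ0 i)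
  have hδsqrt : δ ≤ √δ := Real.le_sqrt_of_sq_le (by nlinarith)
  have hosc : ∀ j, η + β i - (η + β j) ≤ 2 * β₀ := fun j => by
    linarith [le_of_abs_le (hβ₀ i), neg_le_of_abs_le (hβ₀ j)]
  have hexp := hQ.isMetzler.exp_smul_mulVec_le hQ.mulVec_one (fun j => (hξ0 j).le) hR
    (mulVec_eq_neg_mul_of_add_diagonal_mulVec hξ) hosc hδ
  have hQii : 0 ≤ -Q i i := neg_nonneg.2 (hQ.apply_self_nonpos i)
  have hrate : L ^ 2 + β₀ * -Q i i * R ≤ A := hA.trans' (by gcongr; exact hq₀ i)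
  have hA0 : 0 ≤ A := hrate.trans' (by positivity)
  have hquad : (L ^ 2 + β₀ * -Q i i * R) * δ ≤ A * √δ :=
    mul_le_mul hrate hδsqrt hδ hA0
  rw [matExp_eq_exp]
  calc Real.exp (δ * β i + δ ^ 2 * L ^ 2) * ∑ j, NormedSpace.exp (δ • Q) i j * ξ j
      ≤ Real.exp (δ * β i + δ ^ 2 * L ^ 2) *
          (ξ i * Real.exp (-((η + β i) * δ) + 2 * β₀ * R * -Q i i * δ ^ 2 / 2)) := by
        gcongr
        exact hexp
    _ = Real.exp (-η * δ + (L ^ 2 + β₀ * -Q i i * R) * δ * δ) * ξ i := by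
        rw [mul_left_comm, ← Real.exp_add, mul_comm]
        ring_nf
    _ ≤ Real.exp (-η * δ + A * √δ * δ) * ξ i := by
        gcongr
        exact (hξ0 i).le
    _ = Real.exp (-((η - A * √δ) * δ)) * ξ i := by ring_nf

end QMatrix

section WhiteNoise

/-- The law `ν` of a random vector with square-integrable, centred, uncorrelated coordinates of unit
variance. This is all that mean-square estimates use about the driving noise; the standard Gaussian
law is the main example. -/
structure IsWhiteNoise {ι : Type*} (ν : Measure (ι → ℝ)) : Prop where
  memLp (j : ι) : MemLp (fun z => z j) 2 ν
  integral_eq_zero (j : ι) : ∫ z, z j ∂ν = 0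
  variance_eq_one (j : ι) : Var[fun z => z j; ν] = 1
  covariance_eq_zero {j k : ι} (hjk : j ≠ k) : cov[fun z => z j, fun z => z k; ν] = 0

theorem isWhiteNoise_stdGaussianPi (m : ℕ) : IsWhiteNoise (stdGaussianPi m) := by
  have heval : ∀ j : Fin m, MeasurePreserving (Function.eval j) (stdGaussianPi m)
      (gaussianReal 0 1) := measurePreserving_eval _
  have hmemLp : ∀ j : Fin m, MemLp (fun z : Fin m → ℝ => z j) 2 (stdGaussianPi m) := fun j =>
    (memLp_id_gaussianReal 2).comp_measurePreserving (heval j)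
  refine ⟨hmemLp, fun j => ?_, fun j => ?_, fun {j k} hjk => ?_⟩
  · have h : ∫ t, t ∂gaussianReal 0 1 = 0 := integral_id_gaussianReal
    rwa [← (heval j).map_eq, integral_map (heval j).aemeasurable (by fun_prop)] at h
  · rw [(heval j).variance_fun_comp (f := fun t => t) aemeasurable_id,
      variance_fun_id_gaussianReal, NNReal.coe_one]
  · exact ((iIndepFun_pi (X := fun _ t => t) fun _ => aemeasurable_id).indepFun hjk
      ).covariance_eq_zero (hmemLp j) (hmemLp k)

namespace IsWhiteNoise

variable {ι : Type*} [Fintype ι] {ν : Measure (ι → ℝ)}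

theorem memLp_sum_mul (hν : IsWhiteNoise ν) (v : ι → ℝ) :
    MemLp (fun z => ∑ j, v j * z j) 2 ν :=
  memLp_finsetSum _ fun j _ => (hν.memLp j).const_mul (v j)

theorem integral_sum_mul [IsFiniteMeasure ν] (hν : IsWhiteNoise ν) (v : ι → ℝ) :
    ∫ z, ∑ j, v j * z j ∂ν = 0 := by
  rw [integral_finsetSum _ fun j _ => ((hν.memLp j).integrable one_le_two).const_mul (v j)]
  simp only [integral_const_mul, hν.integral_eq_zero, mul_zero, Finset.sum_const_zero]

theorem variance_sum_mul [IsFiniteMeasure ν] (hν : IsWhiteNoise ν) (v : ι → ℝ) :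
    Var[fun z => ∑ j, v j * z j; ν] = ∑ j, v j ^ 2 := by
  rw [variance_fun_sum fun j => (hν.memLp j).const_mul (v j)]
  refine Finset.sum_congr rfl fun j _ => ?_
  simp only [covariance_const_mul_left, covariance_const_mul_right]
  rw [Finset.sum_eq_single_of_mem j (Finset.mem_univ j) fun k _ hkj => by
      rw [hν.covariance_eq_zero hkj.symm, mul_zero, mul_zero],
    covariance_self (hν.memLp j).aemeasurable, hν.variance_eq_one, mul_one, sq]

theorem integrable_add_sum_mul_sq [IsFiniteMeasure ν] (hν : IsWhiteNoise ν) (a : ℝ) (v : ι → ℝ) :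
    Integrable (fun z => (a + ∑ j, v j * z j) ^ 2) ν :=
  ((memLp_const a).add (hν.memLp_sum_mul v)).integrable_sq

theorem integral_add_sum_mul_sq [IsProbabilityMeasure ν] (hν : IsWhiteNoise ν) (a : ℝ) (v : ι → ℝ) :
    ∫ z, (a + ∑ j, v j * z j) ^ 2 ∂ν = a ^ 2 + ∑ j, v j ^ 2 := by
  have hX := hν.memLp_sum_mul v
  have hmean : ∫ z, a + ∑ j, v j * z j ∂ν = a := by
    rw [integral_add (integrable_const a) (hX.integrable one_le_two), hν.integral_sum_mul]
    simp
  have hvar : Var[fun z => a + ∑ j, v j * z j; ν] = ∑ j, v j ^ 2 := by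
    rw [variance_const_add hX.aestronglyMeasurable, hν.variance_sum_mul]
  have hsub := variance_eq_sub ((memLp_const a).add hX)
  simp only [Pi.add_def, Pi.pow_apply] at hsub
  rw [hvar, hmean] at hsub
  linarith

end IsWhiteNoise

end WhiteNoise

section HilbertSchmidt

variable {n m : ℕ}

theorem hsNorm_nonneg (M : Matrix (Fin n) (Fin m) ℝ) : 0 ≤ hsNorm M :=
  Real.sqrt_nonneg _

theorem hsNorm_sq (M : Matrix (Fin n) (Fin m) ℝ) : hsNorm M ^ 2 = ∑ i, ∑ j, M i j ^ 2 :=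
  Real.sq_sqrt (Finset.sum_nonneg fun _ _ => Finset.sum_nonneg fun _ _ => sq_nonneg _)

theorem abs_apply_le_hsNorm (M : Matrix (Fin n) (Fin m) ℝ) (i : Fin n) (j : Fin m) :
    |M i j| ≤ hsNorm M := by
  refine Real.abs_le_sqrt ?_
  calc M i j ^ 2 ≤ ∑ j, M i j ^ 2 :=
        Finset.single_le_sum (f := fun j => M i j ^ 2) (fun _ _ => sq_nonneg _) (Finset.mem_univ j)
    _ ≤ ∑ i, ∑ j, M i j ^ 2 :=
        Finset.single_le_sum (f := fun i => ∑ j, M i j ^ 2)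
          (fun _ _ => Finset.sum_nonneg fun _ _ => sq_nonneg _) (Finset.mem_univ i)

theorem IsWhiteNoise.lintegral_norm_add_smul_mulVec_sq {ν : Measure (Fin m → ℝ)}
    [IsProbabilityMeasure ν] (hν : IsWhiteNoise ν) (a : EuclideanSpace ℝ (Fin n))
    (B : Matrix (Fin n) (Fin m) ℝ) (c : ℝ) :
    ∫⁻ z, ENNReal.ofReal (‖a + c • WithLp.toLp 2 (B.mulVec z)‖ ^ 2) ∂ν =
      ENNReal.ofReal (‖a‖ ^ 2 + c ^ 2 * hsNorm B ^ 2) := by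
  have hcoord : ∀ z : Fin m → ℝ, ‖a + c • WithLp.toLp 2 (B.mulVec z)‖ ^ 2 =
      ∑ i, (a i + ∑ j, c * B i j * z j) ^ 2 := fun z => by
    rw [EuclideanSpace.real_norm_sq_eq]
    simp [Matrix.mulVec, dotProduct, Finset.mul_sum, mul_assoc]
  have hint := fun i (_ : i ∈ Finset.univ) =>
    hν.integrable_add_sum_mul_sq (a i) fun j => c * B i j
  simp only [hcoord]
  rw [← ofReal_integral_eq_lintegral_ofReal (integrable_finsetSum _ hint)
    (.of_forall fun z => Finset.sum_nonneg fun i _ => sq_nonneg _), integral_finsetSum _ hint]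
  simp only [hν.integral_add_sum_mul_sq, hsNorm_sq, EuclideanSpace.real_norm_sq_eq, mul_pow,
    Finset.sum_add_distrib, Finset.mul_sum]

end HilbertSchmidt

section EulerMaruyama

variable {n m : ℕ} {b : EuclideanSpace ℝ (Fin n) → EuclideanSpace ℝ (Fin n)}
  {σ : EuclideanSpace ℝ (Fin n) → Matrix (Fin n) (Fin m) ℝ}

/-- One Euler–Maruyama step of size `δ` from `x` with noise `z`, for drift `b` and diffusion
coefficient `σ` in a fixed environment state. -/
noncomputable def emStep (b : EuclideanSpace ℝ (Fin n) → EuclideanSpace ℝ (Fin n))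
    (σ : EuclideanSpace ℝ (Fin n) → Matrix (Fin n) (Fin m) ℝ) (δ : ℝ)
    (x : EuclideanSpace ℝ (Fin n)) (z : Fin m → ℝ) : EuclideanSpace ℝ (Fin n) :=
  x + δ • b x + √δ • WithLp.toLp 2 ((σ x).mulVec z)

theorem emStep_sub_emStep (b : EuclideanSpace ℝ (Fin n) → EuclideanSpace ℝ (Fin n))
    (σ : EuclideanSpace ℝ (Fin n) → Matrix (Fin n) (Fin m) ℝ) (δ : ℝ)
    (x y : EuclideanSpace ℝ (Fin n)) (z : Fin m → ℝ) :
    emStep b σ δ x z - emStep b σ δ y z =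
      (x - y + δ • (b x - b y)) + √δ • WithLp.toLp 2 ((σ x - σ y).mulVec z) := by
  rw [emStep, emStep, Matrix.sub_mulVec, WithLp.toLp_sub]
  module

theorem lintegral_norm_emStep_sub_sq_le {ν : Measure (Fin m → ℝ)} [IsProbabilityMeasure ν]
    (hν : IsWhiteNoise ν) {δ L β : ℝ} (hδ : 0 ≤ δ) {x y : EuclideanSpace ℝ (Fin n)}
    (hb : ‖b x - b y‖ ≤ L * ‖x - y‖)
    (hdiss : 2 * inner ℝ (x - y) (b x - b y) + hsNorm (σ x - σ y) ^ 2 ≤ β * ‖x - y‖ ^ 2) :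
    ∫⁻ z, ENNReal.ofReal (‖emStep b σ δ x z - emStep b σ δ y z‖ ^ 2) ∂ν ≤
      ENNReal.ofReal (Real.exp (δ * β + δ ^ 2 * L ^ 2)) * ENNReal.ofReal (‖x - y‖ ^ 2) := by
  simp only [emStep_sub_emStep]
  rw [hν.lintegral_norm_add_smul_mulVec_sq, ← ENNReal.ofReal_mul (Real.exp_pos _).le]
  refine ENNReal.ofReal_le_ofReal ?_
  have hb2 : ‖b x - b y‖ ^ 2 ≤ L ^ 2 * ‖x - y‖ ^ 2 := by
    rw [← mul_pow]
    gcongr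
  calc ‖x - y + δ • (b x - b y)‖ ^ 2 + √δ ^ 2 * hsNorm (σ x - σ y) ^ 2
      = ‖x - y‖ ^ 2 + δ * (2 * inner ℝ (x - y) (b x - b y) + hsNorm (σ x - σ y) ^ 2)
          + δ ^ 2 * ‖b x - b y‖ ^ 2 := by
        rw [norm_add_sq_real, norm_smul, inner_smul_right, mul_pow, Real.norm_eq_abs, sq_abs,
          Real.sq_sqrt hδ]
        ring
    _ ≤ ‖x - y‖ ^ 2 + δ * (β * ‖x - y‖ ^ 2) + δ ^ 2 * (L ^ 2 * ‖x - y‖ ^ 2) := by gcongr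
    _ = (δ * β + δ ^ 2 * L ^ 2 + 1) * ‖x - y‖ ^ 2 := by ring
    _ ≤ Real.exp (δ * β + δ ^ 2 * L ^ 2) * ‖x - y‖ ^ 2 := by
        gcongr
        exact Real.add_one_le_exp _

theorem continuous_of_norm_sub_le {E F : Type*} [SeminormedAddCommGroup E]
    [SeminormedAddCommGroup F] {f : E → F} {L : ℝ}
    (hf : ∀ x y, ‖f x - f y‖ ≤ L * ‖x - y‖) : Continuous f :=
  (LipschitzWith.of_dist_le' fun x y => by simpa only [dist_eq_norm] using hf x y).continuous

theorem continuous_of_hsNorm_sub_le {L : ℝ} (hσ : ∀ x y, hsNorm (σ x - σ y) ≤ L * ‖x - y‖) :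
    Continuous σ :=
  continuous_matrix fun i j => continuous_of_norm_sub_le fun x y =>
    (abs_apply_le_hsNorm (σ x - σ y) i j).trans (hσ x y)

theorem continuous_emStep (hb : Continuous b) (hσ : Continuous σ) (δ : ℝ) :
    Continuous fun p : EuclideanSpace ℝ (Fin n) × (Fin m → ℝ) => emStep b σ δ p.1 p.2 := by
  have hnoise : Continuous fun p : EuclideanSpace ℝ (Fin n) × (Fin m → ℝ) =>
      WithLp.toLp 2 ((σ p.1).mulVec p.2) :=
    (PiLp.continuous_toLp 2 _).comp ((hσ.comp continuous_fst).matrix_mulVec continuous_snd)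
  exact (continuous_fst.add ((hb.comp continuous_fst).const_smul δ)).add (hnoise.const_smul √δ)

end EulerMaruyama

section MarkovChain

open scoped ENNReal

variable {Ω S : Type*} [MeasurableSpace Ω] {P : Measure Ω}

/-- `J` is a Markov chain under `P` with (time-homogeneous) transition probabilities `T`. On a
countable state space this is the elementary definition through finite paths; conditional
probabilities are cleared of denominators, so paths of probability zero need no special care. -/
def IsMarkovChain (T : S → S → ℝ≥0∞) (J : ℕ → Ω → S) (P : Measure Ω) : Prop :=
  ∀ (k : ℕ) (p : Fin (k + 1) → S) (c : S),
    P {ω | (∀ l : Fin (k + 1), J l ω = p l) ∧ J (k + 1) ω = c} =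
      P {ω | ∀ l : Fin (k + 1), J l ω = p l} * T (p (Fin.last k)) c

theorem lintegral_comp_eq_tsum {α : Type*} [Countable α] [MeasurableSpace α]
    [MeasurableSingletonClass α] {X : Ω → α} (hX : Measurable X) (f : α → ℝ≥0∞) :
    ∫⁻ ω, f (X ω) ∂P = ∑' a, f a * P {ω | X ω = a} := by
  rw [← lintegral_map .of_discrete hX, lintegral_countable']
  exact tsum_congr fun a => by rw [Measure.map_apply hX (measurableSet_singleton a)]; rfl

variable [Countable S] [MeasurableSpace S] [MeasurableSingletonClass S]
  {T : S → S → ℝ≥0∞} {J : ℕ → Ω → S}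

namespace IsMarkovChain

theorem lintegral_mul_eq (hJ : IsMarkovChain T J P) (hJm : ∀ k, Measurable (J k)) (k : ℕ)
    (f : (Fin (k + 1) → S) → ℝ≥0∞) (g : S → ℝ≥0∞) :
    ∫⁻ ω, f (fun l => J l ω) * g (J (k + 1) ω) ∂P =
      ∫⁻ ω, f (fun l => J l ω) * ∑' c, T (J k ω) c * g c ∂P := by
  have hpath : Measurable fun ω (l : Fin (k + 1)) => J l ω := measurable_pi_lambda _ fun l => hJm l
  calc ∫⁻ ω, f (fun l => J l ω) * g (J (k + 1) ω) ∂P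
      = ∑' (p : Fin (k + 1) → S) (c : S), f p * g c *
          P {ω | (fun (l : Fin (k + 1)) => J l ω, J (k + 1) ω) = (p, c)} := by
        rw [← ENNReal.tsum_prod]
        exact lintegral_comp_eq_tsum (hpath.prodMk (hJm (k + 1))) fun q => f q.1 * g q.2
    _ = ∑' p : Fin (k + 1) → S, (f p * ∑' c, T (p (Fin.last k)) c * g c) *
          P {ω | (fun l : Fin (k + 1) => J l ω) = p} := by
        refine tsum_congr fun p => ?_
        rw [← ENNReal.tsum_mul_left, ← ENNReal.tsum_mul_right]
        refine tsum_congr fun c => ?_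
        simp only [Prod.mk.injEq, funext_iff, hJ k p c]
        ring
    _ = ∫⁻ ω, f (fun l => J l ω) * ∑' c, T (J k ω) c * g c ∂P :=
        (lintegral_comp_eq_tsum hpath fun p => f p * ∑' c, T (p (Fin.last k)) c * g c).symm

theorem lintegral_prod_mul_le (hJ : IsMarkovChain T J P) (hJm : ∀ k, Measurable (J k))
    {w ξ : S → ℝ≥0∞} {ρ : ℝ≥0∞} (hρ : ∀ s, w s * ∑' c, T s c * ξ c ≤ ρ * ξ s) (k : ℕ) :
    ∫⁻ ω, (∏ l ∈ Finset.range k, w (J l ω)) * ξ (J k ω) ∂P ≤ ρ ^ k * ∫⁻ ω, ξ (J 0 ω) ∂P := by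
  induction k with
  | zero => simp
  | succ k ih =>
    calc ∫⁻ ω, (∏ l ∈ Finset.range (k + 1), w (J l ω)) * ξ (J (k + 1) ω) ∂P
        = ∫⁻ ω, (∏ l ∈ Finset.range (k + 1), w (J l ω)) * ∑' c, T (J k ω) c * ξ c ∂P := by
          simp only [Finset.prod_range fun l => w (J l _)]
          exact hJ.lintegral_mul_eq hJm k (fun p => ∏ l, w (p l)) ξ
      _ ≤ ∫⁻ ω, ρ * ((∏ l ∈ Finset.range k, w (J l ω)) * ξ (J k ω)) ∂P := by
          refine lintegral_mono fun ω => ?_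
          rw [Finset.prod_range_succ, mul_assoc, mul_left_comm ρ]
          exact mul_le_mul_right (hρ (J k ω)) _
      _ = ρ * ∫⁻ ω, (∏ l ∈ Finset.range k, w (J l ω)) * ξ (J k ω) ∂P :=
          lintegral_const_mul _ (by fun_prop (disch := exact .of_discrete))
      _ ≤ ρ ^ (k + 1) * ∫⁻ ω, ξ (J 0 ω) ∂P := by
          rw [pow_succ', mul_assoc]
          gcongr

end IsMarkovChain

end MarkovChain

section MarkovPathLaw

variable {Ω S : Type*} [MeasurableSpace Ω] {P : Measure Ω} {J : ℕ → Ω → S}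

theorem isMarkovChain_of_path_probability {a : S → ℝ} {T : S → S → ℝ} (hT : ∀ s c, 0 ≤ T s c)
    (hJ : ∀ (k : ℕ) (j : ℕ → S), P {ω | ∀ l ≤ k, J l ω = j l} =
      ENNReal.ofReal (a (j 0) * ∏ l ∈ Finset.range k, T (j l) (j (l + 1)))) :
    IsMarkovChain (fun s c => ENNReal.ofReal (T s c)) J P := by
  intro k p c
  set j : ℕ → S := Function.extend Fin.val p fun _ => c
  have hj : ∀ l : Fin (k + 1), j l = p l := Fin.val_injective.extend_apply p _
  have hjc : j (k + 1) = c :=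
    Function.extend_apply' p _ (k + 1) fun ⟨l, hl⟩ => absurd hl l.isLt.ne
  have hjk : j k = p (Fin.last k) := hj (Fin.last k)
  have hpast : {ω | ∀ l : Fin (k + 1), J l ω = p l} = {ω | ∀ l ≤ k, J l ω = j l} := by
    simp only [← hj, Fin.forall_iff, Nat.lt_succ_iff]
  have hnext : {ω | (∀ l : Fin (k + 1), J l ω = p l) ∧ J (k + 1) ω = c} =
      {ω | ∀ l ≤ k + 1, J l ω = j l} := by
    simp only [← hj, ← hjc, Fin.forall_iff, ← Nat.lt_succ_iff, Nat.forall_lt_succ_right]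
  rw [hnext, hpast, hJ, hJ, Finset.prod_range_succ, ← mul_assoc, ENNReal.ofReal_mul' (hT _ _), hjk,
    hjc]

theorem ae_eq_of_path_probability [DecidableEq S] [MeasurableSpace S] [MeasurableSingletonClass S]
    [IsProbabilityMeasure P] (hJm : Measurable (J 0)) {i : S} {T : S → S → ℝ}
    (hJ : ∀ (k : ℕ) (j : ℕ → S), P {ω | ∀ l ≤ k, J l ω = j l} =
      ENNReal.ofReal ((if j 0 = i then (1 : ℝ) else 0) *
        ∏ l ∈ Finset.range k, T (j l) (j (l + 1)))) :
    ∀ᵐ ω ∂P, J 0 ω = i := by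
  have h : P {ω | J 0 ω = i} = 1 := by simpa using hJ 0 fun _ => i
  exact (prob_compl_eq_zero_iff (hJm (measurableSet_singleton i))).2 h

end MarkovPathLaw

section DrivenOrbit

open scoped ENNReal

/-- The orbit from `x` of the recursion `x (k + 1) = φ (s k) (x k) (z k)`, driven by the environment
path `s` and the noise path `z`. -/
def drivenOrbit {S E G : Type*} (φ : S → E → G → E) (x : E) (s : ℕ → S) (z : ℕ → G) : ℕ → E
  | 0 => x
  | k + 1 => φ (s k) (drivenOrbit φ x s z k) (z k)

theorem eq_drivenOrbit {S E G : Type*} {φ : S → E → G → E} {x : E} {s : ℕ → S} {z : ℕ → G}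
    {X : ℕ → E} (h0 : X 0 = x) (hsucc : ∀ k, X (k + 1) = φ (s k) (X k) (z k)) (k : ℕ) :
    X k = drivenOrbit φ x s z k := by
  induction k with
  | zero => exact h0
  | succ k ih => rw [hsucc, ih, drivenOrbit]

theorem drivenOrbit_prodMk {S E G : Type*} (φ : S → E → G → E) (x y : E) (s : ℕ → S) (z : ℕ → G)
    (k : ℕ) :
    drivenOrbit (fun s (p : E × E) z => (φ s p.1 z, φ s p.2 z)) (x, y) s z k =
      (drivenOrbit φ x s z k, drivenOrbit φ y s z k) := by
  induction k with
  | zero => rfl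
  | succ k ih => simp only [drivenOrbit, ih]

theorem lintegral_comp_prodMk_of_indepFun {Ω α β : Type*} [MeasurableSpace Ω] [MeasurableSpace α]
    [MeasurableSpace β] {P : Measure Ω} [IsFiniteMeasure P] {X : Ω → α} {Y : Ω → β}
    (hX : Measurable X) (hY : Measurable Y) (hXY : IndepFun X Y P) {F : α × β → ℝ≥0∞}
    (hF : Measurable F) :
    ∫⁻ ω, F (X ω, Y ω) ∂P = ∫⁻ ω, ∫⁻ y, F (X ω, y) ∂P.map Y ∂P := by
  rw [← lintegral_map hF (hX.prodMk hY),
    (indepFun_iff_map_prod_eq_prod_map_map hX.aemeasurable hY.aemeasurable).1 hXY,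
    lintegral_prod _ hF.aemeasurable, lintegral_map hF.lintegral_prod_right' hX]

variable {Ω S E G : Type*} [MeasurableSpace S] [MeasurableSpace E] [mG : MeasurableSpace G]
  {φ : S → E → G → E}

theorem measurable_drivenOrbit (hφ : Measurable fun q : S × E × G => φ q.1 q.2.1 q.2.2) (x : E)
    (k : ℕ) : Measurable fun p : (ℕ → S) × (ℕ → G) => drivenOrbit φ x p.1 p.2 k := by
  induction k with
  | zero => exact measurable_const
  | succ k ih =>
    exact hφ.comp (((measurable_pi_apply k).comp measurable_fst).prodMk
      (ih.prodMk ((measurable_pi_apply k).comp measurable_snd)))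

theorem measurable_drivenOrbit_iSup_comap
    (hφ : Measurable fun q : S × E × G => φ q.1 q.2.1 q.2.2) (x : E) (s : ℕ → S)
    (Z : ℕ → Ω → G) (k : ℕ) :
    Measurable[⨆ l ∈ Set.Iio k, mG.comap (Z l)] fun ω => drivenOrbit φ x s (fun l => Z l ω) k := by
  induction k with
  | zero => exact measurable_const
  | succ k ih =>
    have hpast : Measurable[⨆ l ∈ Set.Iio (k + 1), mG.comap (Z l)]
        fun ω => drivenOrbit φ x s (fun l => Z l ω) k :=
      ih.mono (biSup_mono fun l hl => Nat.lt_succ_of_lt hl) le_rfl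
    have hnoise : Measurable[⨆ l ∈ Set.Iio (k + 1), mG.comap (Z l)] (Z k) :=
      (comap_measurable (Z k)).mono (le_biSup (fun l => mG.comap (Z l)) (Nat.lt_succ_self k)) le_rfl
    exact hφ.comp (measurable_const.prodMk (hpast.prodMk hnoise))

variable [MeasurableSpace Ω] {P : Measure Ω}

theorem indepFun_drivenOrbit (hφ : Measurable fun q : S × E × G => φ q.1 q.2.1 q.2.2) (x : E)
    (s : ℕ → S) {Z : ℕ → Ω → G} (hZm : ∀ k, Measurable (Z k)) (hZ : iIndepFun Z P) (k : ℕ) :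
    IndepFun (fun ω => drivenOrbit φ x s (fun l => Z l ω) k) (Z k) P := by
  have h := indep_iSup_of_disjoint (fun l => (hZm l).comap_le) hZ
    (Set.disjoint_singleton_right.2 (Set.self_notMem_Iio (a := k)))
  rw [iSup_singleton] at h
  exact indep_of_indep_of_le_left h (measurable_drivenOrbit_iSup_comap hφ x s Z k).comap_le

variable [IsProbabilityMeasure P] {Z : ℕ → Ω → G} {V : E → ℝ≥0∞} {w : S → ℝ≥0∞}

theorem lintegral_drivenOrbit_le (hφ : Measurable fun q : S × E × G => φ q.1 q.2.1 q.2.2)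
    (hZm : ∀ k, Measurable (Z k)) (hZ : iIndepFun Z P) (hV : Measurable V)
    (hVφ : ∀ k s x, ∫⁻ z, V (φ s x z) ∂P.map (Z k) ≤ w s * V x) (x : E) (s : ℕ → S) (k : ℕ) :
    ∫⁻ ω, V (drivenOrbit φ x s (fun l => Z l ω) k) ∂P ≤
      (∏ l ∈ Finset.range k, w (s l)) * V x := by
  induction k with
  | zero => simp [drivenOrbit]
  | succ k ih =>
    have horbit : Measurable fun ω => drivenOrbit φ x s (fun l => Z l ω) k :=
      (measurable_drivenOrbit hφ x k).comp
        (measurable_const.prodMk (measurable_pi_lambda _ fun l => hZm l))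
    have hstep : Measurable fun q : E × G => V (φ (s k) q.1 q.2) :=
      hV.comp (hφ.comp (measurable_const.prodMk measurable_id))
    calc ∫⁻ ω, V (drivenOrbit φ x s (fun l => Z l ω) (k + 1)) ∂P
        = ∫⁻ ω, ∫⁻ z, V (φ (s k) (drivenOrbit φ x s (fun l => Z l ω) k) z) ∂P.map (Z k) ∂P :=
          lintegral_comp_prodMk_of_indepFun horbit (hZm k)
            (indepFun_drivenOrbit hφ x s hZm hZ k) hstep
      _ ≤ ∫⁻ ω, w (s k) * V (drivenOrbit φ x s (fun l => Z l ω) k) ∂P :=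
          lintegral_mono fun ω => hVφ k (s k) _
      _ = w (s k) * ∫⁻ ω, V (drivenOrbit φ x s (fun l => Z l ω) k) ∂P :=
          lintegral_const_mul _ (hV.comp horbit)
      _ ≤ (∏ l ∈ Finset.range (k + 1), w (s l)) * V x := by
          rw [Finset.prod_range_succ, mul_right_comm, mul_comm _ (w (s k))]
          gcongr

theorem lintegral_drivenOrbit_mul_le [Countable S] [MeasurableSingletonClass S]
    (hφ : Measurable fun q : S × E × G => φ q.1 q.2.1 q.2.2) {T : S → S → ℝ≥0∞} {J : ℕ → Ω → S}
    (hZm : ∀ k, Measurable (Z k)) (hZ : iIndepFun Z P) (hJm : ∀ k, Measurable (J k))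
    (hJ : IsMarkovChain T J P) (hZJ : IndepFun (fun ω l => Z l ω) (fun ω l => J l ω) P)
    (hV : Measurable V) (hVφ : ∀ k s x, ∫⁻ z, V (φ s x z) ∂P.map (Z k) ≤ w s * V x)
    {ξ : S → ℝ≥0∞} {ρ : ℝ≥0∞} (hρ : ∀ s, w s * ∑' c, T s c * ξ c ≤ ρ * ξ s) (x : E) (k : ℕ) :
    ∫⁻ ω, V (drivenOrbit φ x (fun l => J l ω) (fun l => Z l ω) k) * ξ (J k ω) ∂P ≤
      ρ ^ k * (∫⁻ ω, ξ (J 0 ω) ∂P) * V x := by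
  have hnoise : Measurable fun ω l => Z l ω := measurable_pi_lambda _ hZm
  have henv : Measurable fun ω l => J l ω := measurable_pi_lambda _ hJm
  have horbit := hV.comp (measurable_drivenOrbit hφ x k)
  have hF : Measurable fun q : (ℕ → S) × (ℕ → G) => V (drivenOrbit φ x q.1 q.2 k) * ξ (q.1 k) :=
    horbit.mul ((Measurable.of_discrete (f := ξ)).comp
      ((measurable_pi_apply k).comp measurable_fst))
  have hquenched : ∀ s : ℕ → S,
      ∫⁻ z, V (drivenOrbit φ x s z k) * ξ (s k) ∂P.map (fun ω l => Z l ω) ≤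
        (∏ l ∈ Finset.range k, w (s l)) * ξ (s k) * V x := fun s => by
    have hs : Measurable fun z => V (drivenOrbit φ x s z k) :=
      horbit.comp (measurable_const.prodMk measurable_id)
    rw [lintegral_mul_const _ hs, lintegral_map hs hnoise, mul_right_comm]
    gcongr
    exact lintegral_drivenOrbit_le hφ hZm hZ hV hVφ x s k
  calc ∫⁻ ω, V (drivenOrbit φ x (fun l => J l ω) (fun l => Z l ω) k) * ξ (J k ω) ∂P
      = ∫⁻ ω, ∫⁻ z, V (drivenOrbit φ x (fun l => J l ω) z k) * ξ (J k ω)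
          ∂P.map (fun ω l => Z l ω) ∂P :=
        lintegral_comp_prodMk_of_indepFun henv hnoise hZJ.symm hF
    _ ≤ ∫⁻ ω, (∏ l ∈ Finset.range k, w (J l ω)) * ξ (J k ω) * V x ∂P :=
        lintegral_mono fun ω => hquenched fun l => J l ω
    _ = (∫⁻ ω, (∏ l ∈ Finset.range k, w (J l ω)) * ξ (J k ω) ∂P) * V x :=
        lintegral_mul_const _ (by fun_prop (disch := exact .of_discrete))
    _ ≤ ρ ^ k * (∫⁻ ω, ξ (J 0 ω) ∂P) * V x := by
        gcongr
        exact hJ.lintegral_prod_mul_le hJm hρ k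

theorem lintegral_drivenOrbit_pair_mul_le [Countable S] [MeasurableSingletonClass S]
    (hφ : Measurable fun q : S × E × G => φ q.1 q.2.1 q.2.2) {T : S → S → ℝ≥0∞} {J : ℕ → Ω → S}
    (hZm : ∀ k, Measurable (Z k)) (hZ : iIndepFun Z P) (hJm : ∀ k, Measurable (J k))
    (hJ : IsMarkovChain T J P) (hZJ : IndepFun (fun ω l => Z l ω) (fun ω l => J l ω) P)
    {V : E × E → ℝ≥0∞} (hV : Measurable V)
    (hVφ : ∀ k s x y, ∫⁻ z, V (φ s x z, φ s y z) ∂P.map (Z k) ≤ w s * V (x, y))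
    {ξ : S → ℝ≥0∞} {ρ : ℝ≥0∞} (hρ : ∀ s, w s * ∑' c, T s c * ξ c ≤ ρ * ξ s) (x y : E) (k : ℕ) :
    ∫⁻ ω, V (drivenOrbit φ x (fun l => J l ω) (fun l => Z l ω) k,
        drivenOrbit φ y (fun l => J l ω) (fun l => Z l ω) k) * ξ (J k ω) ∂P ≤
      ρ ^ k * (∫⁻ ω, ξ (J 0 ω) ∂P) * V (x, y) := by
  have hpair : Measurable fun q : S × (E × E) × G => (φ q.1 q.2.1.1 q.2.2, φ q.1 q.2.1.2 q.2.2) :=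
    (hφ.comp (measurable_fst.prodMk (measurable_snd.fst.fst.prodMk measurable_snd.snd))).prodMk
      (hφ.comp (measurable_fst.prodMk (measurable_snd.fst.snd.prodMk measurable_snd.snd)))
  simpa only [drivenOrbit_prodMk] using
    lintegral_drivenOrbit_mul_le (φ := fun s (p : E × E) z => (φ s p.1 z, φ s p.2 z)) hpair hZm hZ
      hJm hJ hZJ hV (fun k s p => hVφ k s p.1 p.2) hρ (x, y) k

end DrivenOrbit

theorem integrable_and_integral_le_of_lintegral_ofReal_mul_le {Ω : Type*} [MeasurableSpace Ω]
    {P : Measure Ω} {f g : Ω → ℝ} (hf : AEStronglyMeasurable f P) (hf0 : ∀ ω, 0 ≤ f ω) {c C : ℝ}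
    (hc : 0 ≤ c) (hg : ∀ ω, 1 ≤ c * g ω) (hC : 0 ≤ C)
    (h : ∫⁻ ω, ENNReal.ofReal (f ω) * ENNReal.ofReal (g ω) ∂P ≤ ENNReal.ofReal C) :
    Integrable f P ∧ ∫ ω, f ω ∂P ≤ c * C := by
  have hle : ∫⁻ ω, ENNReal.ofReal (f ω) ∂P ≤ ENNReal.ofReal (c * C) :=
    calc ∫⁻ ω, ENNReal.ofReal (f ω) ∂P
        ≤ ∫⁻ ω, ENNReal.ofReal c * (ENNReal.ofReal (f ω) * ENNReal.ofReal (g ω)) ∂P := by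
          refine lintegral_mono fun ω => ?_
          rw [mul_left_comm, ← ENNReal.ofReal_mul hc, ← ENNReal.ofReal_mul (hf0 ω)]
          exact ENNReal.ofReal_le_ofReal (le_mul_of_one_le_right (hf0 ω) (hg ω))
      _ = ENNReal.ofReal c * ∫⁻ ω, ENNReal.ofReal (f ω) * ENNReal.ofReal (g ω) ∂P :=
          lintegral_const_mul' _ _ ENNReal.ofReal_ne_top
      _ ≤ ENNReal.ofReal (c * C) := by
          rw [ENNReal.ofReal_mul hc]
          gcongr
  refine ⟨⟨hf, ?_⟩, ?_⟩
  · rw [hasFiniteIntegral_iff_ofReal (.of_forall hf0)]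
    exact hle.trans_lt ENNReal.ofReal_lt_top
  · rw [integral_eq_lintegral_of_nonneg_ae (.of_forall hf0) hf]
    exact ENNReal.toReal_le_of_le_ofReal (mul_nonneg hc hC) hle

section SwitchingEulerMaruyama

open scoped ENNReal

variable {Ω S : Type*} [MeasurableSpace Ω] [MeasurableSpace S] [Countable S]
  [MeasurableSingletonClass S] {n m : ℕ}
  {b : EuclideanSpace ℝ (Fin n) → S → EuclideanSpace ℝ (Fin n)}
  {σ : EuclideanSpace ℝ (Fin n) → S → Matrix (Fin n) (Fin m) ℝ} {L : ℝ}

/-- The Euler–Maruyama scheme with step size `δ` started at `x`, whose coefficients at time `k` are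
those of the environment state `s k`, driven by the noise path `z`. -/
noncomputable abbrev emOrbit (b : EuclideanSpace ℝ (Fin n) → S → EuclideanSpace ℝ (Fin n))
    (σ : EuclideanSpace ℝ (Fin n) → S → Matrix (Fin n) (Fin m) ℝ) (δ : ℝ)
    (x : EuclideanSpace ℝ (Fin n)) (s : ℕ → S) (z : ℕ → Fin m → ℝ) (k : ℕ) :
    EuclideanSpace ℝ (Fin n) :=
  drivenOrbit (fun s => emStep (b · s) (σ · s) δ) x s z k

theorem measurable_emStep
    (hLip : ∀ s x y, ‖b x s - b y s‖ + hsNorm (σ x s - σ y s) ≤ L * ‖x - y‖) (δ : ℝ) :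
    Measurable fun q : S × EuclideanSpace ℝ (Fin n) × (Fin m → ℝ) =>
      emStep (b · q.1) (σ · q.1) δ q.2.1 q.2.2 :=
  measurable_from_prod_countable_right fun s => (continuous_emStep
    (continuous_of_norm_sub_le fun x y =>
      (le_add_of_nonneg_right (hsNorm_nonneg _)).trans (hLip s x y))
    (continuous_of_hsNorm_sub_le fun x y =>
      (le_add_of_nonneg_left (norm_nonneg _)).trans (hLip s x y)) δ).measurable

theorem lintegral_norm_emOrbit_sub_sq_mul_le {P : Measure Ω} [IsProbabilityMeasure P]
    (hLip : ∀ s x y, ‖b x s - b y s‖ + hsNorm (σ x s - σ y s) ≤ L * ‖x - y‖) {β : S → ℝ}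
    (hdiss : ∀ s x y, 2 * inner ℝ (x - y) (b x s - b y s) + hsNorm (σ x s - σ y s) ^ 2 ≤
      β s * ‖x - y‖ ^ 2)
    {δ : ℝ} (hδ : 0 ≤ δ) {Z : ℕ → Ω → Fin m → ℝ} {J : ℕ → Ω → S} {T : S → S → ℝ≥0∞}
    (hZm : ∀ k, Measurable (Z k)) (hZ : iIndepFun Z P) (hZlaw : ∀ k, IsWhiteNoise (P.map (Z k)))
    (hJm : ∀ k, Measurable (J k)) (hJ : IsMarkovChain T J P)
    (hZJ : IndepFun (fun ω l => Z l ω) (fun ω l => J l ω) P) {ξ : S → ℝ≥0∞} {ρ : ℝ≥0∞}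
    (hρ : ∀ s, ENNReal.ofReal (Real.exp (δ * β s + δ ^ 2 * L ^ 2)) * ∑' c, T s c * ξ c ≤ ρ * ξ s)
    (x y : EuclideanSpace ℝ (Fin n)) (k : ℕ) :
    ∫⁻ ω, ENNReal.ofReal
        (‖emOrbit b σ δ x (fun l => J l ω) (fun l => Z l ω) k -
          emOrbit b σ δ y (fun l => J l ω) (fun l => Z l ω) k‖ ^ 2) * ξ (J k ω) ∂P ≤
      ρ ^ k * (∫⁻ ω, ξ (J 0 ω) ∂P) * ENNReal.ofReal (‖x - y‖ ^ 2) := by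
  have hstep : ∀ k s x y, ∫⁻ z, ENNReal.ofReal
      (‖emStep (b · s) (σ · s) δ x z - emStep (b · s) (σ · s) δ y z‖ ^ 2) ∂P.map (Z k) ≤
      ENNReal.ofReal (Real.exp (δ * β s + δ ^ 2 * L ^ 2)) * ENNReal.ofReal (‖x - y‖ ^ 2) :=
    fun k s x y => by
      have := Measure.isProbabilityMeasure_map (μ := P) (hZm k).aemeasurable
      exact lintegral_norm_emStep_sub_sq_le (hZlaw k) hδ
        ((le_add_of_nonneg_right (hsNorm_nonneg _)).trans (hLip s x y)) (hdiss s x y)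
  exact lintegral_drivenOrbit_pair_mul_le (measurable_emStep hLip δ) hZm hZ hJm hJ hZJ
    (V := fun p => ENNReal.ofReal (‖p.1 - p.2‖ ^ 2)) (by fun_prop) hstep hρ x y k

end SwitchingEulerMaruyama

theorem ofReal_mul_tsum_ofReal_mul_le {S : Type*} [Fintype S] {w r : ℝ} {t ξ : S → ℝ} (hw : 0 ≤ w)
    (ht : ∀ c, 0 ≤ t c) (hξ : ∀ c, 0 ≤ ξ c) (h : w * ∑ c, t c * ξ c ≤ r) :
    ENNReal.ofReal w * ∑' c, ENNReal.ofReal (t c) * ENNReal.ofReal (ξ c) ≤ ENNReal.ofReal r := by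
  simp only [tsum_fintype, ← ENNReal.ofReal_mul (ht _)]
  rw [← ENNReal.ofReal_sum_of_nonneg fun c _ => mul_nonneg (ht c) (hξ c), ← ENNReal.ofReal_mul hw]
  exact ENNReal.ofReal_le_ofReal h

section FiniteEnvironment

variable {Ω : Type*} [MeasurableSpace Ω] {P : Measure Ω} [IsProbabilityMeasure P] {n m N : ℕ}
  {Q : Matrix (Fin N) (Fin N) ℝ} {b : EuclideanSpace ℝ (Fin n) → Fin N → EuclideanSpace ℝ (Fin n)}
  {σ : EuclideanSpace ℝ (Fin n) → Fin N → Matrix (Fin n) (Fin m) ℝ} {β ξ : Fin N → ℝ}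
  {η L β₀ q₀ R A δ : ℝ} {Z : ℕ → Ω → Fin m → ℝ} {J : ℕ → Ω → Fin N}

theorem lintegral_norm_emOrbit_sub_sq_mul_eigenvector_le (hQ : IsConservativeQMatrix Q)
    (hLip : ∀ s x y, ‖b x s - b y s‖ + hsNorm (σ x s - σ y s) ≤ L * ‖x - y‖)
    (hdiss : ∀ s x y, 2 * inner ℝ (x - y) (b x s - b y s) + hsNorm (σ x s - σ y s) ^ 2 ≤
      β s * ‖x - y‖ ^ 2)
    (hξ0 : ∀ s, 0 < ξ s) (hξ : (Q + Matrix.diagonal β).mulVec ξ = -η • ξ)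
    (hR : ∀ s c, ξ s ≤ R * ξ c) (hβ₀ : ∀ s, |β s| ≤ β₀) (hq₀ : ∀ s, -Q s s ≤ q₀)
    (hA : L ^ 2 + β₀ * q₀ * R ≤ A) (hδ : 0 ≤ δ) (hδ1 : δ ≤ 1) (hZm : ∀ k, Measurable (Z k))
    (hJm : ∀ k, Measurable (J k)) (hZ : iIndepFun Z P) (hZlaw : ∀ k, IsWhiteNoise (P.map (Z k)))
    (hJ : IsMarkovChain (fun s c => ENNReal.ofReal (matExp (δ • Q) s c)) J P) {i : Fin N}
    (hJ0 : ∀ᵐ ω ∂P, J 0 ω = i)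
    (hZJ : IndepFun (fun ω l => Z l ω) (fun ω l => J l ω) P) (x y : EuclideanSpace ℝ (Fin n))
    (k : ℕ) :
    ∫⁻ ω, ENNReal.ofReal
        (‖emOrbit b σ δ x (fun l => J l ω) (fun l => Z l ω) k -
          emOrbit b σ δ y (fun l => J l ω) (fun l => Z l ω) k‖ ^ 2) *
        ENNReal.ofReal (ξ (J k ω)) ∂P ≤
      ENNReal.ofReal (Real.exp (-((η - A * √δ) * δ)) ^ k * ξ i * ‖x - y‖ ^ 2) := by
  have hρ := fun s => (ofReal_mul_tsum_ofReal_mul_le (Real.exp_pos _).le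
    (hQ.matExp_smul_apply_nonneg hδ s) (fun c => (hξ0 c).le)
    (hQ.exp_mul_sum_matExp_mul_le hξ0 hξ hR hβ₀ hq₀ hA hδ hδ1 s)).trans_eq
      (ENNReal.ofReal_mul (Real.exp_pos _).le)
  have hinit : ∫⁻ ω, ENNReal.ofReal (ξ (J 0 ω)) ∂P = ENNReal.ofReal (ξ i) := by
    have hξJ : ∀ᵐ ω ∂P, ENNReal.ofReal (ξ (J 0 ω)) = ENNReal.ofReal (ξ i) := by
      filter_upwards [hJ0] with ω h using by rw [h]
    rw [lintegral_congr_ae hξJ, lintegral_const, measure_univ, mul_one]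
  have hdecay := lintegral_norm_emOrbit_sub_sq_mul_le hLip hdiss hδ hZm hZ hZlaw hJm
    hJ hZJ (ξ := fun s => ENNReal.ofReal (ξ s)) hρ x y k
  rwa [hinit, ← ENNReal.ofReal_pow (by positivity), ← ENNReal.ofReal_mul (by positivity),
    ← ENNReal.ofReal_mul (mul_nonneg (by positivity) (hξ0 i).le)] at hdecay

theorem integral_norm_emOrbit_sub_sq_le (hQ : IsConservativeQMatrix Q)
    (hLip : ∀ s x y, ‖b x s - b y s‖ + hsNorm (σ x s - σ y s) ≤ L * ‖x - y‖)
    (hdiss : ∀ s x y, 2 * inner ℝ (x - y) (b x s - b y s) + hsNorm (σ x s - σ y s) ^ 2 ≤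
      β s * ‖x - y‖ ^ 2)
    (hξ0 : ∀ s, 0 < ξ s) (hξ : (Q + Matrix.diagonal β).mulVec ξ = -η • ξ)
    (hR : ∀ s c, ξ s ≤ R * ξ c) (hβ₀ : ∀ s, |β s| ≤ β₀) (hq₀ : ∀ s, -Q s s ≤ q₀)
    (hA : L ^ 2 + β₀ * q₀ * R ≤ A) (hδ : 0 ≤ δ) (hδ1 : δ ≤ 1) (hZm : ∀ k, Measurable (Z k))
    (hJm : ∀ k, Measurable (J k)) (hZ : iIndepFun Z P) (hZlaw : ∀ k, IsWhiteNoise (P.map (Z k)))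
    (hJ : IsMarkovChain (fun s c => ENNReal.ofReal (matExp (δ • Q) s c)) J P) {i : Fin N}
    (hJ0 : ∀ᵐ ω ∂P, J 0 ω = i)
    (hZJ : IndepFun (fun ω l => Z l ω) (fun ω l => J l ω) P) (x y : EuclideanSpace ℝ (Fin n))
    (k : ℕ) :
    let Y := fun x ω => emOrbit b σ δ x (fun l => J l ω) (fun l => Z l ω) k
    Integrable (fun ω => ‖Y x ω - Y y ω‖ ^ 2) P ∧
      ∫ ω, ‖Y x ω - Y y ω‖ ^ 2 ∂P ≤
        R * ‖x - y‖ ^ 2 * Real.exp (-((η - A * √δ) * k * δ)) := by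
  intro Y
  have hYm : ∀ x, Measurable (Y x) := fun x =>
    (measurable_drivenOrbit (measurable_emStep hLip δ) x k).comp
      ((measurable_pi_lambda _ hJm).prodMk (measurable_pi_lambda _ hZm))
  have hweight : ∀ ω, 1 ≤ R / ξ i * ξ (J k ω) := fun ω => by
    rw [div_mul_eq_mul_div, one_le_div (hξ0 i)]
    exact hR i (J k ω)
  have hR0 : 0 ≤ R := nonneg_of_mul_nonneg_left ((hξ0 i).le.trans (hR i i)) (hξ0 i)
  obtain ⟨hint, hle⟩ := integrable_and_integral_le_of_lintegral_ofReal_mul_le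
    (((hYm x).sub (hYm y)).norm.pow_const 2).aestronglyMeasurable (fun ω => sq_nonneg _)
    (div_nonneg hR0 (hξ0 i).le) hweight
    (mul_nonneg (mul_nonneg (by positivity) (hξ0 i).le) (sq_nonneg _))
    (lintegral_norm_emOrbit_sub_sq_mul_eigenvector_le hQ hLip hdiss hξ0 hξ hR hβ₀ hq₀ hA
      hδ hδ1 hZm hJm hZ hZlaw hJ hJ0 hZJ x y k)
  have hpow : Real.exp (-((η - A * √δ) * k * δ)) = Real.exp (-((η - A * √δ) * δ)) ^ k := by
    rw [← Real.exp_nat_mul]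
    ring_nf
  refine ⟨hint, hle.trans_eq ?_⟩
  rw [hpow]
  field_simp [(hξ0 i).ne']

end FiniteEnvironment

theorem le_mul_mul_of_isGreatest_of_isLeast_inv {S : Type*} {ξ : S → ℝ} {M r : ℝ}
    (hξ : ∀ s, 0 < ξ s) (hM : IsGreatest (Set.range ξ) M) (hr : IsLeast (Set.range ξ) r⁻¹)
    (s c : S) : ξ s ≤ M * r * ξ c := by
  obtain ⟨a, ha⟩ := hr.1
  have hr0 : 0 < r := inv_pos.1 (ha ▸ hξ a)
  have hM0 : 0 < M := (hξ s).trans_le (hM.2 ⟨s, rfl⟩)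
  calc ξ s ≤ M := hM.2 ⟨s, rfl⟩
    _ = M * r * r⁻¹ := (mul_inv_cancel_right₀ hr0.ne' M).symm
    _ ≤ M * r * ξ c := by
      gcongr
      exact hr.2 ⟨c, rfl⟩

theorem sq_add_mul_le_rate_mul {L β₀ q₀ R : ℝ} (hβ₀ : 0 ≤ β₀) (hq₀ : 0 ≤ q₀) (hR : 1 ≤ R) :
    L ^ 2 + β₀ * q₀ * R ≤ ((1 + 12 * q₀) * β₀ + 8 * L ^ 2 * (5 + 6 * β₀)) * R := by
  have hL : L ^ 2 ≤ L ^ 2 * R := le_mul_of_one_le_right (sq_nonneg L) hR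
  have hrest : 0 ≤ (β₀ + 11 * q₀ * β₀ + 39 * L ^ 2 + 48 * L ^ 2 * β₀) * R := by positivity
  linarith

theorem stmt10_general {n m N : ℕ}
    (Q : Matrix (Fin N) (Fin N) ℝ) (hQ : IsConservativeQMatrix Q)
    (b : EuclideanSpace ℝ (Fin n) → Fin N → EuclideanSpace ℝ (Fin n))
    (σ : EuclideanSpace ℝ (Fin n) → Fin N → Matrix (Fin n) (Fin m) ℝ) (L : ℝ)
    (hLip : ∀ i x y, ‖b x i - b y i‖ + hsNorm (σ x i - σ y i) ≤ L * ‖x - y‖)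
    (β : Fin N → ℝ)
    (hdiss : ∀ i x y, 2 * (inner ℝ (x - y) (b x i - b y i) : ℝ)
        + hsNorm (σ x i - σ y i) ^ 2 ≤ β i * ‖x - y‖ ^ 2)
    (η : ℝ) (ξ : Fin N → ℝ) (hξpos : ∀ i, 0 < ξ i)
    (hξeig : (Q + Matrix.diagonal β).mulVec ξ = -η • ξ)
    (ξhat ξbar β₀ q₀ βhat : ℝ) (hξhat : IsGreatest (Set.range ξ) ξhat)
    (hξbar : IsLeast (Set.range ξ) ξbar⁻¹) (hβ₀ : IsGreatest (Set.range fun i => |β i|) β₀)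
    (hq₀ : IsGreatest (Set.range fun i => -Q i i) q₀)
    (hβhat : βhat = ((1 + 12 * q₀) * β₀ + 8 * L ^ 2 * (5 + 6 * β₀)) * ξhat * ξbar)
    (δ : ℝ) (hδ0 : 0 ≤ δ) (hδ1 : δ ≤ 1)
    (Ω : Type*) [MeasurableSpace Ω] (P : Measure Ω) [IsProbabilityMeasure P] (i : Fin N)
    (Z : ℕ → Ω → (Fin m → ℝ)) (J : ℕ → Ω → Fin N)
    (hZmeas : ∀ k, Measurable (Z k)) (hJmeas : ∀ k, Measurable (J k)) (hZindep : iIndepFun Z P)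
    (hZlaw : ∀ k, IsWhiteNoise (P.map (Z k)))
    (hJchain : ∀ (k : ℕ) (j : ℕ → Fin N),
      P {ω | ∀ l ≤ k, J l ω = j l} =
        ENNReal.ofReal ((if j 0 = i then (1 : ℝ) else 0) *
          ∏ l ∈ Finset.range k, matExp (δ • Q) (j l) (j (l + 1))))
    (hZJindep : IndepFun (fun ω l => Z l ω) (fun ω l => J l ω) P)
    (Ybar : EuclideanSpace ℝ (Fin n) → ℕ → Ω → EuclideanSpace ℝ (Fin n))
    (hY0 : ∀ x ω, Ybar x 0 ω = x)
    (hYrec : ∀ x k ω, Ybar x (k + 1) ω = emStep (b · (J k ω)) (σ · (J k ω)) δ (Ybar x k ω) (Z k ω))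
    (x y : EuclideanSpace ℝ (Fin n)) (k : ℕ) :
    Integrable (fun ω => ‖Ybar x k ω - Ybar y k ω‖ ^ 2) P ∧
      ∫ ω, ‖Ybar x k ω - Ybar y k ω‖ ^ 2 ∂P ≤
        ξhat * ξbar * ‖x - y‖ ^ 2 * Real.exp (-((η - βhat * √δ) * k * δ)) := by
  have hR := le_mul_mul_of_isGreatest_of_isLeast_inv hξpos hξhat hξbar
  have hR1 : 1 ≤ ξhat * ξbar := le_of_mul_le_mul_right (by simpa using hR i i) (hξpos i)
  have hβ : ∀ s, |β s| ≤ β₀ := fun s => hβ₀.2 ⟨s, rfl⟩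
  have hq : ∀ s, -Q s s ≤ q₀ := fun s => hq₀.2 ⟨s, rfl⟩
  have hβhat_ge : L ^ 2 + β₀ * q₀ * (ξhat * ξbar) ≤ βhat := by
    rw [hβhat, mul_assoc _ ξhat]
    exact sq_add_mul_le_rate_mul ((abs_nonneg _).trans (hβ i))
      ((neg_nonneg.2 (hQ.apply_self_nonpos i)).trans (hq i)) hR1
  have hY : ∀ x ω, Ybar x k ω = emOrbit b σ δ x (fun l => J l ω) (fun l => Z l ω) k := fun x ω =>
    eq_drivenOrbit (X := fun l => Ybar x l ω) (hY0 x ω) (fun k => hYrec x k ω) k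
  have hJ : IsMarkovChain (fun s c => ENNReal.ofReal (matExp (δ • Q) s c)) J P :=
    isMarkovChain_of_path_probability (a := fun s => if s = i then 1 else 0)
      (hQ.matExp_smul_apply_nonneg hδ0) hJchain
  simp only [hY]
  exact integral_norm_emOrbit_sub_sq_le hQ hLip hdiss hξpos hξeig hR hβ hq hβhat_ge hδ0
    hδ1 hZmeas hJmeas hZindep hZlaw hJ
    (ae_eq_of_path_probability (hJmeas 0) hJchain) hZJindep x y k

theorem stmt10 {n m N : ℕ} (hN : 2 ≤ N)
    (Q : Matrix (Fin N) (Fin N) ℝ)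
    (hQ : IsConservativeQMatrix Q) (hirr : MatrixIrreducible Q)
    (μ : Fin N → ℝ) (hμpos : ∀ i, 0 < μ i) (hμsum : ∑ i, μ i = 1)
    (hμstat : ∀ j, ∑ i, μ i * Q i j = 0)
    (b : EuclideanSpace ℝ (Fin n) → Fin N → EuclideanSpace ℝ (Fin n))
    (σ : EuclideanSpace ℝ (Fin n) → Fin N → Matrix (Fin n) (Fin m) ℝ)
    -- global Lipschitz condition
    (L : ℝ) (hL : 0 ≤ L)
    (hLip : ∀ i x y, ‖b x i - b y i‖ + hsNorm (σ x i - σ y i) ≤ L * ‖x - y‖)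
    -- condition (H)
    (c₀ : ℝ) (hc₀ : 0 < c₀) (β : Fin N → ℝ)
    (hH1 : ∀ i x, 2 * (inner ℝ x (b x i) : ℝ) + hsNorm (σ x i) ^ 2 ≤ c₀ + β i * ‖x‖ ^ 2)
    (hH2 : ∀ i x y, 2 * (inner ℝ (x - y) (b x i - b y i) : ℝ)
        + hsNorm (σ x i - σ y i) ^ 2 ≤ β i * ‖x - y‖ ^ 2)
    -- averaging condition and the condition `min{-q_ii/β_i : β_i > 0} > 1`
    (havg : ∑ i, μ i * β i < 0)
    (hmin : ∀ i, 0 < β i → 1 < -Q i i / β i)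
    -- `η₂` and the Perron–Frobenius eigenvector `ξ` of `Q₂ = Q + diag(β)`
    (η₂ : ℝ)
    (hη : IsGreatest (spectrumRe (Q + Matrix.diagonal β)) (-η₂))
    (ξ : Fin N → ℝ) (hξpos : ∀ i, 0 < ξ i)
    (hξeig : (Q + Matrix.diagonal β).mulVec ξ = (-η₂) • ξ)
    -- the constants of Theorem 3.4
    (ξhat ξbar β₀ q₀ βhat : ℝ)
    (hξhat : IsGreatest (Set.range ξ) ξhat)
    (hξbar : IsLeast (Set.range ξ) ξbar⁻¹)
    (hβ₀ : IsGreatest (Set.range fun i => |β i|) β₀)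
    (hq₀ : IsGreatest (Set.range fun i => -Q i i) q₀)
    (hβhat : βhat = ((1 + 12 * q₀) * β₀ + 8 * L ^ 2 * (5 + 6 * β₀)) * ξhat * ξbar)
    -- the stepsize
    (δ : ℝ) (hδ0 : 0 < δ) (hδ1 : δ < 1)
    (hδ : δ < min (1 / (32 * L ^ 2)) ((η₂ / βhat) ^ 2))
    -- the driving randomness : i.i.d. standard Gaussian vectors `Z` and an
    -- independent Markov chain `J` with one-step transition matrix `exp(δ Q)`
    -- started at `i`
    (Ω : Type*) [MeasurableSpace Ω] (P : Measure Ω) [IsProbabilityMeasure P]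
    (i : Fin N)
    (Z : ℕ → Ω → (Fin m → ℝ)) (J : ℕ → Ω → Fin N)
    (hZmeas : ∀ k, Measurable (Z k)) (hJmeas : ∀ k, Measurable (J k))
    (hZindep : iIndepFun Z P)
    (hZlaw : ∀ k, Measure.map (Z k) P = stdGaussianPi m)
    (hJchain : ∀ (k : ℕ) (j : ℕ → Fin N),
      P {ω | ∀ l ≤ k, J l ω = j l} =
        ENNReal.ofReal ((if j 0 = i then (1 : ℝ) else 0) *
          ∏ l ∈ Finset.range k, matExp (δ • Q) (j l) (j (l + 1))))
    (hZJindep : IndepFun (fun ω l => Z l ω) (fun ω l => J l ω) P)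
    -- the synchronously coupled Euler–Maruyama sequences
    (Ybar : EuclideanSpace ℝ (Fin n) → ℕ → Ω → EuclideanSpace ℝ (Fin n))
    (hY0 : ∀ x ω, Ybar x 0 ω = x)
    (hYrec : ∀ x k ω, Ybar x (k + 1) ω =
      Ybar x k ω + δ • b (Ybar x k ω) (J k ω) +
        Real.sqrt δ •
          ((WithLp.equiv 2 (Fin n → ℝ)).symm
            ((σ (Ybar x k ω) (J k ω)).mulVec (Z k ω)))) :
    ∀ (x y : EuclideanSpace ℝ (Fin n)) (k : ℕ),
      ∫ ω, ‖Ybar x k ω - Ybar y k ω‖ ^ 2 ∂P ≤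
        ξhat * ξbar * ‖x - y‖ ^ 2 *
          Real.exp (-((η₂ - βhat * Real.sqrt δ) * k * δ)) := by
  exact fun x y k => (stmt10_general Q hQ b σ L hLip β hH2 η₂ ξ hξpos hξeig ξhat ξbar β₀ q₀ βhat
    hξhat hξbar hβ₀ hq₀ hβhat δ hδ0.le hδ1.le Ω P i Z J hZmeas hJmeas hZindep
    (fun k => hZlaw k ▸ isWhiteNoise_stdGaussianPi m) hJchain hZJindep Ybar hY0 hYrec x y k).2
end

section
/- Assume the finite-state Euler–Maruyama setting with multiplicative noise, the global Lipschitz condition with constant L, and condition (H) with parameters c_0 and (β_i). Assume in addition that the Markov chain generator Q is reversible with respect to a probability measure π on S (π_i q_ij = π_j q_ji for all i,j, with π_i > 0), and define the form D(f) := (1/2)Σ_{i,j} π_i q_ij (f_j − f_i)² − Σ_i π_i β_i f_i² and the principal eigenvalue λ_0 := inf{D(f) : f ∈ ℝ^N, Σ_i π_i f_i² = 1}. Assume λ_0 > 0. Let ξ ∈ ℝ^N be a strictly positive minimizer (Σ_i π_i ξ_i² = 1, ξ_i > 0 for all i, D(ξ) = λ_0), and set ξ̃_1 := max_i ξ_i,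 ξ̃_2 := (min_i ξ_i)^{−1}, β_0 := max_i |β_i|, q_0 := max_i(−q_ii), κ := [(1+12q_0)β_0 + 8L²(5+6β_0)]·ξ̃_1 ξ̃_2. Then for every stepsize δ ∈ (0,1) with δ < (1/(32L²)) ∧ (λ_0/κ)², the Euler–Maruyama transition kernel K_δ on ℝⁿ × S admits exactly one invariant probability measure π^δ. -/
open MeasureTheory ProbabilityTheory

/-- The bilinear form `D(f) = (1/2) Σ_{i,j} π_i q_ij (f_j - f_i)² - Σ_i π_i β_i f_i²`. -/
noncomputable def Dform {N : ℕ} (π : Fin N → ℝ) (Q : Matrix (Fin N) (Fin N) ℝ)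
    (β : Fin N → ℝ) (f : Fin N → ℝ) : ℝ :=
  (1 / 2) * ∑ i, ∑ j, π i * Q i j * (f j - f i) ^ 2 - ∑ i, π i * β i * f i ^ 2

/-!
The kernel is shown to be a strict contraction for a Wasserstein distance `W₁` on `ℝⁿ × S`.

A minimizer `ξ` of the form solves the eigenvalue equation `Q ξ + β ξ = -λ₀ ξ`. If two copies of the
scheme start in the same regime `i` and use the same noise, one step multiplies the mean squared
distance by at most `1 + δ β_i + δ² L²`, while `exp (δ Q) ξ = ξ + δ Q ξ + O(δ²)`. So the mean of
`ξ ‖x - y‖²` is multiplied by `1 - δ λ₀ + O(δ²)`, and the step-size condition makes this less than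
one. By concavity of the square root, `√ξ ‖x - y‖` is contracted in mean as well.

Copies in different regimes are compared through the origin. Since all entries of `exp (δ Q)` are
positive, their regimes meet after one step with probability at least some `ε > 0`; scaling the
weights `√ξ` by a small constant makes the noise at the origin cheap compared with this gain.
-/

namespace EulerMaruyama

open Filter Set Topology
open scoped NNReal

section Wasserstein

lemma abs_le_abs_add_mul_dist_of_lipschitzWith {X : Type*} [PseudoMetricSpace X] {g : X → ℝ}
    {K : ℝ≥0} (hg : LipschitzWith K g) (x y : X) : |g y| ≤ |g x| + K * dist x y := by
  have h := hg.dist_le_mul y x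
  rw [Real.dist_eq, dist_comm] at h
  linarith [abs_sub_abs_le_abs_sub (g y) (g x)]

lemma isTightMeasureSet_of_forall_integral_dist_le {X : Type*} [MeasurableSpace X]
    [PseudoMetricSpace X] [ProperSpace X] {S : Set (Measure X)} {x : X} {C : ℝ}
    (hS : ∀ μ ∈ S, IsFiniteMeasure μ ∧ Integrable (dist x) μ ∧ ∫ y, dist x y ∂μ ≤ C) :
    IsTightMeasureSet S := by
  rw [isTightMeasureSet_iff_exists_isCompact_measure_compl_le]
  intro ε hε
  obtain ⟨η, hη, hηε⟩ := ENNReal.lt_iff_exists_nnreal_btwn.mp hε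
  have hη : (0 : ℝ) < η := by exact_mod_cast hη
  set R : ℝ := max C 0 / η + 1
  have hR : 0 < R := by positivity
  refine ⟨Metric.closedBall x R, isCompact_closedBall x R, fun μ hμ => ?_⟩
  obtain ⟨_, hint, hC⟩ := hS μ hμ
  have hmarkov : R * μ.real {y | R ≤ dist x y} ≤ C :=
    (mul_meas_ge_le_integral_of_nonneg (.of_forall fun _ => dist_nonneg) hint R).trans hC
  have hsub : (Metric.closedBall x R)ᶜ ⊆ {y | R ≤ dist x y} := fun y hy => by
    rw [mem_compl_iff, Metric.mem_closedBall, not_le, dist_comm] at hy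
    exact hy.le
  have hreal : μ.real (Metric.closedBall x R)ᶜ ≤ η := by
    refine (measureReal_mono hsub).trans (le_of_mul_le_mul_left (hmarkov.trans ?_) hR)
    have : R * η = max C 0 + η := by simp only [R]; field_simp
    linarith [le_max_left C 0]
  refine le_trans ?_ hηε.le
  rw [← ENNReal.ofReal_coe_nnreal]
  exact (ENNReal.le_ofReal_iff_toReal_le (measure_ne_top _ _) hη.le).mpr hreal

lemma measure_eq_of_forall_integral_lipschitz_eq {X : Type*} [MeasurableSpace X]
    [PseudoEMetricSpace X] [BorelSpace X] {μ ν : Measure X} [IsProbabilityMeasure μ]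
    [IsProbabilityMeasure ν]
    (h : ∀ (K : ℝ≥0) (g : X → ℝ), LipschitzWith K g → (∃ B, ∀ x, |g x| ≤ B) →
      ∫ x, g x ∂μ = ∫ x, g x ∂ν) : μ = ν := by
  let μ' : ProbabilityMeasure X := ⟨μ, inferInstance⟩
  let ν' : ProbabilityMeasure X := ⟨ν, inferInstance⟩
  have htendsto : Tendsto (fun _ : ℕ => μ') atTop (𝓝 ν') := by
    refine tendsto_iff_forall_lipschitz_integral_tendsto.mpr fun g ⟨C, hC⟩ ⟨K, hg⟩ => ?_
    refine (tendsto_congr fun _ => h K g hg ?_).mpr tendsto_const_nhds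
    obtain ⟨x₀⟩ := μ.nonempty_of_neZero
    refine ⟨|g x₀| + C, fun x => ?_⟩
    have hdist := hC x x₀
    rw [Real.dist_eq] at hdist
    linarith [abs_sub_abs_le_abs_sub (g x) (g x₀)]
  exact congrArg ProbabilityMeasure.toMeasure (tendsto_nhds_unique tendsto_const_nhds htendsto)

variable {X : Type*} [MeasurableSpace X]

/-- The transition operator `g ↦ ∫ g(y) κ(·, dy)` of a kernel `κ`, acting on real functions. -/
noncomputable def transitionOp (κ : Kernel X X) (g : X → ℝ) (x : X) : ℝ := ∫ y, g y ∂κ x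

lemma abs_transitionOp_le (κ : Kernel X X) [IsMarkovKernel κ] {g : X → ℝ} {B : ℝ}
    (hB : ∀ x, |g x| ≤ B) (x : X) : |transitionOp κ g x| ≤ B := by
  simpa [transitionOp] using norm_integral_le_of_norm_le_const (μ := κ x) (.of_forall fun y =>
    (Real.norm_eq_abs _).trans_le (hB y))

lemma integral_transitionOp (κ : Kernel X X) {μ : Measure X} {g : X → ℝ}
    (hg : Integrable g (κ ∘ₘ μ)) : ∫ x, transitionOp κ g x ∂μ = ∫ x, g x ∂(κ ∘ₘ μ) := by
  simpa [Kernel.comp_apply, transitionOp] using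
    (Kernel.integral_comp (η := κ) (κ := Kernel.const Unit μ) (a := ()) (f := g)
      (by simpa [Kernel.comp_apply] using hg)).symm

instance isMarkovKernel_pow (κ : Kernel X X) [IsMarkovKernel κ] (n : ℕ) :
    IsMarkovKernel (κ ^ n) := by
  induction n with
  | zero => exact inferInstanceAs (IsMarkovKernel Kernel.id)
  | succ n ih =>
    rw [pow_succ]
    exact inferInstanceAs (IsMarkovKernel ((κ ^ n) ∘ₖ κ))

lemma invariant_pow {κ : Kernel X X} {μ : Measure X} (hκ : κ.Invariant μ) (n : ℕ) :
    (κ ^ n).Invariant μ := by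
  induction n with
  | zero => exact Measure.id_comp
  | succ n ih =>
    rw [pow_succ]
    exact ih.comp hκ

variable [MetricSpace X] {κ η : Kernel X X} {ρ ρ' K : ℝ≥0} {g : X → ℝ}

/-- A kernel with finite first moments whose transition operator multiplies Lipschitz constants by
at most `ρ`. By Kantorovich–Rubinstein duality this says that `μ ↦ κ ∘ₘ μ` is `ρ`-Lipschitz for
the Wasserstein distance `W₁`; only the dual form is used. -/
structure IsWassersteinLipschitz (ρ : ℝ≥0) (κ : Kernel X X) : Prop where
  integrable_dist : ∀ x, Integrable (dist x) (κ x)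
  lipschitzWith_transitionOp : ∀ {K : ℝ≥0} {g : X → ℝ},
    LipschitzWith K g → LipschitzWith (ρ * K) (transitionOp κ g)

namespace IsWassersteinLipschitz

variable [BorelSpace X]

protected lemma integrable [IsMarkovKernel κ] (hκ : IsWassersteinLipschitz ρ κ)
    (hg : LipschitzWith K g) (x : X) : Integrable g (κ x) :=
  ((integrable_const |g x|).add ((hκ.integrable_dist x).const_mul K)).mono'
    hg.continuous.measurable.aestronglyMeasurable
      (.of_forall (abs_le_abs_add_mul_dist_of_lipschitzWith hg x))

protected lemma integrable_comp [IsMarkovKernel κ] [IsMarkovKernel η]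
    (hη : IsWassersteinLipschitz ρ' η) (hκ : IsWassersteinLipschitz ρ κ) (hg : LipschitzWith K g)
    (x : X) : Integrable g ((η ∘ₖ κ) x) := by
  rw [integrable_comp_iff hg.continuous.measurable.aestronglyMeasurable]
  exact ⟨.of_forall (hη.integrable hg),
    hκ.integrable (hη.lipschitzWith_transitionOp (lipschitzWith_one_norm.comp hg)) x⟩

lemma transitionOp_comp [IsMarkovKernel κ] [IsMarkovKernel η] (hη : IsWassersteinLipschitz ρ' η)
    (hκ : IsWassersteinLipschitz ρ κ) (hg : LipschitzWith K g) :
    transitionOp (η ∘ₖ κ) g = transitionOp κ (transitionOp η g) :=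
  funext fun x => Kernel.integral_comp (hη.integrable_comp hκ hg x)

protected lemma comp [IsMarkovKernel κ] [IsMarkovKernel η] (hη : IsWassersteinLipschitz ρ' η)
    (hκ : IsWassersteinLipschitz ρ κ) : IsWassersteinLipschitz (ρ * ρ') (η ∘ₖ κ) where
  integrable_dist x := hη.integrable_comp hκ (LipschitzWith.dist_right x) x
  lipschitzWith_transitionOp hg := by
    rw [hη.transitionOp_comp hκ hg, mul_assoc]
    exact hκ.lipschitzWith_transitionOp (hη.lipschitzWith_transitionOp hg)

protected lemma id : IsWassersteinLipschitz 1 (Kernel.id : Kernel X X) where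
  integrable_dist x := by
    rw [Kernel.id_apply]
    exact integrable_dirac' (LipschitzWith.dist_right x).continuous.stronglyMeasurable (by simp)
  lipschitzWith_transitionOp {K g} hg := by
    convert hg using 1
    · rw [one_mul]
    · ext x
      rw [transitionOp, Kernel.id_apply, integral_dirac' _ _ hg.continuous.stronglyMeasurable]

protected lemma pow [IsMarkovKernel κ] (hκ : IsWassersteinLipschitz ρ κ) (n : ℕ) :
    IsWassersteinLipschitz (ρ ^ n) (κ ^ n) := by
  induction n with
  | zero => exact .id
  | succ n ih =>
    rw [pow_succ' ρ, pow_succ κ]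
    exact ih.comp hκ

lemma dist_transitionOp_le [IsMarkovKernel κ] (hκ : IsWassersteinLipschitz ρ κ)
    (hg : LipschitzWith K g) (x : X) :
    dist (g x) (transitionOp κ g x) ≤ K * ∫ y, dist x y ∂κ x := by
  have hsub : g x - transitionOp κ g x = ∫ y, (g x - g y) ∂κ x := by
    rw [integral_sub (integrable_const _) (hκ.integrable hg x)]
    simp [transitionOp]
  rw [Real.dist_eq, hsub, ← integral_const_mul]
  exact norm_integral_le_of_norm_le ((hκ.integrable_dist x).const_mul _)
    (.of_forall fun y => (Real.norm_eq_abs _).trans_le (hg.dist_le_mul x y))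

lemma exists_tendsto_transitionOp_pow [IsMarkovKernel κ] [Nonempty X]
    (hκ : IsWassersteinLipschitz ρ κ) (hρ : ρ < 1) (hg : LipschitzWith K g) :
    ∃ ℓ, ∀ x, Tendsto (fun n => transitionOp (κ ^ n) g x) atTop (𝓝 ℓ) := by
  obtain ⟨x₀⟩ := ‹Nonempty X›
  have hlip (n : ℕ) := (hκ.pow n).lipschitzWith_transitionOp hg
  have hcauchy : CauchySeq fun n => transitionOp (κ ^ n) g x₀ := by
    refine cauchySeq_of_le_geometric ρ (K * ∫ y, dist x₀ y ∂κ x₀) hρ fun n => ?_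
    have hstep : transitionOp (κ ^ (n + 1)) g = transitionOp κ (transitionOp (κ ^ n) g) := by
      rw [pow_succ]
      exact (hκ.pow n).transitionOp_comp hκ hg
    rw [hstep]
    refine (hκ.dist_transitionOp_le (hlip n) x₀).trans_eq ?_
    push_cast
    ring
  obtain ⟨ℓ, hℓ⟩ := cauchySeq_tendsto_of_complete hcauchy
  refine ⟨ℓ, fun x => hℓ.congr_dist <| squeeze_zero (fun _ => dist_nonneg)
    (fun n => (hlip n).dist_le_mul x₀ x) ?_⟩
  have hpow := tendsto_pow_atTop_nhds_zero_of_lt_one ρ.coe_nonneg hρ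
  simpa using (hpow.mul_const (K : ℝ)).mul_const (dist x₀ x)

lemma exists_mapClusterPt_pow [ProperSpace X] [IsMarkovKernel κ]
    (hκ : IsWassersteinLipschitz ρ κ) (hρ : ρ < 1) (x : X) :
    ∃ μ : ProbabilityMeasure X, MapClusterPt μ atTop
      fun n => (⟨(κ ^ n) x, inferInstance⟩ : ProbabilityMeasure X) := by
  have : Nonempty X := ⟨x⟩
  obtain ⟨ℓ, hℓ⟩ := hκ.exists_tendsto_transitionOp_pow hρ (LipschitzWith.dist_right x)
  obtain ⟨C, hC⟩ := (hℓ x).bddAbove_range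
  set law : ℕ → ProbabilityMeasure X := fun n => ⟨(κ ^ n) x, inferInstance⟩
  have htight : IsTightMeasureSet {(μ : Measure X) | μ ∈ range law} := by
    refine isTightMeasureSet_of_forall_integral_dist_le (x := x) (C := C) ?_
    rintro _ ⟨_, ⟨n, rfl⟩, rfl⟩
    exact ⟨inferInstance, (hκ.pow n).integrable_dist x, hC ⟨n, rfl⟩⟩
  obtain ⟨μ, -, hμ⟩ := (isCompact_closure_of_isTightMeasureSet htight).exists_mapClusterPt
    (f := atTop) (u := law) (tendsto_principal.mpr (.of_forall fun n => subset_closure ⟨n, rfl⟩))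
  exact ⟨μ, hμ⟩

lemma exists_invariant [ProperSpace X] [Nonempty X] [IsMarkovKernel κ]
    (hκ : IsWassersteinLipschitz ρ κ) (hρ : ρ < 1) :
    ∃ μ : Measure X, IsProbabilityMeasure μ ∧ κ.Invariant μ := by
  have x : X := Classical.arbitrary X
  obtain ⟨μ, hμ⟩ := hκ.exists_mapClusterPt_pow hρ x
  have hlim {K : ℝ≥0} {g : X → ℝ} (hg : LipschitzWith K g) {B : ℝ} (hB : ∀ y, |g y| ≤ B) :
      Tendsto (fun n => transitionOp (κ ^ n) g x) atTop (𝓝 (∫ y, g y ∂μ)) := by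
    obtain ⟨ℓ, hℓ⟩ := hκ.exists_tendsto_transitionOp_pow hρ hg
    obtain ⟨U, hU, hUμ⟩ := mapClusterPt_iff_ultrafilter.mp hμ
    have hUg := (ProbabilityMeasure.tendsto_iff_forall_integral_tendsto.mp hUμ)
      (.ofNormedAddCommGroup g hg.continuous B hB)
    convert hℓ x
    exact tendsto_nhds_unique hUg ((hℓ x).mono_left hU)
  refine ⟨μ, inferInstance, measure_eq_of_forall_integral_lipschitz_eq fun K g hg ⟨B, hB⟩ => ?_⟩
  have hshift : (fun n => transitionOp (κ ^ n) (transitionOp κ g) x) =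
      fun n => transitionOp (κ ^ (n + 1)) g x := by
    ext n
    rw [pow_succ']
    exact (congrFun (hκ.transitionOp_comp (hκ.pow n) hg) x).symm
  rw [← integral_transitionOp κ
    (.of_bound hg.continuous.measurable.aestronglyMeasurable B (.of_forall hB))]
  refine tendsto_nhds_unique (hlim (hκ.lipschitzWith_transitionOp hg)
    (abs_transitionOp_le κ hB)) ?_
  exact hshift ▸ (hlim hg hB).comp (tendsto_add_atTop_nat 1)

lemma tendsto_transitionOp_pow [IsMarkovKernel κ] (hκ : IsWassersteinLipschitz ρ κ)
    (hρ : ρ < 1) {μ : Measure X} [IsProbabilityMeasure μ] (hμ : κ.Invariant μ)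
    (hg : LipschitzWith K g) {B : ℝ} (hB : ∀ x, |g x| ≤ B) (x : X) :
    Tendsto (fun n => transitionOp (κ ^ n) g x) atTop (𝓝 (∫ y, g y ∂μ)) := by
  have : Nonempty X := ⟨x⟩
  obtain ⟨ℓ, hℓ⟩ := hκ.exists_tendsto_transitionOp_pow hρ hg
  have hinv (n : ℕ) : ∫ y, transitionOp (κ ^ n) g y ∂μ = ∫ y, g y ∂μ := by
    rw [integral_transitionOp _
      (.of_bound hg.continuous.measurable.aestronglyMeasurable B (.of_forall hB)),
      (invariant_pow hμ n).def]
  have hdom : Tendsto (fun n => ∫ y, transitionOp (κ ^ n) g y ∂μ) atTop (𝓝 (∫ _, ℓ ∂μ)) :=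
    tendsto_integral_of_dominated_convergence (fun _ => B)
      (fun n => ((hκ.pow n).lipschitzWith_transitionOp
        hg).continuous.measurable.aestronglyMeasurable)
      (integrable_const _) (fun n => .of_forall (abs_transitionOp_le (κ ^ n) hB)) (.of_forall hℓ)
  have hℓμ : ∫ y, g y ∂μ = ℓ := by
    simpa [hinv, tendsto_const_nhds_iff] using hdom
  exact hℓμ ▸ hℓ x

theorem existsUnique_invariant [ProperSpace X] [Nonempty X] [IsMarkovKernel κ]
    (hκ : IsWassersteinLipschitz ρ κ) (hρ : ρ < 1) :
    ∃! μ : Measure X, IsProbabilityMeasure μ ∧ κ.Invariant μ := by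
  obtain ⟨μ, hμprob, hμ⟩ := hκ.exists_invariant hρ
  refine ⟨μ, ⟨hμprob, hμ⟩, fun ν ⟨hνprob, hν⟩ => ?_⟩
  have x : X := Classical.arbitrary X
  exact measure_eq_of_forall_integral_lipschitz_eq fun K g hg ⟨B, hB⟩ =>
    tendsto_nhds_unique (hκ.tendsto_transitionOp_pow hρ hν hg hB x)
      (hκ.tendsto_transitionOp_pow hρ hμ hg hB x)

end IsWassersteinLipschitz

end Wasserstein

section GluedMetric

variable {E ι : Type*} [NormedAddCommGroup E] [DecidableEq ι] {v : ι → ℝ}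

/-- The distance on `E × ι` gluing the copies `(E, v i * ‖·‖)`, `i : ι`, at the ends of unit-length
bridges between their origins. Points of different regimes are thus only compared through the
origin, which is all the Euler scheme controls when two copies of it jump to different regimes. -/
noncomputable def gluedDist (v : ι → ℝ) (p q : E × ι) : ℝ :=
  if p.2 = q.2 then v p.2 * ‖p.1 - q.1‖ else v p.2 * ‖p.1‖ + 1 + v q.2 * ‖q.1‖

@[simp]
lemma gluedDist_same (v : ι → ℝ) (x y : E) (i : ι) :
    gluedDist v (x, i) (y, i) = v i * ‖x - y‖ := if_pos rfl

lemma gluedDist_of_ne (v : ι → ℝ) (x y : E) {i j : ι} (hij : i ≠ j) :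
    gluedDist v (x, i) (y, j) = v i * ‖x‖ + 1 + v j * ‖y‖ := if_neg hij

lemma gluedDist_zero_zero_le (v : ι → ℝ) (i j : ι) :
    gluedDist v ((0 : E), i) ((0 : E), j) ≤ 1 := by
  obtain rfl | hij := eq_or_ne i j
  · simp
  · simp [gluedDist_of_ne v _ _ hij]

lemma gluedDist_comm (v : ι → ℝ) (p q : E × ι) : gluedDist v p q = gluedDist v q p := by
  obtain ⟨⟨x, i⟩, y, j⟩ := p, q
  obtain rfl | hij := eq_or_ne i j
  · simp [norm_sub_rev]
  · rw [gluedDist_of_ne v x y hij, gluedDist_of_ne v y x hij.symm]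
    ring

lemma mul_norm_le_gluedDist_add (hv : ∀ i, 0 < v i) (p q : E × ι) :
    v p.2 * ‖p.1‖ ≤ gluedDist v p q + v q.2 * ‖q.1‖ := by
  obtain ⟨⟨x, i⟩, y, j⟩ := p, q
  obtain rfl | hij := eq_or_ne i j
  · rw [gluedDist_same, ← mul_add]
    exact mul_le_mul_of_nonneg_left (by simpa using norm_add_le (x - y) y) (hv i).le
  · rw [gluedDist_of_ne v x y hij]
    linarith [mul_nonneg (hv j).le (norm_nonneg y)]

lemma gluedDist_triangle (hv : ∀ i, 0 < v i) (p q r : E × ι) :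
    gluedDist v p r ≤ gluedDist v p q + gluedDist v q r := by
  obtain ⟨⟨x, i⟩, ⟨y, j⟩, z, k⟩ := p, q, r
  have hnorm (i : ι) (x : E) : 0 ≤ v i * ‖x‖ := mul_nonneg (hv i).le (norm_nonneg x)
  have hsub (i : ι) (x y : E) : v i * ‖x‖ ≤ v i * ‖x - y‖ + v i * ‖y‖ := by
    simpa using mul_norm_le_gluedDist_add hv (x, i) (y, i)
  have hsub' (i : ι) (x y : E) : v i * ‖x - y‖ ≤ v i * ‖x‖ + v i * ‖y‖ := by
    rw [← mul_add]
    exact mul_le_mul_of_nonneg_left (norm_sub_le x y) (hv i).le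
  have hmid : v i * ‖x - z‖ ≤ v i * ‖x - y‖ + v i * ‖y - z‖ := by
    rw [← mul_add]
    exact mul_le_mul_of_nonneg_left (norm_sub_le_norm_sub_add_norm_sub x y z) (hv i).le
  obtain rfl | hij := eq_or_ne i j
  · obtain rfl | hik := eq_or_ne i k
    · simpa using hmid
    · simp only [gluedDist_same, gluedDist_of_ne v _ _ hik]
      linarith [hsub i x y]
  · obtain rfl | hjk := eq_or_ne j k
    · simp only [gluedDist_same, gluedDist_of_ne v _ _ hij, norm_sub_rev y z]
      linarith [hsub j z y]
    · rw [gluedDist_of_ne v x y hij, gluedDist_of_ne v y z hjk]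
      obtain rfl | hik := eq_or_ne i k
      · rw [gluedDist_same]
        linarith [hsub' i x z, hnorm j y]
      · rw [gluedDist_of_ne v x z hik]
        linarith [hnorm j y]

lemma eq_of_gluedDist_eq_zero (hv : ∀ i, 0 < v i) (p q : E × ι) (h : gluedDist v p q = 0) :
    p = q := by
  obtain ⟨⟨x, i⟩, y, j⟩ := p, q
  obtain rfl | hij := eq_or_ne i j
  · simpa [(hv i).ne', sub_eq_zero] using h
  · rw [gluedDist_of_ne v x y hij] at h
    have := mul_nonneg (hv i).le (norm_nonneg x)
    have := mul_nonneg (hv j).le (norm_nonneg y)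
    linarith

variable [TopologicalSpace ι] [DiscreteTopology ι]

lemma isOpen_prod_iff_of_discrete_right {α β : Type*} [TopologicalSpace α] [TopologicalSpace β]
    [DiscreteTopology β] {s : Set (α × β)} : IsOpen s ↔ ∀ b, IsOpen {a | (a, b) ∈ s} := by
  simpa [continuous_Prop] using
    continuous_prod_of_discrete_right (f := fun p : α × β => p ∈ s)

lemma isOpen_iff_gluedDist (hv : ∀ i, 0 < v i) (s : Set (E × ι)) :
    IsOpen s ↔ ∀ p ∈ s, ∃ ε > 0, ∀ q, gluedDist v p q < ε → q ∈ s := by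
  simp only [isOpen_prod_iff_of_discrete_right, Metric.isOpen_iff, Metric.ball, dist_eq_norm]
  constructor
  · rintro h ⟨x, i⟩ hx
    obtain ⟨ε, hε, hball⟩ := h i x hx
    refine ⟨min 1 (v i * ε), lt_min one_pos (mul_pos (hv i) hε), fun ⟨y, j⟩ hy => ?_⟩
    obtain rfl | hij := eq_or_ne i j
    · rw [gluedDist_same, lt_min_iff, mul_lt_mul_iff_right₀ (hv i), norm_sub_rev] at hy
      exact hball hy.2
    · rw [gluedDist_of_ne v x y hij, lt_min_iff] at hy
      linarith [mul_nonneg (hv i).le (norm_nonneg x), mul_nonneg (hv j).le (norm_nonneg y)]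
  · intro h i x hx
    obtain ⟨ε, hε, hball⟩ := h (x, i) hx
    refine ⟨ε / v i, div_pos hε (hv i), fun y hy => hball (y, i) ?_⟩
    rwa [gluedDist_same, ← lt_div_iff₀' (hv i), norm_sub_rev]

/-- The metric `gluedDist` on `E × ι`, set up so that its topology is the product topology by
definition. -/
noncomputable abbrev gluedMetricSpace (hv : ∀ i, 0 < v i) : MetricSpace (E × ι) :=
  .ofDistTopology (gluedDist v) (fun _ => by simp [gluedDist]) (gluedDist_comm v)
    (gluedDist_triangle hv) (isOpen_iff_gluedDist hv) (eq_of_gluedDist_eq_zero hv)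

lemma properSpace_gluedMetricSpace [Finite ι] [ProperSpace E] (hv : ∀ i, 0 < v i) :
    @ProperSpace (E × ι) (gluedMetricSpace hv).toPseudoMetricSpace := by
  let : MetricSpace (E × ι) := gluedMetricSpace hv
  refine ⟨fun ⟨x, i⟩ r => ?_⟩
  have : Nonempty ι := ⟨i⟩
  obtain ⟨k, hk⟩ := Finite.exists_min v
  refine IsCompact.of_isClosed_subset
    ((isCompact_closedBall (0 : E) ((r + v i * ‖x‖) / v k)).prod (isCompact_univ (X := ι)))
    Metric.isClosed_closedBall fun ⟨y, j⟩ hy => ⟨?_, mem_univ j⟩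
  have hy : gluedDist v (y, j) (x, i) ≤ r := hy
  rw [mem_closedBall_zero_iff, le_div_iff₀' (hv k)]
  calc v k * ‖y‖ ≤ v j * ‖y‖ := by gcongr; exact hk j
    _ ≤ gluedDist v (y, j) (x, i) + v i * ‖x‖ := mul_norm_le_gluedDist_add hv (y, j) (x, i)
    _ ≤ r + v i * ‖x‖ := by gcongr

end GluedMetric

section Switching

lemma sum_mul_sub_sum_mul_le {ι : Type*} [Fintype ι] [Nonempty ι] {p q g : ι → ℝ} {ε w : ℝ}
    (hε : 0 ≤ ε) (hp : ∀ j, ε ≤ p j) (hp1 : ∑ j, p j = 1) (hq : ∀ j, 0 ≤ q j)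
    (hq1 : ∑ j, q j = 1) (hg : ∀ j k, g j - g k ≤ w) :
    ∑ j, p j * g j - ∑ j, q j * g j ≤ (1 - ε) * w := by
  classical
  obtain ⟨k, hk⟩ := Finite.exists_min g
  have hw : 0 ≤ w := by simpa using hg k k
  have hshift (a : ι → ℝ) (ha : ∑ j, a j = 1) :
      ∑ j, a j * (g j - g k) = ∑ j, a j * g j - g k := by
    simp only [mul_sub, Finset.sum_sub_distrib, ← Finset.sum_mul, ha, one_mul]
  have hlower : 0 ≤ ∑ j, q j * (g j - g k) :=
    Finset.sum_nonneg fun j _ => mul_nonneg (hq j) (sub_nonneg.mpr (hk j))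
  have hupper : ∑ j, p j * (g j - g k) ≤ (1 - ε) * w := calc
    ∑ j, p j * (g j - g k) = ∑ j ∈ Finset.univ.erase k, p j * (g j - g k) := by
      rw [Finset.sum_erase _ (by simp)]
    _ ≤ ∑ j ∈ Finset.univ.erase k, p j * w :=
      Finset.sum_le_sum fun j _ => mul_le_mul_of_nonneg_left (hg j k) (hε.trans (hp j))
    _ = (1 - p k) * w := by
      rw [← Finset.sum_mul, Finset.sum_erase_eq_sub (Finset.mem_univ k), hp1]
    _ ≤ (1 - ε) * w := by gcongr; exact hp k
  rw [hshift p hp1] at hupper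
  rw [hshift q hq1] at hlower
  linarith

variable {E ι Z : Type*} [MeasurableSpace E] [MeasurableSpace ι] [MeasurableSpace Z] [Fintype ι]
  {γ : Measure Z} {P : Matrix ι ι ℝ}

/-- The joint law of `(f z, J)` with `z ∼ γ` and `J` independent of `z`, distributed according to
the `i`-th row of `P`. -/
noncomputable def switchedLaw (γ : Measure Z) (P : Matrix ι ι ℝ) (i : ι) (f : Z → E) :
    Measure (E × ι) :=
  ∑ j, ENNReal.ofReal (P i j) • γ.map fun z => (f z, j)

lemma isProbabilityMeasure_switchedLaw [IsProbabilityMeasure γ] (hP : ∀ i j, 0 ≤ P i j)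
    (hP1 : ∀ i, ∑ j, P i j = 1) (i : ι) {f : Z → E} (hf : Measurable f) :
    IsProbabilityMeasure (switchedLaw γ P i f) := by
  have hmap (j : ι) : γ.map (fun z => (f z, j)) univ = 1 := by
    rw [Measure.map_apply (by fun_prop) .univ, preimage_univ, measure_univ]
  constructor
  simp only [switchedLaw, Measure.coe_finsetSum, Finset.sum_apply, Measure.smul_apply, hmap,
    smul_eq_mul, mul_one]
  rw [← ENNReal.ofReal_sum_of_nonneg fun j _ => hP i j, hP1, ENNReal.ofReal_one]

lemma measurable_switchedLaw [DiscreteMeasurableSpace ι] [SFinite γ] {X : Type*}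
    [MeasurableSpace X] {f : X → ι → Z → E} (hf : ∀ i, Measurable fun p : X × Z => f p.1 i p.2) :
    Measurable fun p : X × ι => switchedLaw γ P p.2 (f p.1 p.2) := by
  refine measurable_from_prod_countable_left fun i =>
    Measure.measurable_of_measurable_coe _ fun A hA => ?_
  simp only [switchedLaw, Measure.finsetSum_apply, Measure.smul_apply, smul_eq_mul]
  refine Finset.measurable_sum _ fun j _ => .const_mul ?_ _
  have hsection (x : X) : Measurable fun z => (f x i z, j) :=
    ((hf i).comp measurable_prodMk_left).prodMk measurable_const
  have hpre : MeasurableSet {p : X × Z | (f p.1 i p.2, j) ∈ A} :=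
    ((hf i).prodMk measurable_const) hA
  simp only [Measure.map_apply (hsection _) hA]
  exact measurable_measure_prodMk_left hpre

lemma integrable_switchedLaw {i : ι} {f : Z → E} (hf : Measurable f) {g : E × ι → ℝ}
    (hg : Measurable g) (hint : ∀ j, Integrable (fun z => g (f z, j)) γ) :
    Integrable g (switchedLaw γ P i f) := by
  refine integrable_finsetSum_measure.mpr fun j _ => .smul_measure ?_ ENNReal.ofReal_ne_top
  rw [integrable_map_measure hg.aestronglyMeasurable (by fun_prop)]
  exact hint j

lemma integral_switchedLaw {i : ι} (hP : ∀ j, 0 ≤ P i j) {f : Z → E} (hf : Measurable f)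
    {g : E × ι → ℝ} (hg : Measurable g) (hint : ∀ j, Integrable (fun z => g (f z, j)) γ) :
    ∫ p, g p ∂(switchedLaw γ P i f) = ∑ j, P i j * ∫ z, g (f z, j) ∂γ := by
  have hmap (j : ι) : Measurable fun z => (f z, j) := by fun_prop
  rw [switchedLaw, integral_finsetSum_measure fun j _ => .smul_measure
    ((integrable_map_measure hg.aestronglyMeasurable (hmap j).aemeasurable).mpr (hint j))
    ENNReal.ofReal_ne_top]
  refine Finset.sum_congr rfl fun j _ => ?_
  rw [integral_smul_measure, ENNReal.toReal_ofReal (hP j), smul_eq_mul,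
    integral_map (hmap j).aemeasurable hg.aestronglyMeasurable]

variable [IsProbabilityMeasure γ]

lemma abs_integral_switchedLaw_const_sub_le {ε w : ℝ} (hε : 0 ≤ ε) (hPε : ∀ i j, ε ≤ P i j)
    (hP1 : ∀ i, ∑ j, P i j = 1) {g : E × ι → ℝ} (hgm : Measurable g) {x : E}
    (hg : ∀ j k, g (x, j) - g (x, k) ≤ w) (i j : ι) :
    |∫ p, g p ∂(switchedLaw γ P i fun _ => x) - ∫ p, g p ∂(switchedLaw γ P j fun _ => x)| ≤
      (1 - ε) * w := by
  have : Nonempty ι := ⟨i⟩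
  have hP (i j : ι) : 0 ≤ P i j := hε.trans (hPε i j)
  have hint (k : ι) : Integrable (fun _ => g (x, k)) γ := integrable_const _
  rw [integral_switchedLaw (hP i) measurable_const hgm hint,
    integral_switchedLaw (hP j) measurable_const hgm hint, abs_sub_le_iff]
  simp only [integral_const, probReal_univ, one_smul]
  exact ⟨sum_mul_sub_sum_mul_le hε (hPε i) (hP1 i) (hP j) (hP1 j) hg,
    sum_mul_sub_sum_mul_le hε (hPε j) (hP1 j) (hP i) (hP1 i) hg⟩

variable [NormedAddCommGroup E] {v : ι → ℝ}

lemma integrable_comp_of_abs_sub_le {c : ℝ} {g : E → ℝ}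
    (hg : ∀ x y, |g x - g y| ≤ c * ‖x - y‖) (hgm : Measurable g) {f : Z → E}
    (hf : Integrable f γ) (hfm : Measurable f) : Integrable (fun z => g (f z)) γ := by
  refine ((integrable_const |g 0|).add (hf.norm.const_mul c)).mono'
    (hgm.comp hfm).aestronglyMeasurable (.of_forall fun z => ?_)
  have h := hg (f z) 0
  rw [sub_zero] at h
  rw [Real.norm_eq_abs, Pi.add_apply]
  linarith [abs_sub_abs_le_abs_sub (g (f z)) (g 0)]

lemma abs_integral_switchedLaw_sub_le {i : ι} (hP : ∀ j, 0 ≤ P i j) {K : ℝ} {g : E × ι → ℝ}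
    (hg : ∀ x y j, |g (x, j) - g (y, j)| ≤ K * v j * ‖x - y‖) (hgm : Measurable g)
    {f₁ f₂ : Z → E} (hf₁ : Integrable f₁ γ) (hf₁m : Measurable f₁) (hf₂ : Integrable f₂ γ)
    (hf₂m : Measurable f₂) :
    |∫ p, g p ∂(switchedLaw γ P i f₁) - ∫ p, g p ∂(switchedLaw γ P i f₂)| ≤
      K * ((∑ j, P i j * v j) * ∫ z, ‖f₁ z - f₂ z‖ ∂γ) := by
  have hint {f : Z → E} (hf : Integrable f γ) (hfm : Measurable f) (j : ι) :
      Integrable (fun z => g (f z, j)) γ :=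
    integrable_comp_of_abs_sub_le (hg · · j) (by fun_prop) hf hfm
  have hterm (j : ι) : |∫ z, g (f₁ z, j) ∂γ - ∫ z, g (f₂ z, j) ∂γ| ≤
      K * v j * ∫ z, ‖f₁ z - f₂ z‖ ∂γ := by
    rw [← integral_sub (hint hf₁ hf₁m j) (hint hf₂ hf₂m j), ← integral_const_mul]
    exact norm_integral_le_of_norm_le ((hf₁.sub hf₂).norm.const_mul _)
      (.of_forall fun z => (Real.norm_eq_abs _).trans_le (hg (f₁ z) (f₂ z) j))
  rw [integral_switchedLaw hP hf₁m hgm (hint hf₁ hf₁m),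
    integral_switchedLaw hP hf₂m hgm (hint hf₂ hf₂m), ← Finset.sum_sub_distrib]
  simp only [← mul_sub]
  calc |∑ j, P i j * (∫ z, g (f₁ z, j) ∂γ - ∫ z, g (f₂ z, j) ∂γ)|
      ≤ ∑ j, |P i j * (∫ z, g (f₁ z, j) ∂γ - ∫ z, g (f₂ z, j) ∂γ)| :=
        Finset.abs_sum_le_sum_abs _ _
    _ ≤ ∑ j, P i j * (K * v j * ∫ z, ‖f₁ z - f₂ z‖ ∂γ) := by
        refine Finset.sum_le_sum fun j _ => ?_
        rw [abs_mul, abs_of_nonneg (hP j)]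
        exact mul_le_mul_of_nonneg_left (hterm j) (hP j)
    _ = K * ((∑ j, P i j * v j) * ∫ z, ‖f₁ z - f₂ z‖ ∂γ) := by
        rw [Finset.sum_mul, Finset.mul_sum]
        exact Finset.sum_congr rfl fun j _ => by ring

/- Started from different regimes, both laws are compared through the origin, from which the
switching chain couples with probability at least `ε`. -/
lemma abs_integral_switchedLaw_sub_le_gluedDist [DecidableEq ι] {f : E → ι → Z → E}
    {s : ι → ℝ} {ρ ε K : ℝ} (hε : 0 ≤ ε) (hPε : ∀ i j, ε ≤ P i j) (hP1 : ∀ i, ∑ j, P i j = 1)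
    (hv : ∀ i, 0 ≤ v i)
    (hf : ∀ x i, Integrable (f x i) γ) (hfm : ∀ x i, Measurable (f x i))
    (hlip : ∀ i x y, ∫ z, ‖f x i z - f y i z‖ ∂γ ≤ s i * ‖x - y‖)
    (hs : ∀ i, (∑ j, P i j * v j) * s i ≤ ρ * v i)
    (hmom : ∀ i, (∑ j, P i j * v j) * ∫ z, ‖f 0 i z‖ ∂γ ≤ ε / 4) (hερ : 1 - ε / 2 ≤ ρ)
    (hK : 0 ≤ K) {g : E × ι → ℝ} (hgm : Measurable g)
    (hg : ∀ p q, |g p - g q| ≤ K * gluedDist v p q) (p q : E × ι) :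
    |∫ a, g a ∂(switchedLaw γ P p.2 (f p.1 p.2)) - ∫ a, g a ∂(switchedLaw γ P q.2 (f q.1 q.2))| ≤
      ρ * K * gluedDist v p q := by
  obtain ⟨⟨x, i⟩, y, j⟩ := p, q
  have hP (i j : ι) : 0 ≤ P i j := hε.trans (hPε i j)
  have hPv (i : ι) : 0 ≤ ∑ j, P i j * v j := Finset.sum_nonneg fun j _ => mul_nonneg (hP i j) (hv j)
  have hg' (x y : E) (j : ι) : |g (x, j) - g (y, j)| ≤ K * v j * ‖x - y‖ := by
    simpa [mul_assoc] using hg (x, j) (y, j)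
  have hsame (x y : E) (i : ι) : |∫ a, g a ∂(switchedLaw γ P i (f x i)) -
      ∫ a, g a ∂(switchedLaw γ P i (f y i))| ≤ ρ * K * (v i * ‖x - y‖) := calc
    _ ≤ K * ((∑ j, P i j * v j) * ∫ z, ‖f x i z - f y i z‖ ∂γ) :=
      abs_integral_switchedLaw_sub_le (hP i) hg' hgm (hf x i) (hfm x i) (hf y i) (hfm y i)
    _ ≤ K * ((∑ j, P i j * v j) * (s i * ‖x - y‖)) :=
      mul_le_mul_of_nonneg_left (mul_le_mul_of_nonneg_left (hlip i x y) (hPv i)) hK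
    _ = K * ((∑ j, P i j * v j) * s i * ‖x - y‖) := by ring
    _ ≤ K * (ρ * v i * ‖x - y‖) :=
      mul_le_mul_of_nonneg_left (mul_le_mul_of_nonneg_right (hs i) (norm_nonneg _)) hK
    _ = ρ * K * (v i * ‖x - y‖) := by ring
  obtain rfl | hij := eq_or_ne i j
  · simpa using hsame x y i
  have horigin (i : ι) : |∫ a, g a ∂(switchedLaw γ P i (f 0 i)) -
      ∫ a, g a ∂(switchedLaw γ P i fun _ => (0 : E))| ≤ K * (ε / 4) := by
    refine (abs_integral_switchedLaw_sub_le (hP i) hg' hgm (hf 0 i) (hfm 0 i)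
      (integrable_const 0) measurable_const).trans ?_
    simpa only [sub_zero] using mul_le_mul_of_nonneg_left (hmom i) hK
  have hdoeblin := abs_integral_switchedLaw_const_sub_le (γ := γ) hε hPε hP1 hgm
    (fun k l => (le_abs_self _).trans ((hg (0, k) (0, l)).trans
      (mul_le_of_le_one_right hK (gluedDist_zero_zero_le v k l)))) i j
  rw [gluedDist_of_ne v x y hij]
  have hx := abs_le.mp (hsame x 0 i)
  have hy := abs_le.mp (hsame y 0 j)
  rw [sub_zero] at hx hy
  have hi := abs_le.mp (horigin i)
  have hj := abs_le.mp (horigin j)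
  have hd := abs_le.mp hdoeblin
  have hρK := mul_le_mul_of_nonneg_right hερ hK
  rw [abs_le]
  constructor <;> linarith

variable [BorelSpace E] [TopologicalSpace ι] [DiscreteTopology ι] [BorelSpace ι]
  {κ : Kernel (E × ι) (E × ι)} {f : E → ι → Z → E} {s : ι → ℝ}

lemma isWassersteinLipschitz_gluedMetricSpace [DecidableEq ι] {ρ : ℝ≥0} {ε : ℝ}
    (hκ : ∀ x i, κ (x, i) = switchedLaw γ P i (f x i))
    (hε : 0 ≤ ε) (hPε : ∀ i j, ε ≤ P i j) (hP1 : ∀ i, ∑ j, P i j = 1) (hv : ∀ i, 0 < v i)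
    (hf : ∀ x i, Integrable (f x i) γ) (hfm : ∀ x i, Measurable (f x i))
    (hlip : ∀ i x y, ∫ z, ‖f x i z - f y i z‖ ∂γ ≤ s i * ‖x - y‖)
    (hs : ∀ i, (∑ j, P i j * v j) * s i ≤ ρ * v i)
    (hmom : ∀ i, (∑ j, P i j * v j) * ∫ z, ‖f 0 i z‖ ∂γ ≤ ε / 4) (hερ : 1 - ε / 2 ≤ ρ) :
    @IsWassersteinLipschitz _ _ (gluedMetricSpace hv) ρ κ := by
  let : MetricSpace (E × ι) := gluedMetricSpace hv
  have habs {K : ℝ≥0} {g : E × ι → ℝ} (hg : LipschitzWith K g) (p q : E × ι) :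
      |g p - g q| ≤ K * gluedDist v p q := hg.dist_le_mul p q
  refine ⟨fun p => ?_, fun {K g} hg => .of_dist_le_mul fun ⟨x, i⟩ ⟨y, j⟩ => ?_⟩
  · have hdist : LipschitzWith 1 (dist p) := .dist_right p
    rw [← p.eta, hκ]
    refine integrable_switchedLaw (hfm _ _) hdist.continuous.measurable fun j =>
      integrable_comp_of_abs_sub_le (c := v j) (g := fun y => dist p (y, j)) (fun y z => ?_)
        (hdist.continuous.measurable.comp (by fun_prop)) (hf _ _) (hfm _ _)
    simpa using habs hdist (y, j) (z, j)
  · rw [transitionOp, transitionOp, hκ, hκ, Real.dist_eq, NNReal.coe_mul]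
    exact abs_integral_switchedLaw_sub_le_gluedDist hε hPε hP1 (fun i => (hv i).le) hf hfm hlip hs
      hmom hερ K.2 hg.continuous.measurable (habs hg) (x, i) (y, j)

theorem existsUnique_invariant_of_switchedLaw [ProperSpace E] [Nonempty ι] [IsMarkovKernel κ]
    {r : ℝ}
    (hκ : ∀ x i, κ (x, i) = switchedLaw γ P i (f x i))
    (hP : ∀ i j, 0 < P i j) (hP1 : ∀ i, ∑ j, P i j = 1) (hv : ∀ i, 0 < v i)
    (hf : ∀ x i, Integrable (f x i) γ) (hfm : ∀ x i, Measurable (f x i))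
    (hlip : ∀ i x y, ∫ z, ‖f x i z - f y i z‖ ∂γ ≤ s i * ‖x - y‖)
    (hs : ∀ i, (∑ j, P i j * v j) * s i ≤ r * v i) (hr : r < 1) :
    ∃! μ : Measure (E × ι), IsProbabilityMeasure μ ∧ κ.Invariant μ := by
  classical
  obtain ⟨⟨i₀, j₀⟩, hmin⟩ := Finite.exists_min fun ij : ι × ι => P ij.1 ij.2
  obtain ⟨k, hk⟩ := Finite.exists_max fun i => (∑ j, P i j * v j) * ∫ z, ‖f 0 i z‖ ∂γ
  set ε := P i₀ j₀
  set C := (∑ j, P k j * v j) * ∫ z, ‖f 0 k z‖ ∂γ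
  have hε : 0 < ε := hP i₀ j₀
  have hC : 0 ≤ C := mul_nonneg (Finset.sum_nonneg fun j _ => mul_nonneg (hP k j).le (hv j).le)
    (integral_nonneg fun z => norm_nonneg _)
  -- Scaling the weights by `η` keeps `hs` and makes the displacement of the origin small.
  obtain ⟨η, hη, hηC⟩ : ∃ η > 0, η * C ≤ ε / 4 :=
    ⟨ε / 4 / (C + 1), by positivity, by
      rw [div_mul_eq_mul_div, div_le_iff₀ (by positivity)]; gcongr; linarith⟩
  have hηv : ∀ i, 0 < η * v i := fun i => mul_pos hη (hv i)
  have hPη (i : ι) : ∑ j, P i j * (η * v j) = η * ∑ j, P i j * v j := by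
    rw [Finset.mul_sum]
    exact Finset.sum_congr rfl fun j _ => by ring
  let ρ : ℝ≥0 := (max r (1 - ε / 2)).toNNReal
  have hρ : ρ < 1 := Real.toNNReal_lt_one.mpr (max_lt hr (by linarith))
  have hρ' : max r (1 - ε / 2) ≤ ρ := Real.le_coe_toNNReal _
  let : MetricSpace (E × ι) := gluedMetricSpace hηv
  have : ProperSpace (E × ι) := properSpace_gluedMetricSpace hηv
  refine IsWassersteinLipschitz.existsUnique_invariant (ρ := ρ)
    (isWassersteinLipschitz_gluedMetricSpace hκ hε.le (fun i j => hmin (i, j)) hP1 hηv hf hfm hlip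
      (fun i => ?_) (fun i => ?_) ((le_max_right _ _).trans hρ')) hρ
  · calc (∑ j, P i j * (η * v j)) * s i = η * ((∑ j, P i j * v j) * s i) := by rw [hPη]; ring
      _ ≤ η * (ρ * v i) := mul_le_mul_of_nonneg_left ((hs i).trans
        (mul_le_mul_of_nonneg_right ((le_max_left _ _).trans hρ') (hv i).le)) hη.le
      _ = ρ * (η * v i) := by ring
  · rw [hPη, mul_assoc]
    exact (mul_le_mul_of_nonneg_left (hk i) hη.le).trans hηC

end Switching

section MatrixExponential

open Matrix
open scoped Nat Matrix.Norms.Operator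

variable {N : ℕ} {M Q : Matrix (Fin N) (Fin N) ℝ} {g : Fin N → ℝ}

lemma hasSum_matExp (M : Matrix (Fin N) (Fin N) ℝ) :
    HasSum (fun k : ℕ => (k ! : ℝ)⁻¹ • M ^ k) (matExp M) :=
  (NormedSpace.expSeries_summable' M).hasSum

lemma hasSum_matExp_mulVec (M : Matrix (Fin N) (Fin N) ℝ) (g : Fin N → ℝ) :
    HasSum (fun k : ℕ => (k ! : ℝ)⁻¹ • (M ^ k *ᵥ g)) (matExp M *ᵥ g) := by
  have h := (hasSum_matExp M).map (mulVec.addMonoidHomLeft g)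
    (continuous_id.matrix_mulVec continuous_const)
  simpa only [Function.comp_def, mulVec.addMonoidHomLeft, AddMonoidHom.coe_mk, ZeroHom.coe_mk,
    smul_mulVec] using h

lemma matExp_mulVec_of_mulVec_eq_zero (hMg : M *ᵥ g = 0) : matExp M *ᵥ g = g := by
  refine (hasSum_matExp_mulVec M g).unique ?_
  convert hasSum_single (f := fun k : ℕ => (k ! : ℝ)⁻¹ • (M ^ k *ᵥ g)) 0 fun k hk => ?_
  · simp
  · obtain ⟨k, rfl⟩ := Nat.exists_eq_succ_of_ne_zero hk
    rw [pow_succ, ← mulVec_mulVec, hMg, mulVec_zero, smul_zero]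

lemma norm_matExp_mulVec_sub_le (hM : ‖M‖ < 1) (g : Fin N → ℝ) :
    ‖matExp M *ᵥ g - (g + M *ᵥ g)‖ ≤ ‖M‖ * ‖M *ᵥ g‖ / 2 * (1 - ‖M‖)⁻¹ := by
  have hpow (k : ℕ) : ‖M ^ (k + 2) *ᵥ g‖ ≤ ‖M‖ * ‖M *ᵥ g‖ * ‖M‖ ^ k := calc
    ‖M ^ (k + 2) *ᵥ g‖ = ‖M ^ (k + 1) *ᵥ (M *ᵥ g)‖ := by rw [mulVec_mulVec, ← pow_succ]
    _ ≤ ‖M‖ ^ (k + 1) * ‖M *ᵥ g‖ := (linfty_opNorm_mulVec _ _).trans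
      (mul_le_mul_of_nonneg_right (norm_pow_le' M k.succ_pos) (norm_nonneg _))
    _ = ‖M‖ * ‖M *ᵥ g‖ * ‖M‖ ^ k := by ring
  have htail := (hasSum_nat_add_iff' 2).mpr (hasSum_matExp_mulVec M g)
  rw [Finset.sum_range_succ, Finset.sum_range_one] at htail
  simp only [Nat.factorial_zero, Nat.factorial_one, Nat.cast_one, inv_one, one_smul, pow_zero,
    pow_one, one_mulVec] at htail
  refine htail.norm_le_of_bounded
    ((hasSum_geometric_of_lt_one (norm_nonneg M) hM).mul_left (‖M‖ * ‖M *ᵥ g‖ / 2)) fun k => ?_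
  have hfact : ((k + 2)! : ℝ)⁻¹ ≤ 2⁻¹ :=
    inv_anti₀ two_pos (mod_cast Nat.factorial_le (Nat.le_add_left 2 k))
  rw [norm_smul, Real.norm_of_nonneg (by positivity)]
  calc ((k + 2)! : ℝ)⁻¹ * ‖M ^ (k + 2) *ᵥ g‖ ≤ 2⁻¹ * (‖M‖ * ‖M *ᵥ g‖ * ‖M‖ ^ k) :=
        mul_le_mul hfact (hpow k) (norm_nonneg _) (by norm_num)
    _ = ‖M‖ * ‖M *ᵥ g‖ / 2 * ‖M‖ ^ k := by ring

lemma pow_apply_pos_of_chain (hM : ∀ i j, 0 ≤ M i j) (c : ℕ → Fin N) {k : ℕ}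
    (hc : ∀ l < k, 0 < M (c l) (c (l + 1))) : 0 < (M ^ k) (c 0) (c k) := by
  induction k with
  | zero => simp
  | succ k ih =>
    rw [pow_succ, mul_apply]
    exact Finset.sum_pos' (fun l _ => mul_nonneg (pow_apply_nonneg hM k _ _) (hM _ _))
      ⟨c k, Finset.mem_univ _, mul_pos (ih fun l hl => hc l (by lia)) (hc k k.lt_succ_self)⟩

lemma matExp_apply_pos_of_nonneg (hM : ∀ i j, 0 ≤ M i j) (hirr : MatrixIrreducible M)
    (i j : Fin N) : 0 < matExp M i j := by
  obtain ⟨k, hk⟩ : ∃ k, 0 < (M ^ k) i j := by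
    obtain rfl | hij := eq_or_ne i j
    · exact ⟨0, by simp⟩
    · obtain ⟨k, c, rfl, rfl, hc⟩ := hirr i j hij
      exact ⟨k, pow_apply_pos_of_chain hM c hc⟩
  have hsum : HasSum (fun k : ℕ => (k ! : ℝ)⁻¹ * (M ^ k) i j) (matExp M i j) :=
    Pi.hasSum.mp (Pi.hasSum.mp (hasSum_matExp M) i) j
  calc 0 < (k ! : ℝ)⁻¹ * (M ^ k) i j := by positivity
    _ ≤ matExp M i j := le_hasSum hsum k fun l _ =>
      mul_nonneg (by positivity) (pow_apply_nonneg hM l i j)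

lemma matExp_add_smul_one (M : Matrix (Fin N) (Fin N) ℝ) (c : ℝ) :
    matExp (M + c • 1) = Real.exp c • matExp M := by
  have hexp (A : Matrix (Fin N) (Fin N) ℝ) : matExp A = NormedSpace.exp A := by
    rw [NormedSpace.exp_eq_tsum ℝ, matExp]
  rw [hexp, hexp, add_comm, ← Algebra.algebraMap_eq_smul_one,
    exp_add_of_commute _ _ (Algebra.commutes c M), Real.exp_eq_exp_ℝ, Algebra.smul_def]
  exact congrArg (· * NormedSpace.exp M) (NormedSpace.algebraMap_exp_comm c).symm

lemma matExp_apply_pos (hM : ∀ i j, i ≠ j → 0 ≤ M i j) (hirr : MatrixIrreducible M)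
    (i j : Fin N) : 0 < matExp M i j := by
  let c := ∑ k, |M k k|
  have hle (i j : Fin N) : M i j ≤ (M + c • 1) i j ∧ 0 ≤ (M + c • 1) i j := by
    have hc : |M i i| ≤ c := Finset.single_le_sum (f := fun k => |M k k|)
      (fun k _ => abs_nonneg _) (Finset.mem_univ i)
    obtain rfl | hij := eq_or_ne i j
    · simp only [Matrix.add_apply, Matrix.smul_apply, one_apply_eq, smul_eq_mul, mul_one]
      constructor <;> linarith [neg_abs_le (M i i), abs_nonneg (M i i)]
    · simpa [hij] using hM i j hij
  have hirr' : MatrixIrreducible (M + c • 1) := fun i j hij =>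
    let ⟨k, d, h0, hk, hd⟩ := hirr i j hij
    ⟨k, d, h0, hk, fun l hl => (hd l hl).trans_le (hle _ _).1⟩
  have hpos := matExp_apply_pos_of_nonneg (fun i j => (hle i j).2) hirr' i j
  rw [matExp_add_smul_one] at hpos
  exact pos_of_mul_pos_right hpos (Real.exp_pos c).le

lemma diag_nonpos_of_isConservativeQMatrix (hQ : IsConservativeQMatrix Q) (i : Fin N) :
    Q i i ≤ 0 := by
  have hrow := hQ.2 i
  rw [← Finset.add_sum_erase _ _ (Finset.mem_univ i)] at hrow
  linarith [Finset.sum_nonneg fun j (hj : j ∈ Finset.univ.erase i) =>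
    hQ.1 i j (Finset.ne_of_mem_erase hj).symm]

lemma matExp_smul_apply_pos (hQ : IsConservativeQMatrix Q) (hirr : MatrixIrreducible Q) {δ : ℝ}
    (hδ : 0 < δ) (i j : Fin N) : 0 < matExp (δ • Q) i j := by
  refine matExp_apply_pos (fun i j hij => mul_nonneg hδ.le (hQ.1 i j hij)) (fun i j hij => ?_) i j
  obtain ⟨k, c, h0, hk, hc⟩ := hirr i j hij
  exact ⟨k, c, h0, hk, fun l hl => mul_pos hδ (hc l hl)⟩

lemma sum_matExp_smul_apply (hQ : IsConservativeQMatrix Q) (δ : ℝ) (i : Fin N) :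
    ∑ j, matExp (δ • Q) i j = 1 := by
  have hone : (δ • Q) *ᵥ 1 = 0 := by
    ext i
    simp [mulVec, dotProduct, ← Finset.mul_sum, hQ.2]
  simpa [mulVec, dotProduct] using congrFun (matExp_mulVec_of_mulVec_eq_zero hone) i

lemma norm_le_of_isConservativeQMatrix {q₀ : ℝ} (hQ : IsConservativeQMatrix Q) (hq : 0 ≤ q₀)
    (hQq : ∀ i, -Q i i ≤ q₀) : ‖Q‖ ≤ 2 * q₀ := by
  rw [linfty_opNorm_def, ← Real.coe_toNNReal (2 * q₀) (by positivity), NNReal.coe_le_coe]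
  refine Finset.sup_le fun i _ => ?_
  rw [← NNReal.coe_le_coe, Real.coe_toNNReal _ (by positivity)]
  push_cast
  have hsum := hQ.2 i
  rw [← Finset.add_sum_erase _ _ (Finset.mem_univ i)] at hsum ⊢
  have hoff : ∑ j ∈ Finset.univ.erase i, |Q i j| = ∑ j ∈ Finset.univ.erase i, Q i j :=
    Finset.sum_congr rfl fun j hj => abs_of_nonneg (hQ.1 i j (Finset.ne_of_mem_erase hj).symm)
  simp only [Real.norm_eq_abs]
  rw [hoff, abs_of_nonpos (diag_nonpos_of_isConservativeQMatrix hQ i)]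
  linarith [hQq i]

end MatrixExponential

section PrincipalEigenvector

open Matrix

variable {N : ℕ} {Q : Matrix (Fin N) (Fin N) ℝ} {π β : Fin N → ℝ} {lam : ℝ}

lemma Dform_smul (c : ℝ) (f : Fin N → ℝ) : Dform π Q β (c • f) = c ^ 2 * Dform π Q β f := by
  simp only [Dform, Pi.smul_apply, smul_eq_mul, ← mul_sub, mul_pow, mul_left_comm _ (c ^ 2),
    ← Finset.mul_sum]

lemma Dform_eq_neg_sum_sub (hQ : ∀ i, ∑ j, Q i j = 0) (hrev : ∀ i j, π i * Q i j = π j * Q j i)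
    (f : Fin N → ℝ) :
    Dform π Q β f = -∑ i, π i * f i * (Q *ᵥ f) i - ∑ i, π i * β i * f i ^ 2 := by
  have hrow : ∑ i, ∑ j, π i * Q i j * f i ^ 2 = 0 :=
    Finset.sum_eq_zero fun i _ => by rw [← Finset.sum_mul, ← Finset.mul_sum, hQ]; ring
  have hcol : ∑ i, ∑ j, π i * Q i j * f j ^ 2 = 0 := by
    rw [Finset.sum_comm, ← hrow]
    exact Finset.sum_congr rfl fun i _ => Finset.sum_congr rfl fun j _ => by rw [hrev]
  have hexpand : ∑ i, ∑ j, π i * Q i j * (f j - f i) ^ 2 =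
      ∑ i, ∑ j, π i * Q i j * f j ^ 2 + ∑ i, ∑ j, π i * Q i j * f i ^ 2 -
        2 * ∑ i, π i * f i * (Q *ᵥ f) i := by
    simp only [mulVec, dotProduct, Finset.mul_sum, ← Finset.sum_add_distrib,
      ← Finset.sum_sub_distrib]
    exact Finset.sum_congr rfl fun i _ => Finset.sum_congr rfl fun j _ => by ring
  rw [Dform, hexpand, hrow, hcol]
  ring

lemma mul_sum_le_Dform (hπ : ∀ i, 0 < π i)
    (hinf : ∀ f : Fin N → ℝ, ∑ i, π i * f i ^ 2 = 1 → lam ≤ Dform π Q β f) (f : Fin N → ℝ) :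
    lam * ∑ i, π i * f i ^ 2 ≤ Dform π Q β f := by
  have hterm (i : Fin N) : 0 ≤ π i * f i ^ 2 := mul_nonneg (hπ i).le (sq_nonneg _)
  obtain hc | hc := (Finset.sum_nonneg fun i _ => hterm i : 0 ≤ ∑ i, π i * f i ^ 2).eq_or_lt'
  · have hf : f = 0 := funext fun i => by
      simpa [(hπ i).ne'] using
        (Finset.sum_eq_zero_iff_of_nonneg fun i _ => hterm i).mp hc i (Finset.mem_univ i)
    rw [hf]
    simp [Dform]
  · set c := ∑ i, π i * f i ^ 2 with hcdef
    have hunit : ∑ i, π i * ((√c)⁻¹ • f) i ^ 2 = 1 := by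
      simp only [Pi.smul_apply, smul_eq_mul, mul_pow, mul_left_comm (π _), ← Finset.mul_sum]
      rw [inv_pow, Real.sq_sqrt hc.le, ← hcdef, inv_mul_cancel₀ hc.ne']
    have h := hinf _ hunit
    rwa [Dform_smul, inv_pow, Real.sq_sqrt hc.le, le_inv_mul_iff₀' hc] at h

/- The minimizer lies in the kernel of the positive semidefinite matrix of the quadratic form
`f ↦ D(f) - lam * ∑ π f²`. -/
lemma mulVec_eq_of_Dform_eq {ξ : Fin N → ℝ} (hQ : ∀ i, ∑ j, Q i j = 0)
    (hrev : ∀ i j, π i * Q i j = π j * Q j i) (hπ : ∀ i, 0 < π i)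
    (hinf : ∀ f : Fin N → ℝ, ∑ i, π i * f i ^ 2 = 1 → lam ≤ Dform π Q β f)
    (hξ : ∑ i, π i * ξ i ^ 2 = 1) (hmin : Dform π Q β ξ = lam) (i : Fin N) :
    (Q *ᵥ ξ) i = -(lam + β i) * ξ i := by
  let A := -(diagonal π * Q + diagonal fun i => π i * (lam + β i))
  have hAmul (f : Fin N → ℝ) (i : Fin N) :
      (A *ᵥ f) i = -(π i * ((Q *ᵥ f) i + (lam + β i) * f i)) := by
    simp only [A, neg_mulVec, add_mulVec, Pi.neg_apply, Pi.add_apply, ← mulVec_mulVec,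
      mulVec_diagonal]
    ring
  have hform (f : Fin N → ℝ) : f ⬝ᵥ A *ᵥ f = Dform π Q β f - lam * ∑ i, π i * f i ^ 2 := by
    rw [Dform_eq_neg_sum_sub hQ hrev, dotProduct, Finset.mul_sum, ← Finset.sum_neg_distrib,
      ← Finset.sum_sub_distrib, ← Finset.sum_sub_distrib]
    exact Finset.sum_congr rfl fun i _ => by rw [hAmul]; ring
  have hA : A.PosSemidef := by
    refine .of_dotProduct_mulVec_nonneg (.ext fun i j => ?_) fun f => ?_
    · obtain rfl | hij := eq_or_ne i j
      · rfl
      · simp [A, hrev i j, hij, hij.symm]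
    · rw [star_trivial, hform, sub_nonneg]
      exact mul_sum_le_Dform hπ hinf f
  have hAξ : A *ᵥ ξ = 0 := by
    rw [← hA.dotProduct_mulVec_zero_iff, star_trivial, hform, hξ, hmin]
    ring
  have hi : π i * ((Q *ᵥ ξ) i + (lam + β i) * ξ i) = 0 := by
    rw [← neg_eq_zero, ← hAmul, hAξ, Pi.zero_apply]
  linarith [(mul_eq_zero_iff_left (hπ i).ne').mp hi]

end PrincipalEigenvector

section StepContraction

open Matrix
open scoped Matrix.Norms.Operator

variable {N : ℕ} {Q : Matrix (Fin N) (Fin N) ℝ} {β ξ : Fin N → ℝ} {lam q₀ δ : ℝ}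

lemma add_le_neg_diag_of_mulVec_eq (hQ : IsConservativeQMatrix Q) (hξ : ∀ i, 0 < ξ i)
    (heig : ∀ i, (Q *ᵥ ξ) i = -(lam + β i) * ξ i) (i : Fin N) : lam + β i ≤ -Q i i := by
  have hdiag : Q i i * ξ i ≤ (Q *ᵥ ξ) i := by
    rw [mulVec, dotProduct, ← Finset.add_sum_erase _ _ (Finset.mem_univ i), le_add_iff_nonneg_right]
    exact Finset.sum_nonneg fun j hj =>
      mul_nonneg (hQ.1 i j (Finset.ne_of_mem_erase hj).symm) (hξ j).le
  rw [heig] at hdiag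
  linarith [le_of_mul_le_mul_right hdiag (hξ i)]

lemma exists_le_neg_of_mulVec_eq [Nonempty (Fin N)] (hQ : IsConservativeQMatrix Q)
    (hξ : ∀ i, 0 < ξ i) (heig : ∀ i, (Q *ᵥ ξ) i = -(lam + β i) * ξ i) : ∃ i, lam ≤ -β i := by
  obtain ⟨i, hi⟩ := Finite.exists_min ξ
  have hnonneg : 0 ≤ (Q *ᵥ ξ) i := calc
    0 ≤ ∑ j, Q i j * (ξ j - ξ i) := Finset.sum_nonneg fun j _ => by
      obtain rfl | hij := eq_or_ne i j
      · simp
      · exact mul_nonneg (hQ.1 i j hij) (sub_nonneg.mpr (hi j))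
    _ = (Q *ᵥ ξ) i := by
      simp only [mul_sub, Finset.sum_sub_distrib, ← Finset.sum_mul, hQ.2, zero_mul, sub_zero]
      rfl
  rw [heig] at hnonneg
  exact ⟨i, by linarith [nonneg_of_mul_nonneg_left hnonneg (hξ i)]⟩

lemma matExp_smul_mulVec_le {c M : ℝ} (hQ : IsConservativeQMatrix Q) (hq₀ : 0 ≤ q₀)
    (hQq : ∀ i, -Q i i ≤ q₀) (hδ : 0 ≤ δ) (hδq : 12 * (δ * q₀) ≤ 1) (hξ : ∀ i, 0 < ξ i)
    (hM : ∀ i j, ξ i ≤ M * ξ j) (hc : 0 ≤ c) (hQξ : ∀ i, |(Q *ᵥ ξ) i| ≤ c * ξ i) (i : Fin N) :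
    (matExp (δ • Q) *ᵥ ξ) i ≤ ξ i + δ * (Q *ᵥ ξ) i + 6 / 5 * δ ^ 2 * q₀ * c * M * ξ i := by
  have hMξ : 0 ≤ M * ξ i := (hξ i).le.trans (hM i i)
  have hnormQ : ‖δ • Q‖ ≤ 2 * (δ * q₀) := by
    rw [norm_smul, Real.norm_of_nonneg hδ]
    linarith [mul_le_mul_of_nonneg_left (norm_le_of_isConservativeQMatrix hQ hq₀ hQq) hδ]
  have hnormQξ : ‖(δ • Q) *ᵥ ξ‖ ≤ δ * (c * (M * ξ i)) := by
    rw [smul_mulVec, norm_smul, Real.norm_of_nonneg hδ]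
    refine mul_le_mul_of_nonneg_left ?_ hδ
    exact (pi_norm_le_iff_of_nonneg (by positivity)).mpr fun j =>
      (hQξ j).trans (mul_le_mul_of_nonneg_left (hM j i) hc)
  have hinv : (1 - ‖δ • Q‖)⁻¹ ≤ 6 / 5 := inv_le_of_inv_le₀ (by norm_num) (by norm_num; linarith)
  have hremainder := calc
    (matExp (δ • Q) *ᵥ ξ - (ξ + (δ • Q) *ᵥ ξ)) i
      ≤ ‖matExp (δ • Q) *ᵥ ξ - (ξ + (δ • Q) *ᵥ ξ)‖ :=
      (Real.le_norm_self _).trans (norm_le_pi_norm _ i)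
    _ ≤ ‖δ • Q‖ * ‖(δ • Q) *ᵥ ξ‖ / 2 * (1 - ‖δ • Q‖)⁻¹ :=
      norm_matExp_mulVec_sub_le (by linarith) ξ
    _ ≤ 2 * (δ * q₀) * (δ * (c * (M * ξ i))) / 2 * (6 / 5) := by
      gcongr
      exact inv_nonneg.mpr (by linarith)
    _ = 6 / 5 * δ ^ 2 * q₀ * c * M * ξ i := by ring
  simp only [smul_mulVec, Pi.sub_apply, Pi.add_apply, Pi.smul_apply, smul_eq_mul] at hremainder
  linarith

/- Up to second order in `δ`, the product is `1 - δ * lam`. -/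
lemma mul_growth_lt_one {b L R : ℝ} (hδ : 0 < δ) (hlam : 0 < lam) (hlamL : lam ≤ 2 * L)
    (hbL : -(2 * L) ≤ b) (hδb : 12 * (δ * b) ≤ 1) (hδL : 40 * (δ * L ^ 2) ≤ lam)
    (hR : 0 ≤ R) (hR' : 5 * R ≤ δ * lam) :
    0 ≤ 1 + δ * b + δ ^ 2 * L ^ 2 ∧
      (1 + δ * b + δ ^ 2 * L ^ 2) * (1 - δ * (lam + b) + R) < 1 := by
  have hL : 0 < L := by linarith
  have hδL' : 20 * (δ * L) ≤ 1 := by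
    refine le_of_mul_le_mul_right ?_ hL
    linarith
  have hdrift : δ ^ 2 * L ^ 2 ≤ 1 / 400 := by
    linarith [mul_self_le_mul_self (by positivity) hδL']
  have hlower : 0 ≤ 1 + δ * b + δ ^ 2 * L ^ 2 := by
    linarith [mul_le_mul_of_nonneg_left hbL hδ.le, mul_nonneg (sq_nonneg δ) (sq_nonneg L)]
  have hupper : (1 + δ * b + δ ^ 2 * L ^ 2) * R ≤ 6 / 5 * (δ * lam / 5) :=
    mul_le_mul (by linarith) (by linarith) hR (by norm_num)
  have hquadratic : -(δ * (b * (lam + b))) ≤ lam / 40 := calc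
    _ ≤ δ * (lam * (lam / 4)) := by
      linarith [mul_nonneg hδ.le (sq_nonneg (b + lam / 2))]
    _ ≤ δ * (lam * (2 * L / 4)) := by gcongr
    _ = lam * (20 * (δ * L)) / 40 := by ring
    _ ≤ lam * 1 / 40 := by gcongr
    _ = lam / 40 := by ring
  have hcubic : -(δ ^ 2 * L ^ 2 * (lam + b)) ≤ lam / 400 := calc
    _ = δ ^ 2 * L ^ 2 * -(lam + b) := by ring
    _ ≤ δ ^ 2 * L ^ 2 * (2 * L) := by gcongr; linarith
    _ = 20 * (δ * L) * (δ * L ^ 2) / 10 := by ring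
    _ ≤ 1 * (lam / 40) / 10 := by gcongr; linarith
    _ = lam / 400 := by ring
  refine ⟨hlower, ?_⟩
  calc (1 + δ * b + δ ^ 2 * L ^ 2) * (1 - δ * (lam + b) + R)
      = 1 - δ * lam + δ * (δ * L ^ 2 + -(δ * (b * (lam + b))) + -(δ ^ 2 * L ^ 2 * (lam + b))) +
          (1 + δ * b + δ ^ 2 * L ^ 2) * R := by ring
    _ ≤ 1 - δ * lam + δ * (lam / 40 + lam / 40 + lam / 400) + 6 / 5 * (δ * lam / 5) := by
      gcongr; linarith
    _ < 1 := by linarith [mul_pos hδ hlam]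

lemma mul_matExp_mulVec_lt {L β₀ M : ℝ} (hQ : IsConservativeQMatrix Q)
    (hξ : ∀ i, 0 < ξ i) (heig : ∀ i, (Q *ᵥ ξ) i = -(lam + β i) * ξ i) (hlam : 0 < lam)
    (hβL : ∀ i, -(2 * L) ≤ β i) (hQq : ∀ i, -Q i i ≤ q₀) (hβ₀ : ∀ i, |β i| ≤ β₀)
    (hM : ∀ i j, ξ i ≤ M * ξ j) (hδ : 0 < δ)
    (hstep : δ * (12 * q₀ * β₀ * M + 40 * L ^ 2) ≤ lam) (i : Fin N) :
    0 ≤ 1 + δ * β i + δ ^ 2 * L ^ 2 ∧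
      (1 + δ * β i + δ ^ 2 * L ^ 2) * (matExp (δ • Q) *ᵥ ξ) i < ξ i := by
  have : Nonempty (Fin N) := ⟨i⟩
  obtain ⟨i₀, hi₀⟩ := exists_le_neg_of_mulVec_eq hQ hξ heig
  have hlamβ : lam ≤ β₀ := hi₀.trans ((neg_le_abs _).trans (hβ₀ i₀))
  have hβpos : 0 < β₀ := hlam.trans_le hlamβ
  have hβq (j : Fin N) : β j ≤ q₀ := by
    linarith [add_le_neg_diag_of_mulVec_eq hQ hξ heig j, hQq j]
  have hM1 : 1 ≤ M := le_of_mul_le_mul_right (by simpa using hM i i) (hξ i)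
  have hq₀ : 0 ≤ q₀ := (neg_nonneg.mpr (diag_nonpos_of_isConservativeQMatrix hQ i)).trans (hQq i)
  have hδL : 40 * (δ * L ^ 2) ≤ lam := by
    have : 0 ≤ δ * (12 * q₀ * β₀ * M) := by positivity
    linarith
  have hδqβ : 12 * (δ * q₀ * β₀ * M) ≤ lam := by
    linarith [mul_nonneg hδ.le (sq_nonneg L)]
  have hδq : 12 * (δ * q₀) ≤ 1 := by
    refine le_of_mul_le_mul_right ?_ hβpos
    linarith [le_mul_of_one_le_right (by positivity : 0 ≤ δ * q₀ * β₀) hM1]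
  have hQξ (j : Fin N) : |(Q *ᵥ ξ) j| ≤ 2 * β₀ * ξ j := by
    rw [heig, abs_mul, abs_neg, abs_of_pos (hξ j)]
    refine mul_le_mul_of_nonneg_right ((abs_add_le _ _).trans ?_) (hξ j).le
    rw [abs_of_pos hlam]
    linarith [hβ₀ j]
  have hexp := matExp_smul_mulVec_le hQ hq₀ hQq hδ.le hδq hξ hM (by positivity) hQξ i
  obtain ⟨hnonneg, hlt⟩ := mul_growth_lt_one (b := β i) (R := 12 / 5 * δ ^ 2 * q₀ * β₀ * M) hδ hlam
    (by linarith [hβL i₀]) (hβL i) (by linarith [mul_le_mul_of_nonneg_left (hβq i) hδ.le]) hδL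
    (by positivity) (by linarith [mul_le_mul_of_nonneg_left hδqβ hδ.le])
  refine ⟨hnonneg, ?_⟩
  calc (1 + δ * β i + δ ^ 2 * L ^ 2) * (matExp (δ • Q) *ᵥ ξ) i
      ≤ (1 + δ * β i + δ ^ 2 * L ^ 2) *
          ((1 - δ * (lam + β i) + 12 / 5 * δ ^ 2 * q₀ * β₀ * M) * ξ i) :=
        mul_le_mul_of_nonneg_left (hexp.trans_eq (by rw [heig]; ring)) hnonneg
    _ < ξ i := by rw [← mul_assoc]; exact mul_lt_of_lt_one_left (hξ i) hlt

lemma exists_sum_mul_sqrt_le {ι : Type*} [Fintype ι] [Nonempty ι] {P : Matrix ι ι ℝ}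
    {a ξ : ι → ℝ} (hP : ∀ i j, 0 ≤ P i j) (hP1 : ∀ i, ∑ j, P i j = 1) (hξ : ∀ i, 0 < ξ i)
    (ha : ∀ i, 0 ≤ a i) (h : ∀ i, a i * (P *ᵥ ξ) i < ξ i) :
    ∃ r < 1, ∀ i, (∑ j, P i j * √(ξ j)) * √(a i) ≤ r * √(ξ i) := by
  obtain ⟨k, hk⟩ := Finite.exists_max fun i => √(a i * (P *ᵥ ξ) i) / √(ξ i)
  refine ⟨_, (div_lt_one (Real.sqrt_pos.mpr (hξ k))).mpr (Real.sqrt_lt_sqrt ?_ (h k)), fun i => ?_⟩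
  · exact mul_nonneg (ha k) (Finset.sum_nonneg fun j _ => mul_nonneg (hP k j) (hξ j).le)
  · have hjensen : ∑ j, P i j * √(ξ j) ≤ √((P *ᵥ ξ) i) :=
      Real.strictConcaveOn_sqrt.concaveOn.le_map_sum (fun j _ => hP i j) (hP1 i)
        fun j _ => (hξ j).le
    calc (∑ j, P i j * √(ξ j)) * √(a i) ≤ √((P *ᵥ ξ) i) * √(a i) :=
          mul_le_mul_of_nonneg_right hjensen (Real.sqrt_nonneg _)
      _ = √(a i * (P *ᵥ ξ) i) := by rw [mul_comm, ← Real.sqrt_mul (ha i)]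
      _ ≤ _ * √(ξ i) := (div_le_iff₀ (Real.sqrt_pos.mpr (hξ i))).mp (hk i)

end StepContraction

section GaussianMoments

open Matrix

variable {n m : ℕ}

instance : IsProbabilityMeasure (stdGaussianPi m) := by
  unfold stdGaussianPi
  infer_instance

lemma memLp_eval_stdGaussianPi (j : Fin m) : MemLp (fun z => z j) 2 (stdGaussianPi m) :=
  (memLp_id_gaussianReal 2).comp_measurePreserving
    (measurePreserving_eval (fun _ : Fin m => gaussianReal 0 1) j)

lemma memLp_dotProduct_stdGaussianPi (c : Fin m → ℝ) :
    MemLp (fun z => c ⬝ᵥ z) 2 (stdGaussianPi m) :=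
  memLp_finsetSum _ fun j _ => (memLp_eval_stdGaussianPi j).const_mul (c j)

lemma integral_dotProduct_stdGaussianPi (c : Fin m → ℝ) :
    ∫ z, c ⬝ᵥ z ∂(stdGaussianPi m) = 0 := by
  have heval (j : Fin m) : ∫ z, z j ∂(stdGaussianPi m) = 0 :=
    (integral_comp_eval (μ := fun _ => gaussianReal 0 1) (f := fun x : ℝ => x)
      aestronglyMeasurable_id).trans integral_id_gaussianReal
  simp only [dotProduct]
  rw [integral_finsetSum _ fun j _ =>
    ((memLp_eval_stdGaussianPi j).integrable one_le_two).const_mul (c j)]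
  simp [integral_const_mul, heval]

lemma variance_dotProduct_stdGaussianPi (c : Fin m → ℝ) :
    Var[fun z => c ⬝ᵥ z; stdGaussianPi m] = ∑ j, c j ^ 2 := by
  have hsum := variance_sum_pi (μ := fun _ : Fin m => gaussianReal 0 1)
    (X := fun j x => c j * x) fun j => (memLp_id_gaussianReal 2).const_mul (c j)
  have hcoe : (∑ j, fun z : Fin m → ℝ => c j * z j) = fun z => c ⬝ᵥ z := by
    ext z
    simp [dotProduct]
  rw [hcoe] at hsum
  refine hsum.trans (Finset.sum_congr rfl fun j _ => ?_)
  rw [variance_const_mul, variance_fun_id_gaussianReal, NNReal.coe_one, mul_one]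

lemma integral_sq_add_mul_dotProduct_stdGaussianPi (u s : ℝ) (c : Fin m → ℝ) :
    ∫ z, (u + s * (c ⬝ᵥ z)) ^ 2 ∂(stdGaussianPi m) = u ^ 2 + s ^ 2 * ∑ j, c j ^ 2 := by
  have hlin := (memLp_dotProduct_stdGaussianPi c).const_mul s
  have hvar := variance_eq_sub ((memLp_const u).add hlin)
  have hmean : ∫ z, (u + s * (c ⬝ᵥ z)) ∂(stdGaussianPi m) = u := by
    rw [integral_add (integrable_const u) (hlin.integrable one_le_two), integral_const_mul,
      integral_dotProduct_stdGaussianPi]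
    simp
  rw [eq_sub_iff_add_eq] at hvar
  refine hvar.symm.trans ?_
  simp only [Pi.add_apply, hmean, Pi.add_def]
  rw [variance_const_add hlin.aestronglyMeasurable, variance_const_mul,
    variance_dotProduct_stdGaussianPi, add_comm]

lemma memLp_add_smul_mulVec_stdGaussianPi (u : EuclideanSpace ℝ (Fin n)) (s : ℝ)
    (A : Matrix (Fin n) (Fin m) ℝ) :
    MemLp (fun z => u + s • WithLp.toLp 2 (A *ᵥ z)) 2 (stdGaussianPi m) := by
  have hnoise : MemLp (fun z => WithLp.toLp 2 (A *ᵥ z)) 2 (stdGaussianPi m) :=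
    .of_eval_piLp fun i => memLp_dotProduct_stdGaussianPi (A i)
  exact (memLp_const u).add (hnoise.const_smul s)

lemma integral_norm_sq_add_smul_mulVec_stdGaussianPi (u : EuclideanSpace ℝ (Fin n)) (s : ℝ)
    (A : Matrix (Fin n) (Fin m) ℝ) :
    ∫ z, ‖u + s • WithLp.toLp 2 (A *ᵥ z)‖ ^ 2 ∂(stdGaussianPi m) =
      ‖u‖ ^ 2 + s ^ 2 * hsNorm A ^ 2 := by
  have hcoord (i : Fin n) : MemLp (fun z => u i + s * (A i ⬝ᵥ z)) 2 (stdGaussianPi m) :=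
    (memLp_const (u i)).add ((memLp_dotProduct_stdGaussianPi (A i)).const_mul s)
  calc ∫ z, ‖u + s • WithLp.toLp 2 (A *ᵥ z)‖ ^ 2 ∂(stdGaussianPi m)
      = ∫ z, ∑ i, (u i + s * (A i ⬝ᵥ z)) ^ 2 ∂(stdGaussianPi m) := by
        simp only [EuclideanSpace.real_norm_sq_eq]
        rfl
    _ = ∑ i, (u i ^ 2 + s ^ 2 * ∑ j, A i j ^ 2) := by
        rw [integral_finsetSum _ fun i _ => (hcoord i).integrable_sq]
        exact Finset.sum_congr rfl fun i _ =>
          integral_sq_add_mul_dotProduct_stdGaussianPi (u i) s (A i)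
    _ = ‖u‖ ^ 2 + s ^ 2 * hsNorm A ^ 2 := by
        rw [EuclideanSpace.real_norm_sq_eq, hsNorm, Real.sq_sqrt (by positivity), Finset.mul_sum,
          Finset.sum_add_distrib]

lemma integral_norm_le_sqrt_integral_norm_sq {Ω E : Type*} [MeasurableSpace Ω]
    [NormedAddCommGroup E] {μ : Measure Ω} [IsProbabilityMeasure μ] {f : Ω → E}
    (hf : MemLp f 2 μ) : ∫ ω, ‖f ω‖ ∂μ ≤ √(∫ ω, ‖f ω‖ ^ 2 ∂μ) := by
  have hvar := variance_nonneg (fun ω => ‖f ω‖) μ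
  rw [variance_eq_sub hf.norm, sub_nonneg] at hvar
  exact Real.le_sqrt_of_sq_le hvar

end GaussianMoments

section EulerStep

open Matrix

variable {n m : ℕ} {ι : Type*} {b : EuclideanSpace ℝ (Fin n) → ι → EuclideanSpace ℝ (Fin n)}
  {σ : EuclideanSpace ℝ (Fin n) → ι → Matrix (Fin n) (Fin m) ℝ} {L : ℝ} {δ : ℝ} {i : ι}

/-- The position after one Euler–Maruyama step of size `δ` from `x` in regime `i`, as a function of
the Gaussian noise `z`. -/
noncomputable def emStep (b : EuclideanSpace ℝ (Fin n) → ι → EuclideanSpace ℝ (Fin n))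
    (σ : EuclideanSpace ℝ (Fin n) → ι → Matrix (Fin n) (Fin m) ℝ) (δ : ℝ)
    (x : EuclideanSpace ℝ (Fin n)) (i : ι) (z : Fin m → ℝ) : EuclideanSpace ℝ (Fin n) :=
  x + δ • b x i + √δ • WithLp.toLp 2 (σ x i *ᵥ z)

lemma abs_apply_le_hsNorm (A : Matrix (Fin n) (Fin m) ℝ) (k : Fin n) (l : Fin m) :
    |A k l| ≤ hsNorm A :=
  Real.abs_le_sqrt <| calc
    A k l ^ 2 ≤ ∑ l, A k l ^ 2 :=
      Finset.single_le_sum (f := fun l => A k l ^ 2) (fun _ _ => sq_nonneg _) (Finset.mem_univ l)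
    _ ≤ ∑ k, ∑ l, A k l ^ 2 :=
      Finset.single_le_sum (f := fun k => ∑ l, A k l ^ 2) (fun _ _ => by positivity)
        (Finset.mem_univ k)

lemma norm_drift_sub_le
    (hLip : ∀ x y, ‖b x i - b y i‖ + hsNorm (σ x i - σ y i) ≤ L * ‖x - y‖)
    (x y : EuclideanSpace ℝ (Fin n)) : ‖b x i - b y i‖ ≤ L * ‖x - y‖ := by
  have hσ : 0 ≤ hsNorm (σ x i - σ y i) := Real.sqrt_nonneg _
  linarith [hLip x y]

lemma continuous_emStep
    (hLip : ∀ x y, ‖b x i - b y i‖ + hsNorm (σ x i - σ y i) ≤ L * ‖x - y‖) :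
    Continuous fun p : EuclideanSpace ℝ (Fin n) × (Fin m → ℝ) => emStep b σ δ p.1 i p.2 := by
  have hb : Continuous fun x => b x i :=
    (LipschitzWith.of_dist_le' (K := L) fun x y => by
      simpa only [dist_eq_norm] using norm_drift_sub_le hLip x y).continuous
  have hσ : Continuous fun x => σ x i := continuous_matrix fun k l =>
    (LipschitzWith.of_dist_le' (K := L) fun x y => by
      rw [Real.dist_eq, dist_eq_norm, ← Matrix.sub_apply]
      linarith [abs_apply_le_hsNorm (σ x i - σ y i) k l, hLip x y,
        norm_nonneg (b x i - b y i)]).continuous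
  have hnoise : Continuous fun p : EuclideanSpace ℝ (Fin n) × (Fin m → ℝ) =>
      WithLp.toLp 2 (σ p.1 i *ᵥ p.2) :=
    (PiLp.continuous_toLp 2 _).comp ((hσ.comp continuous_fst).matrix_mulVec continuous_snd)
  exact (continuous_fst.add ((hb.comp continuous_fst).const_smul δ)).add (hnoise.const_smul √δ)

lemma measurable_emStep (x : EuclideanSpace ℝ (Fin n)) : Measurable (emStep b σ δ x i) := by
  have hnoise : Continuous fun z : Fin m → ℝ => WithLp.toLp 2 (σ x i *ᵥ z) :=
    (PiLp.continuous_toLp 2 _).comp (continuous_const.matrix_mulVec continuous_id)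
  exact (continuous_const.add (hnoise.const_smul √δ)).measurable

lemma integrable_emStep (x : EuclideanSpace ℝ (Fin n)) :
    Integrable (emStep b σ δ x i) (stdGaussianPi m) :=
  (memLp_add_smul_mulVec_stdGaussianPi _ _ _).integrable one_le_two

lemma integral_norm_emStep_sub_le {β : ℝ}
    (hLip : ∀ x y, ‖b x i - b y i‖ + hsNorm (σ x i - σ y i) ≤ L * ‖x - y‖)
    (hmono : ∀ x y, 2 * inner ℝ (x - y) (b x i - b y i) + hsNorm (σ x i - σ y i) ^ 2 ≤
      β * ‖x - y‖ ^ 2)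
    (hδ : 0 ≤ δ) (x y : EuclideanSpace ℝ (Fin n)) :
    ∫ z, ‖emStep b σ δ x i z - emStep b σ δ y i z‖ ∂(stdGaussianPi m) ≤
      √(1 + δ * β + δ ^ 2 * L ^ 2) * ‖x - y‖ := by
  have hdiff (z : Fin m → ℝ) : emStep b σ δ x i z - emStep b σ δ y i z =
      (x - y + δ • (b x i - b y i)) + √δ • WithLp.toLp 2 ((σ x i - σ y i) *ᵥ z) := by
    rw [emStep, emStep, sub_mulVec, WithLp.toLp_sub]
    module
  simp only [hdiff]
  refine (integral_norm_le_sqrt_integral_norm_sq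
    (memLp_add_smul_mulVec_stdGaussianPi _ _ _)).trans ?_
  have hsqrt : √(1 + δ * β + δ ^ 2 * L ^ 2) * ‖x - y‖ =
      √((1 + δ * β + δ ^ 2 * L ^ 2) * ‖x - y‖ ^ 2) := by
    rw [Real.sqrt_mul' _ (sq_nonneg _), Real.sqrt_sq (norm_nonneg _)]
  rw [integral_norm_sq_add_smul_mulVec_stdGaussianPi, Real.sq_sqrt hδ, hsqrt]
  refine Real.sqrt_le_sqrt ?_
  rw [norm_add_sq_real, norm_smul, inner_smul_right, Real.norm_of_nonneg hδ]
  have hdrift := mul_le_mul_of_nonneg_left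
    (pow_le_pow_left₀ (norm_nonneg _) (norm_drift_sub_le hLip x y) 2) (sq_nonneg δ)
  linarith [mul_le_mul_of_nonneg_left (hmono x y) hδ]

lemma neg_two_mul_le_of_lipschitz [Nontrivial (EuclideanSpace ℝ (Fin n))] {β : ℝ}
    (hLip : ∀ x y, ‖b x i - b y i‖ + hsNorm (σ x i - σ y i) ≤ L * ‖x - y‖)
    (hmono : ∀ x y, 2 * inner ℝ (x - y) (b x i - b y i) + hsNorm (σ x i - σ y i) ^ 2 ≤
      β * ‖x - y‖ ^ 2) : -(2 * L) ≤ β := by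
  obtain ⟨x, hx⟩ := exists_norm_eq (EuclideanSpace ℝ (Fin n)) zero_le_one
  have hxmono := hmono x 0
  have hxdrift := norm_drift_sub_le hLip x 0
  have hinner := neg_le_of_abs_le (abs_real_inner_le_norm (x - 0) (b x i - b 0 i))
  rw [sub_zero, hx] at hxmono hxdrift hinner
  linarith [sq_nonneg (hsNorm (σ x i - σ 0 i))]

end EulerStep

section EulerKernel

variable {n m N : ℕ} {Q : Matrix (Fin N) (Fin N) ℝ}
  {b : EuclideanSpace ℝ (Fin n) → Fin N → EuclideanSpace ℝ (Fin n)}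
  {σ : EuclideanSpace ℝ (Fin n) → Fin N → Matrix (Fin n) (Fin m) ℝ} {L δ : ℝ}

lemma EMKernel_eq_switchedLaw (x : EuclideanSpace ℝ (Fin n)) (i : Fin N) :
    EMKernel Q b σ δ (x, i) =
      switchedLaw (stdGaussianPi m) (matExp (δ • Q)) i (emStep b σ δ x i) := by
  have hstep : Measurable fun p : (Fin m → ℝ) × Fin N => (emStep b σ δ x i p.1, p.2) :=
    ((measurable_emStep x).comp measurable_fst).prodMk measurable_snd
  have hjump (j : Fin N) : Measurable fun z : Fin m → ℝ => (emStep b σ δ x i z, j) :=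
    (measurable_emStep x).prodMk measurable_const
  ext A hA
  change Measure.map (fun p : (Fin m → ℝ) × Fin N => (emStep b σ δ x i p.1, p.2)) _ A = _
  rw [Measure.map_apply hstep hA, Measure.prod_apply_symm (hstep hA), rowMeasure, switchedLaw,
    lintegral_finsetSum_measure, Measure.finsetSum_apply]
  refine Finset.sum_congr rfl fun j _ => ?_
  rw [lintegral_smul_measure, lintegral_dirac, Measure.smul_apply, Measure.map_apply (hjump j) hA]
  rfl

lemma measurable_EMKernel
    (hLip : ∀ i x y, ‖b x i - b y i‖ + hsNorm (σ x i - σ y i) ≤ L * ‖x - y‖) :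
    Measurable (EMKernel Q b σ δ) := by
  have heq : EMKernel Q b σ δ = fun p => switchedLaw (stdGaussianPi m) (matExp (δ • Q)) p.2
      (emStep b σ δ p.1 p.2) := funext fun p => EMKernel_eq_switchedLaw p.1 p.2
  rw [heq]
  exact measurable_switchedLaw fun i => (continuous_emStep (hLip i)).measurable

lemma isInvariantMeasure_iff_invariant {α : Type*} [MeasurableSpace α] {κ : Kernel α α}
    {μ : Measure α} : IsInvariantMeasure κ μ ↔ κ.Invariant μ := by
  rw [IsInvariantMeasure, Kernel.Invariant, Measure.ext_iff]
  exact forall₂_congr fun A hA => by rw [Measure.bind_apply hA κ.measurable.aemeasurable]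

/- Irreducibility of `Q` makes every entry of `exp (δ Q)` positive, so that a single step already
couples the regimes. -/
lemma existsUnique_invariant_EMKernel [Nonempty (Fin N)] {s v : Fin N → ℝ} {r : ℝ}
    (hQ : IsConservativeQMatrix Q) (hirr : MatrixIrreducible Q) (hδ : 0 < δ)
    (hLip : ∀ i x y, ‖b x i - b y i‖ + hsNorm (σ x i - σ y i) ≤ L * ‖x - y‖)
    (hv : ∀ i, 0 < v i)
    (hlip : ∀ i x y, ∫ z, ‖emStep b σ δ x i z - emStep b σ δ y i z‖ ∂(stdGaussianPi m) ≤
      s i * ‖x - y‖)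
    (hs : ∀ i, (∑ j, matExp (δ • Q) i j * v j) * s i ≤ r * v i) (hr : r < 1) :
    ∃! μ : Measure (EuclideanSpace ℝ (Fin n) × Fin N),
      IsProbabilityMeasure μ ∧ IsInvariantMeasure (EMKernel Q b σ δ) μ := by
  let κ : Kernel (EuclideanSpace ℝ (Fin n) × Fin N) (EuclideanSpace ℝ (Fin n) × Fin N) :=
    ⟨EMKernel Q b σ δ, measurable_EMKernel hLip⟩
  have hP := matExp_smul_apply_pos hQ hirr hδ
  have hP1 := sum_matExp_smul_apply hQ δ
  have : IsMarkovKernel κ := ⟨fun p => by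
    change IsProbabilityMeasure (EMKernel Q b σ δ (p.1, p.2))
    rw [EMKernel_eq_switchedLaw]
    exact isProbabilityMeasure_switchedLaw (fun i j => (hP i j).le) hP1 _ (measurable_emStep _)⟩
  have hκ (μ : Measure (EuclideanSpace ℝ (Fin n) × Fin N)) :
      IsInvariantMeasure (EMKernel Q b σ δ) μ ↔ κ.Invariant μ :=
    isInvariantMeasure_iff_invariant (κ := κ)
  simp only [hκ]
  exact existsUnique_invariant_of_switchedLaw EMKernel_eq_switchedLaw hP hP1 hv
    (fun x i => integrable_emStep x) (fun x i => measurable_emStep x) hlip hs hr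

end EulerKernel

section StepSize

lemma le_mul_mul_of_isGreatest_of_isLeast {ι : Type*} {ξ : ι → ℝ} {M m : ℝ}
    (hξ : ∀ i, 0 < ξ i) (hM : IsGreatest (range ξ) M) (hm : IsLeast (range ξ) m⁻¹) (i j : ι) :
    ξ i ≤ M * m * ξ j := by
  obtain ⟨k, hk⟩ := hm.1
  have hm_pos : 0 < m := inv_pos.1 (hk ▸ hξ k)
  have hone : 1 ≤ m * ξ j := (inv_le_iff_one_le_mul₀' hm_pos).1 (hm.2 (mem_range_self j))
  calc ξ i ≤ M := hM.2 (mem_range_self i)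
    _ ≤ M * (m * ξ j) := le_mul_of_one_le_right ((hξ i).le.trans (hM.2 (mem_range_self i))) hone
    _ = M * m * ξ j := (mul_assoc _ _ _).symm

lemma mul_le_of_le_sq_div {a c δ : ℝ} (ha : 0 ≤ a) (hδ₀ : 0 ≤ δ) (hδ₁ : δ ≤ 1)
    (hδ : δ ≤ (a / c) ^ 2) : δ * c ≤ a := by
  rcases le_or_gt c 0 with hc | hc
  · exact (mul_nonpos_of_nonneg_of_nonpos hδ₀ hc).trans ha
  · have hsq : δ ^ 2 ≤ (a / c) ^ 2 := (pow_le_of_le_one hδ₀ hδ₁ two_ne_zero).trans hδ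
    exact (le_div_iff₀ hc).1 ((sq_le_sq₀ hδ₀ (div_nonneg ha hc.le)).1 hsq)

lemma step_mul_le_of_le_sq_div {ι : Type*} [Nonempty ι] {β ξ : ι → ℝ}
    {q₀ β₀ L M₁ M₂ κ lam δ : ℝ} (hξ : ∀ i, 0 < ξ i) (hβ₀ : ∀ i, |β i| ≤ β₀)
    (hM : ∀ i j, ξ i ≤ M₁ * M₂ * ξ j)
    (hκ : κ = ((1 + 12 * q₀) * β₀ + 8 * L ^ 2 * (5 + 6 * β₀)) * M₁ * M₂)
    (hlam : 0 ≤ lam) (hδ₀ : 0 ≤ δ) (hδ₁ : δ ≤ 1) (hδ : δ ≤ (lam / κ) ^ 2) :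
    δ * (12 * q₀ * β₀ * (M₁ * M₂) + 40 * L ^ 2) ≤ lam := by
  obtain ⟨i⟩ := ‹Nonempty ι›
  have hβ₀_nonneg : 0 ≤ β₀ := (abs_nonneg _).trans (hβ₀ i)
  have hM_one : 1 ≤ M₁ * M₂ := (le_mul_iff_one_le_left (hξ i)).1 (hM i i)
  have hL : 40 * L ^ 2 ≤ 40 * L ^ 2 * (M₁ * M₂) := le_mul_of_one_le_right (by positivity) hM_one
  have hrest : 0 ≤ (β₀ + 48 * L ^ 2 * β₀) * (M₁ * M₂) :=
    mul_nonneg (by positivity) (zero_le_one.trans hM_one)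
  have hle : 12 * q₀ * β₀ * (M₁ * M₂) + 40 * L ^ 2 ≤ κ := by linarith
  exact (mul_le_mul_of_nonneg_left hle hδ₀).trans (mul_le_of_le_sq_div hlam hδ₀ hδ₁ hδ)

end StepSize

end EulerMaruyama

open EulerMaruyama

theorem stmt11_general {n m N : ℕ} [Nonempty (Fin N)]
    {Q : Matrix (Fin N) (Fin N) ℝ} (hQ : IsConservativeQMatrix Q) (hirr : MatrixIrreducible Q)
    {b : EuclideanSpace ℝ (Fin n) → Fin N → EuclideanSpace ℝ (Fin n)}
    {σ : EuclideanSpace ℝ (Fin n) → Fin N → Matrix (Fin n) (Fin m) ℝ} {L : ℝ}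
    (hLip : ∀ i x y, ‖b x i - b y i‖ + hsNorm (σ x i - σ y i) ≤ L * ‖x - y‖)
    {β : Fin N → ℝ}
    (hmono : ∀ i x y, 2 * inner ℝ (x - y) (b x i - b y i) + hsNorm (σ x i - σ y i) ^ 2 ≤
      β i * ‖x - y‖ ^ 2)
    {lam : ℝ} (hlam : 0 < lam) {ξ : Fin N → ℝ} (hξ : ∀ i, 0 < ξ i)
    (heig : ∀ i, (Q.mulVec ξ) i = -(lam + β i) * ξ i)
    {q₀ β₀ M : ℝ} (hQq : ∀ i, -Q i i ≤ q₀) (hβ₀ : ∀ i, |β i| ≤ β₀)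
    (hM : ∀ i j, ξ i ≤ M * ξ j)
    {δ : ℝ} (hδ : 0 < δ) (hstep : δ * (12 * q₀ * β₀ * M + 40 * L ^ 2) ≤ lam) :
    ∃! μ : Measure (EuclideanSpace ℝ (Fin n) × Fin N),
      IsProbabilityMeasure μ ∧ IsInvariantMeasure (EMKernel Q b σ δ) μ := by
  rcases subsingleton_or_nontrivial (EuclideanSpace ℝ (Fin n)) with _ | _
  · exact existsUnique_invariant_EMKernel (s := 0) (v := 1) (r := 0) hQ hirr hδ hLip
      (fun _ => one_pos) (fun i x y => by simp [Subsingleton.elim x y]) (by simp) one_pos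
  · have hstepξ (i : Fin N) := mul_matExp_mulVec_lt hQ hξ heig hlam
      (fun i => neg_two_mul_le_of_lipschitz (hLip i) (hmono i)) hQq hβ₀ hM hδ hstep i
    obtain ⟨r, hr, hcontr⟩ := exists_sum_mul_sqrt_le
      (fun i j => (matExp_smul_apply_pos hQ hirr hδ i j).le) (sum_matExp_smul_apply hQ δ) hξ
      (fun i => (hstepξ i).1) (fun i => (hstepξ i).2)
    exact existsUnique_invariant_EMKernel hQ hirr hδ hLip (fun i => Real.sqrt_pos.2 (hξ i))
      (fun i x y => integral_norm_emStep_sub_le (hLip i) (hmono i) hδ.le x y) hcontr hr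

theorem stmt11 {n m N : ℕ} (hN : 2 ≤ N)
    (Q : Matrix (Fin N) (Fin N) ℝ)
    (hQ : IsConservativeQMatrix Q) (hirr : MatrixIrreducible Q)
    (b : EuclideanSpace ℝ (Fin n) → Fin N → EuclideanSpace ℝ (Fin n))
    (σ : EuclideanSpace ℝ (Fin n) → Fin N → Matrix (Fin n) (Fin m) ℝ)
    -- global Lipschitz condition
    (L : ℝ) (hL : 0 ≤ L)
    (hLip : ∀ i x y, ‖b x i - b y i‖ + hsNorm (σ x i - σ y i) ≤ L * ‖x - y‖)
    -- condition (H)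
    (c₀ : ℝ) (hc₀ : 0 < c₀) (β : Fin N → ℝ)
    (hH1 : ∀ i x, 2 * (inner ℝ x (b x i) : ℝ) + hsNorm (σ x i) ^ 2 ≤ c₀ + β i * ‖x‖ ^ 2)
    (hH2 : ∀ i x y, 2 * (inner ℝ (x - y) (b x i - b y i) : ℝ)
        + hsNorm (σ x i - σ y i) ^ 2 ≤ β i * ‖x - y‖ ^ 2)
    -- `Q` is reversible with respect to the probability measure `π`
    (π : Fin N → ℝ) (hπpos : ∀ i, 0 < π i) (hπsum : ∑ i, π i = 1)
    (hrev : ∀ i j, π i * Q i j = π j * Q j i)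
    -- the principal eigenvalue `λ₀ > 0` and a strictly positive minimizer `ξ`
    (lam₀ : ℝ)
    (hlam₀inf : ∀ f : Fin N → ℝ, ∑ i, π i * f i ^ 2 = 1 → lam₀ ≤ Dform π Q β f)
    (hlam₀pos : 0 < lam₀)
    (ξ : Fin N → ℝ) (hξnorm : ∑ i, π i * ξ i ^ 2 = 1) (hξpos : ∀ i, 0 < ξ i)
    (hξmin : Dform π Q β ξ = lam₀)
    -- the constants of Theorem 4.1
    (ξone ξtwo β₀ q₀ κ : ℝ)
    (hξone : IsGreatest (Set.range ξ) ξone)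
    (hξtwo : IsLeast (Set.range ξ) ξtwo⁻¹)
    (hβ₀ : IsGreatest (Set.range fun i => |β i|) β₀)
    (hq₀ : IsGreatest (Set.range fun i => -Q i i) q₀)
    (hκ : κ = ((1 + 12 * q₀) * β₀ + 8 * L ^ 2 * (5 + 6 * β₀)) * ξone * ξtwo)
    -- the stepsize
    (δ : ℝ) (hδ0 : 0 < δ) (hδ1 : δ < 1)
    (hδ : δ < min (1 / (32 * L ^ 2)) ((lam₀ / κ) ^ 2)) :
    ∃! πδ : Measure (EuclideanSpace ℝ (Fin n) × Fin N),
      IsProbabilityMeasure πδ ∧ IsInvariantMeasure (EMKernel Q b σ δ) πδ := by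
  have : Nonempty (Fin N) := ⟨⟨0, by lia⟩⟩
  have hM := le_mul_mul_of_isGreatest_of_isLeast hξpos hξone hξtwo
  have hβ (i : Fin N) : |β i| ≤ β₀ := hβ₀.2 ⟨i, rfl⟩
  exact stmt11_general hQ hirr hLip hH2 hlam₀pos hξpos
    (mulVec_eq_of_Dform_eq hQ.2 hrev hπpos hlam₀inf hξnorm hξmin) (fun i => hq₀.2 ⟨i, rfl⟩) hβ hM
    hδ0 (step_mul_le_of_le_sq_div hξpos hβ hM hκ hlam₀pos.le hδ0.le hδ1.le
      (hδ.le.trans (min_le_right _ _)))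
end

section
/- Let (E,d) be a complete separable metric space with its Borel σ-algebra and let p ∈ (0,1]. For probability measures μ, ν on E define the Wasserstein quantity W_p(μ,ν) := inf{∫_{E×E} d(x,y)^p dπ(x,y) : π a coupling of μ and ν} ∈ [0,∞]. Let K be a Markov (probability) kernel from E to E such that (x,y) ↦ W_p(K(x), K(y)) is Borel measurable on E×E. Then for all probability measures μ, ν on E: W_p(μK, νK) ≤ ∫_E ∫_E W_p(K(x), K(y)) μ(dx) ν(dy), where μK denotes the probability measure A ↦ ∫_E K(x,A) μ(dx). -/
open MeasureTheory
open scoped ENNReal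

/-- The Wasserstein quantity
`W_p(μ, ν) = inf {∫ d(x,y)^p dπ : π a coupling of μ and ν}` (with values in
`[0,∞]`), a coupling being a measure on `E × E` with marginals `μ` and `ν`. -/
noncomputable def Wp {E : Type*} [MeasurableSpace E] [PseudoMetricSpace E]
    (p : ℝ) (μ ν : Measure E) : ℝ≥0∞ :=
  sInf {c : ℝ≥0∞ | ∃ π : Measure (E × E),
    π.map Prod.fst = μ ∧ π.map Prod.snd = ν ∧
    ∫⁻ q, ENNReal.ofReal (dist q.1 q.2 ^ p) ∂π = c}

/-!
Draw an i.i.d. sequence `ω` from a law `P` on the parameter space of two kernels `κ` and `η`. By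
the strong law of large numbers the Cesàro means of `κ (ω i)` and of `η (ω i)` converge weakly to
the mixtures `κ ∘ₘ P` and `η ∘ₘ P`, and the Cesàro means of the transport costs from `κ (ω i)` to
`η (ω i)` converge to their integral. For finite means the inequality is the joint convexity of the
transport cost, so it passes to the limit by weak lower semicontinuity. Working with finite means
avoids choosing optimal couplings measurably in the parameter.

Lower semicontinuity holds because the marginal map on probability measures on a product is proper
(Prokhorov's theorem), hence closed, and it maps the sublevel sets of `π ↦ ∫ c dπ` to those of the
transport cost. It also makes the transport cost between `κ q` and `η q` measurable in `q`. The
theorem is the case of `μ.prod ν` and the kernel `K` evaluated at each of the two coordinates.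
-/

open ProbabilityTheory Filter Topology TopologicalSpace
open scoped NNReal BoundedContinuousFunction

section CesaroMean

/-- The arithmetic mean of the first `n + 1` terms of a sequence of measures or of extended
nonnegative reals; the shift by one makes the mean of probability measures a probability measure
for every `n`. -/
noncomputable def cesaroMean {M : Type*} [AddCommMonoid M] [Module ℝ≥0∞ M] (u : ℕ → M) (n : ℕ) :
    M :=
  ((n + 1 : ℕ) : ℝ≥0∞)⁻¹ • ∑ i ∈ Finset.range (n + 1), u i

theorem cesaroMean_const (a : ℝ≥0∞) (n : ℕ) : cesaroMean (fun _ => a) n = a := by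
  rw [cesaroMean, Finset.sum_const, Finset.card_range, nsmul_eq_mul, smul_eq_mul, ← mul_assoc,
    ENNReal.inv_mul_cancel (by simp) (ENNReal.natCast_ne_top _), one_mul]

theorem cesaroMean_apply {Ω : Type*} [MeasurableSpace Ω] (m : ℕ → Measure Ω) (n : ℕ) (s : Set Ω) :
    cesaroMean m n s = cesaroMean (fun i => m i s) n := by
  simp [cesaroMean]

instance {Ω : Type*} [MeasurableSpace Ω] (m : ℕ → Measure Ω) [∀ i, IsProbabilityMeasure (m i)]
    (n : ℕ) : IsProbabilityMeasure (cesaroMean m n) where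
  measure_univ := by simp only [cesaroMean_apply, measure_univ, cesaroMean_const]

theorem cesaroMean_eq_ofReal {u : ℕ → ℝ≥0∞} (hu : ∀ i, u i ≠ ∞) (n : ℕ) :
    cesaroMean u n =
      ENNReal.ofReal (((n + 1 : ℕ) : ℝ)⁻¹ • ∑ i ∈ Finset.range (n + 1), (u i).toReal) := by
  rw [smul_eq_mul, ENNReal.ofReal_mul (by positivity), ENNReal.ofReal_inv_of_pos (by positivity),
    ENNReal.ofReal_natCast, ← ENNReal.toReal_sum fun i _ => hu i,
    ENNReal.ofReal_toReal (ENNReal.sum_ne_top.2 fun i _ => hu i), cesaroMean, smul_eq_mul]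

end CesaroMean

section StrongLaw

variable {Ω : Type*} [MeasurableSpace Ω] (P : Measure Ω) [IsProbabilityMeasure P]

theorem strong_law_ae_infinitePi {V : Type*} [NormedAddCommGroup V] [NormedSpace ℝ V]
    [CompleteSpace V] [MeasurableSpace V] [BorelSpace V] {f : Ω → V} (hfm : Measurable f)
    (hf : Integrable f P) :
    ∀ᵐ ω ∂Measure.infinitePi (fun _ : ℕ => P),
      Tendsto (fun n : ℕ => (n : ℝ)⁻¹ • ∑ i ∈ Finset.range n, f (ω i)) atTop (𝓝 (∫ x, f x ∂P)) := by
  have eval_preserving (i : ℕ) := measurePreserving_eval_infinitePi (fun _ : ℕ => P) i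
  have law (i : ℕ) : HasLaw (fun ω : ℕ → Ω => f (ω i)) (P.map f) (.infinitePi fun _ => P) :=
    ⟨(hfm.comp (measurable_pi_apply i)).aemeasurable,
      ((hfm.measurePreserving P).comp (eval_preserving i)).map_eq⟩
  have indep : iIndepFun (fun (i : ℕ) (ω : ℕ → Ω) => f (ω i)) (.infinitePi fun _ => P) :=
    iIndepFun_infinitePi fun _ => hfm
  have mean : ∫ ω, f (ω 0) ∂.infinitePi (fun _ : ℕ => P) = ∫ x, f x ∂P := by
    have eval_law : HasLaw (fun ω : ℕ → Ω => ω 0) P (.infinitePi fun _ => P) :=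
      ⟨(eval_preserving 0).aemeasurable, (eval_preserving 0).map_eq⟩
    exact eval_law.integral_comp hf.aestronglyMeasurable
  rw [← mean]
  exact strong_law_ae _ ((eval_preserving 0).integrable_comp_of_integrable hf)
    (fun i j hij => indep.indepFun hij) fun i => (law i).identDistrib (law 0)

theorem ae_tendsto_cesaroMean_lintegral {g : Ω → ℝ≥0∞} (hg : Measurable g)
    (hfin : ∫⁻ x, g x ∂P ≠ ∞) :
    ∀ᵐ ω ∂Measure.infinitePi (fun _ : ℕ => P),
      Tendsto (cesaroMean fun i => g (ω i)) atTop (𝓝 (∫⁻ x, g x ∂P)) := by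
  have finite_along : ∀ᵐ ω ∂Measure.infinitePi (fun _ : ℕ => P), ∀ i, g (ω i) ≠ ∞ :=
    ae_all_iff.2 fun i =>
      (measurePreserving_eval_infinitePi (fun _ => P) i).quasiMeasurePreserving.ae
        ((ae_lt_top hg hfin).mono fun _ => ne_of_lt)
  filter_upwards [finite_along, strong_law_ae_infinitePi P hg.ennreal_toReal
    (integrable_toReal_of_lintegral_ne_top hg.aemeasurable hfin)] with ω hω hlim
  rw [integral_toReal hg.aemeasurable (ae_lt_top hg hfin)] at hlim
  have hlim_ofReal := ENNReal.tendsto_ofReal (hlim.comp (tendsto_add_atTop_nat 1))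
  rw [ENNReal.ofReal_toReal hfin] at hlim_ofReal
  exact hlim_ofReal.congr fun n => (cesaroMean_eq_ofReal hω n).symm

end StrongLaw

section WeakTopology

theorem exists_countable_isPiSystem_isOpen (X : Type*) [TopologicalSpace X]
    [SecondCountableTopology X] :
    ∃ S : Set (Set X), S.Countable ∧ IsPiSystem S ∧ (∀ s ∈ S, IsOpen s) ∧
      ∀ u : Set X, IsOpen u → ∀ x ∈ u, ∃ s ∈ S, s ∈ 𝓝 x ∧ s ⊆ u := by
  refine ⟨Set.sInter '' {f | f.Finite ∧ f ⊆ countableBasis X},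
    (Set.countable_ofPred_finite_subset (countable_countableBasis X)).image _, ?_, ?_, ?_⟩
  · rintro _ ⟨f, ⟨hf, hfb⟩, rfl⟩ _ ⟨g, ⟨hg, hgb⟩, rfl⟩ -
    exact ⟨f ∪ g, ⟨hf.union hg, Set.union_subset hfb hgb⟩, Set.sInter_union f g⟩
  · rintro _ ⟨f, ⟨hf, hfb⟩, rfl⟩
    exact hf.isOpen_sInter fun t ht => isOpen_of_mem_countableBasis (hfb ht)
  · intro u hu x hx
    obtain ⟨v, hv, hxv, hvu⟩ := (isBasis_countableBasis X).exists_subset_of_mem_open hx hu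
    have hvS : ⋂₀ {v} = v := Set.sInter_singleton v
    exact ⟨v, ⟨{v}, ⟨Set.finite_singleton v, Set.singleton_subset_iff.2 hv⟩, hvS⟩,
      (isOpen_of_mem_countableBasis hv).mem_nhds hxv, hvu⟩

theorem ae_tendsto_cesaroMean_comp {Ω X : Type*} [MeasurableSpace Ω] (P : Measure Ω)
    [IsProbabilityMeasure P] [TopologicalSpace X] [SecondCountableTopology X] [MeasurableSpace X]
    [OpensMeasurableSpace X] (κ : Kernel Ω X) [IsMarkovKernel κ] :
    ∀ᵐ ω ∂Measure.infinitePi (fun _ : ℕ => P),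
      Tendsto (β := ProbabilityMeasure X)
        (fun n => ⟨cesaroMean (fun i => κ (ω i)) n, inferInstance⟩) atTop
        (𝓝 ⟨κ ∘ₘ P, inferInstance⟩) := by
  obtain ⟨S, S_countable, S_pi, S_open, S_nhds⟩ := exists_countable_isPiSystem_isOpen X
  have tendsto_on_S : ∀ᵐ ω ∂Measure.infinitePi (fun _ : ℕ => P), ∀ s ∈ S,
      Tendsto (cesaroMean fun i => κ (ω i) s) atTop (𝓝 (∫⁻ x, κ x s ∂P)) := by
    refine (ae_ball_iff S_countable).2 fun s hs => ?_
    refine ae_tendsto_cesaroMean_lintegral P (κ.measurable_coe (S_open s hs).measurableSet) ?_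
    exact ((lintegral_mono fun x => prob_le_one).trans_lt (by simp)).ne
  filter_upwards [tendsto_on_S] with ω hω
  refine S_pi.tendsto_probabilityMeasure_of_tendsto_of_mem
    (fun s hs => (S_open s hs).measurableSet) S_nhds fun s hs => ?_
  have hs_lim := hω s hs
  rw [← Measure.bind_apply (S_open s hs).measurableSet κ.aemeasurable] at hs_lim
  exact ((ENNReal.tendsto_toNNReal (measure_ne_top _ s)).comp hs_lim).congr fun n =>
    congrArg ENNReal.toNNReal (cesaroMean_apply _ n s).symm

theorem opensMeasurableSpace_of_induced_le {Z W : Type*} [tZ : TopologicalSpace Z]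
    [MeasurableSpace Z] [tW : TopologicalSpace W] [MeasurableSpace W] [OpensMeasurableSpace W]
    {e : Z → W} (he : Measurable e) (hle : tW.induced e ≤ tZ) : OpensMeasurableSpace Z := by
  refine ⟨MeasurableSpace.generateFrom_le fun U hU => ?_⟩
  obtain ⟨V, hV, rfl⟩ := isOpen_induced_iff.1 (hle U hU)
  exact he hV.measurableSet

-- Evaluation on an open set is measurable but only lower semicontinuous, so the induced topology is
-- in general strictly finer than the weak one; what matters is that it is second countable.
theorem exists_measurable_induced_le_probabilityMeasure (X : Type*) [TopologicalSpace X]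
    [SecondCountableTopology X] [MeasurableSpace X] [OpensMeasurableSpace X] :
    ∃ (S : Set (Set X)) (_ : Countable S) (e : ProbabilityMeasure X → S → ℝ≥0),
      Measurable e ∧ Pi.topologicalSpace.induced e ≤ ProbabilityMeasure.instTopologicalSpace := by
  obtain ⟨S, S_countable, S_pi, S_open, S_nhds⟩ := exists_countable_isPiSystem_isOpen X
  have : Countable S := S_countable
  let e : ProbabilityMeasure X → S → ℝ≥0 := fun μ s => μ s
  refine ⟨S, this, e, measurable_pi_iff.2 fun s => ?_, (le_iff_nhds _ _).2 fun μ => ?_⟩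
  · exact ((Measure.measurable_coe (S_open s s.2).measurableSet).comp
      measurable_subtype_coe).ennreal_toNNReal
  · rw [nhds_induced, ← tendsto_id']
    refine S_pi.tendsto_probabilityMeasure_of_tendsto_of_mem
      (fun s hs => (S_open s hs).measurableSet) S_nhds fun s hs => ?_
    exact ((continuous_apply (⟨s, hs⟩ : S)).tendsto (e μ)).comp tendsto_comap

theorem opensMeasurableSpace_probabilityMeasure_prod (X Y : Type*) [TopologicalSpace X]
    [SecondCountableTopology X] [MeasurableSpace X] [OpensMeasurableSpace X] [TopologicalSpace Y]
    [SecondCountableTopology Y] [MeasurableSpace Y] [OpensMeasurableSpace Y] :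
    OpensMeasurableSpace (ProbabilityMeasure X × ProbabilityMeasure Y) := by
  obtain ⟨S, _, e, e_meas, e_le⟩ := exists_measurable_induced_le_probabilityMeasure X
  obtain ⟨T, _, f, f_meas, f_le⟩ := exists_measurable_induced_le_probabilityMeasure Y
  refine opensMeasurableSpace_of_induced_le (e_meas.prodMap f_meas) ?_
  exact (prod_induced_induced e f).ge.trans (inf_le_inf (induced_mono e_le) (induced_mono f_le))

theorem lowerSemicontinuous_lintegral_of_continuous {Z : Type*} [TopologicalSpace Z]
    [MeasurableSpace Z] [OpensMeasurableSpace Z] {c : Z → ℝ≥0∞} (hc : Continuous c) :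
    LowerSemicontinuous fun μ : ProbabilityMeasure Z => ∫⁻ z, c z ∂μ := by
  have trunc_ne_top (n : ℕ) (z : Z) : min (c z) n ≠ ∞ :=
    ((min_le_right _ _).trans_lt (ENNReal.natCast_lt_top n)).ne
  have trunc_mem_Icc (n : ℕ) (z : Z) : ((min (c z) n).toNNReal : ℝ) ∈ Set.Icc (0 : ℝ) n :=
    ⟨NNReal.coe_nonneg _, ENNReal.toNNReal_mono (ENNReal.natCast_ne_top n) (min_le_right _ _)⟩
  let trunc (n : ℕ) : Z →ᵇ ℝ≥0 := .mkOfBound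
    ⟨fun z => (min (c z) n).toNNReal, ENNReal.continuousOn_toNNReal.comp_continuous
      (hc.min continuous_const) (trunc_ne_top n)⟩
    n fun z w =>
      (Real.dist_le_of_mem_Icc (trunc_mem_Icc n z) (trunc_mem_Icc n w)).trans_eq (sub_zero _)
  have coe_trunc (n : ℕ) (z : Z) : (trunc n z : ℝ≥0∞) = min (c z) n :=
    ENNReal.coe_toNNReal (trunc_ne_top n z)
  have lintegral_eq (μ : ProbabilityMeasure Z) : ∫⁻ z, c z ∂μ = ⨆ n, ∫⁻ z, trunc n z ∂μ := by
    rw [← lintegral_iSup (fun n => by fun_prop)]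
    · simp_rw [coe_trunc, ← inf_iSup_eq, ENNReal.iSup_natCast, inf_top_eq]
    · intro m n hmn z
      simp only [coe_trunc]
      gcongr
  simp_rw [lintegral_eq]
  exact lowerSemicontinuous_iSup fun n =>
    ProbabilityMeasure.continuous_lintegral_boundedContinuousFunction (trunc n)
      |>.lowerSemicontinuous

end WeakTopology

section TransportCost

variable {X Y : Type*} [MeasurableSpace X] [MeasurableSpace Y]

/-- The couplings of `μ` and `ν`, that is, the transport plans from `μ` to `ν`. -/
def couplings (μ : Measure X) (ν : Measure Y) : Set (Measure (X × Y)) :=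
  {π | π.fst = μ ∧ π.snd = ν}

/-- The value of the Kantorovich optimal transport problem from `μ` to `ν` with cost function `c`;
it is `∞` if there is no coupling. -/
noncomputable def transportCost (c : X × Y → ℝ≥0∞) (μ : Measure X) (ν : Measure Y) : ℝ≥0∞ :=
  ⨅ π : couplings μ ν, ∫⁻ z, c z ∂(π : Measure (X × Y))

theorem isProbabilityMeasure_of_mem_couplings {μ : Measure X} {ν : Measure Y}
    [IsProbabilityMeasure μ] {π : Measure (X × Y)} (hπ : π ∈ couplings μ ν) :
    IsProbabilityMeasure π := by
  have : IsProbabilityMeasure (π.map Prod.fst) := by rwa [← Measure.fst, hπ.1]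
  exact Measure.isProbabilityMeasure_of_map Prod.fst

theorem transportCost_le_lintegral {c : X × Y → ℝ≥0∞} {μ : Measure X} {ν : Measure Y}
    {π : Measure (X × Y)} (hπ : π ∈ couplings μ ν) : transportCost c μ ν ≤ ∫⁻ z, c z ∂π :=
  iInf_le_of_le ⟨π, hπ⟩ le_rfl

theorem transportCost_zero (c : X × Y → ℝ≥0∞) : transportCost c 0 0 = 0 := by
  have zero_mem : (0 : Measure (X × Y)) ∈ couplings 0 0 := ⟨Measure.fst_zero, Measure.snd_zero⟩
  simpa using transportCost_le_lintegral (c := c) zero_mem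

theorem transportCost_add_le (c : X × Y → ℝ≥0∞) (μ μ' : Measure X) (ν ν' : Measure Y) :
    transportCost c (μ + μ') (ν + ν') ≤ transportCost c μ ν + transportCost c μ' ν' := by
  refine ENNReal.le_iInf_add_iInf fun π π' => ?_
  rw [← lintegral_add_measure]
  refine transportCost_le_lintegral ⟨?_, ?_⟩
  · rw [Measure.fst_add, π.2.1, π'.2.1]
  · rw [Measure.snd_add, π.2.2, π'.2.2]

theorem transportCost_sum_le {ι : Type*} (c : X × Y → ℝ≥0∞) (s : Finset ι) (μ : ι → Measure X)
    (ν : ι → Measure Y) :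
    transportCost c (∑ i ∈ s, μ i) (∑ i ∈ s, ν i) ≤ ∑ i ∈ s, transportCost c (μ i) (ν i) := by
  have := Finset.le_sum_of_subadditive (fun q : Measure X × Measure Y => transportCost c q.1 q.2)
    (transportCost_zero c).le (fun q r => transportCost_add_le c _ _ _ _) s fun i => (μ i, ν i)
  simpa only [Prod.fst_sum, Prod.snd_sum] using this

theorem transportCost_smul_le (c : X × Y → ℝ≥0∞) {a : ℝ≥0∞} (h0 : a ≠ 0) (h : a ≠ ∞)
    (μ : Measure X) (ν : Measure Y) :
    transportCost c (a • μ) (a • ν) ≤ a * transportCost c μ ν := by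
  rw [transportCost, transportCost, ENNReal.mul_iInf_of_ne h0 h]
  refine le_iInf fun π => ?_
  rw [← smul_eq_mul, ← lintegral_smul_measure]
  refine transportCost_le_lintegral ⟨?_, ?_⟩
  · rw [Measure.fst, Measure.map_smul, ← Measure.fst, π.2.1]
  · rw [Measure.snd, Measure.map_smul, ← Measure.snd, π.2.2]

theorem transportCost_cesaroMean_le (c : X × Y → ℝ≥0∞) (μ : ℕ → Measure X) (ν : ℕ → Measure Y)
    (n : ℕ) :
    transportCost c (cesaroMean μ n) (cesaroMean ν n) ≤
      cesaroMean (fun i => transportCost c (μ i) (ν i)) n :=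
  (transportCost_smul_le c (by simp) (by simp) _ _).trans
    (mul_le_mul_right (transportCost_sum_le c _ μ ν) _)

end TransportCost

section Kernel

variable {Ω Ω' X : Type*} [MeasurableSpace Ω] [MeasurableSpace Ω'] [MeasurableSpace X]
  (κ : Kernel Ω X)

theorem comp_prodMkRight_prod (μ : Measure Ω) (ν : Measure Ω') [IsProbabilityMeasure ν] :
    κ.prodMkRight Ω' ∘ₘ μ.prod ν = κ ∘ₘ μ := by
  rw [Kernel.prodMkRight, ← Kernel.comp_deterministic_eq_comap, ← Measure.comp_assoc,
    Measure.deterministic_comp_eq_map, ← Measure.fst, Measure.fst_prod]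

theorem comp_prodMkLeft_prod (ν : Measure Ω') [IsProbabilityMeasure ν] (μ : Measure Ω) [SFinite μ] :
    κ.prodMkLeft Ω' ∘ₘ ν.prod μ = κ ∘ₘ μ := by
  rw [Kernel.prodMkLeft, ← Kernel.comp_deterministic_eq_comap, ← Measure.comp_assoc,
    Measure.deterministic_comp_eq_map, ← Measure.snd, Measure.snd_prod]

end Kernel

section Prokhorov

/-- The pair of marginals of a probability measure on a product space, as a map whose fibres are
the sets of couplings. -/
noncomputable def marginals {X Y : Type*} [MeasurableSpace X] [MeasurableSpace Y]
    (π : ProbabilityMeasure (X × Y)) : ProbabilityMeasure X × ProbabilityMeasure Y :=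
  (π.map measurable_fst.aemeasurable, π.map measurable_snd.aemeasurable)

theorem continuous_marginals {X Y : Type*} [TopologicalSpace X] [MeasurableSpace X] [BorelSpace X]
    [TopologicalSpace Y] [MeasurableSpace Y] [BorelSpace Y] [SecondCountableTopologyEither X Y] :
    Continuous (marginals (X := X) (Y := Y)) :=
  (ProbabilityMeasure.continuous_map continuous_fst).prodMk
    (ProbabilityMeasure.continuous_map continuous_snd)

variable {X Y : Type*} [TopologicalSpace X] [PolishSpace X] [MeasurableSpace X] [BorelSpace X]
  [TopologicalSpace Y] [PolishSpace Y] [MeasurableSpace Y] [BorelSpace Y]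

theorem isTightMeasureSet_of_isCompact {K : Set (ProbabilityMeasure X)} (hK : IsCompact K) :
    IsTightMeasureSet {((μ : ProbabilityMeasure X) : Measure X) | μ ∈ K} := by
  let := upgradeIsCompletelyMetrizable X
  exact isTightMeasureSet_of_isCompact_closure (hK.isClosed.closure_eq.symm ▸ hK)

theorem isProperMap_marginals : IsProperMap (marginals (X := X) (Y := Y)) := by
  refine isProperMap_iff_isCompact_preimage.2 ⟨continuous_marginals, fun K hK => ?_⟩
  have tight : IsTightMeasureSet
      {((π : ProbabilityMeasure (X × Y)) : Measure (X × Y)) | π ∈ marginals ⁻¹' K} := by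
    refine .prodMk ((isTightMeasureSet_of_isCompact (hK.image continuous_fst)).subset ?_)
      ((isTightMeasureSet_of_isCompact (hK.image continuous_snd)).subset ?_)
    · rintro _ ⟨_, ⟨π, hπ, rfl⟩, rfl⟩
      exact ⟨_, ⟨_, hπ, rfl⟩, rfl⟩
    · rintro _ ⟨_, ⟨π, hπ, rfl⟩, rfl⟩
      exact ⟨_, ⟨_, hπ, rfl⟩, rfl⟩
  exact (isCompact_closure_of_isTightMeasureSet tight).of_isClosed_subset
    (hK.isClosed.preimage continuous_marginals) subset_closure

theorem lowerSemicontinuous_transportCost {c : X × Y → ℝ≥0∞} (hc : Continuous c) :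
    LowerSemicontinuous fun q : ProbabilityMeasure X × ProbabilityMeasure Y =>
      transportCost c (q.1 : Measure X) (q.2 : Measure Y) := by
  refine lowerSemicontinuous_iff_isClosed_preimage.2 fun a => ?_
  have sublevel_eq :
      (fun q : ProbabilityMeasure X × ProbabilityMeasure Y =>
        transportCost c (q.1 : Measure X) (q.2 : Measure Y)) ⁻¹' Set.Iic a =
      ⋂ b > a,
        marginals '' ((fun π : ProbabilityMeasure (X × Y) => ∫⁻ z, c z ∂π) ⁻¹' Set.Iic b) := by
    ext q
    simp only [Set.mem_preimage, Set.mem_Iic, Set.mem_iInter, Set.mem_image]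
    constructor
    · intro hq b hb
      obtain ⟨⟨π, hπ⟩, hπb⟩ := iInf_lt_iff.1 (hq.trans_lt hb)
      have := isProbabilityMeasure_of_mem_couplings hπ
      exact ⟨⟨π, this⟩, hπb.le, Prod.ext (Subtype.ext hπ.1) (Subtype.ext hπ.2)⟩
    · intro h
      refine le_of_forall_gt_imp_ge_of_dense fun b hb => ?_
      obtain ⟨π, hπb, rfl⟩ := h b hb
      exact (transportCost_le_lintegral ⟨rfl, rfl⟩).trans hπb
  rw [sublevel_eq]
  exact isClosed_biInter fun b _ => isProperMap_marginals.isClosedMap _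
    ((lowerSemicontinuous_lintegral_of_continuous hc).isClosed_preimage b)

theorem measurable_transportCost_kernel {Ω : Type*} [MeasurableSpace Ω] {c : X × Y → ℝ≥0∞}
    (hc : Continuous c) (κ : Kernel Ω X) [IsMarkovKernel κ] (η : Kernel Ω Y) [IsMarkovKernel η] :
    Measurable fun q => transportCost c (κ q) (η q) := by
  have := opensMeasurableSpace_probabilityMeasure_prod X Y
  exact (lowerSemicontinuous_transportCost hc).measurable.comp
    ((κ.measurable.subtype_mk (h := IsMarkovKernel.isProbabilityMeasure)).prodMk
      (η.measurable.subtype_mk (h := IsMarkovKernel.isProbabilityMeasure)))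

theorem transportCost_comp_le_lintegral {Ω : Type*} [MeasurableSpace Ω] {c : X × Y → ℝ≥0∞}
    (hc : Continuous c) (P : Measure Ω) [IsProbabilityMeasure P] (κ : Kernel Ω X)
    [IsMarkovKernel κ] (η : Kernel Ω Y) [IsMarkovKernel η] :
    transportCost c (κ ∘ₘ P) (η ∘ₘ P) ≤ ∫⁻ q, transportCost c (κ q) (η q) ∂P := by
  by_cases hfin : ∫⁻ q, transportCost c (κ q) (η q) ∂P = ∞
  · exact hfin ▸ le_top
  obtain ⟨ω, hκ, hη, hcost⟩ := ((ae_tendsto_cesaroMean_comp P κ).and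
    ((ae_tendsto_cesaroMean_comp P η).and
      (ae_tendsto_cesaroMean_lintegral P (measurable_transportCost_kernel hc κ η) hfin))).exists
  refine le_of_forall_lt_imp_le_of_dense fun a ha => ?_
  have ha_mean := (hκ.prodMk_nhds hη).eventually (lowerSemicontinuous_transportCost hc _ a ha)
  exact ge_of_tendsto hcost <| ha_mean.mono fun n hn =>
    hn.le.trans (transportCost_cesaroMean_le c _ _ n)

theorem transportCost_comp_comp_le_lintegral_lintegral {Ω Ω' : Type*} [MeasurableSpace Ω]
    [MeasurableSpace Ω'] {c : X × Y → ℝ≥0∞} (hc : Continuous c) (κ : Kernel Ω X)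
    [IsMarkovKernel κ] (η : Kernel Ω' Y) [IsMarkovKernel η] (μ : Measure Ω)
    [IsProbabilityMeasure μ] (ν : Measure Ω') [IsProbabilityMeasure ν] :
    transportCost c (κ ∘ₘ μ) (η ∘ₘ ν) ≤ ∫⁻ x, ∫⁻ y, transportCost c (κ x) (η y) ∂ν ∂μ := by
  have := transportCost_comp_le_lintegral hc (μ.prod ν) (κ.prodMkRight Ω') (η.prodMkLeft Ω)
  rwa [comp_prodMkRight_prod, comp_prodMkLeft_prod, lintegral_prod _
    (measurable_transportCost_kernel hc _ _).aemeasurable] at this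

end Prokhorov

theorem Wp_eq_transportCost {E : Type*} [MeasurableSpace E] [PseudoMetricSpace E] (p : ℝ)
    (μ ν : Measure E) :
    Wp p μ ν = transportCost (fun q => ENNReal.ofReal (dist q.1 q.2 ^ p)) μ ν := by
  rw [Wp, transportCost, ← sInf_range]
  congr 1
  ext a
  simp [couplings, Measure.fst, Measure.snd, and_assoc]

theorem stmt14_general {E : Type*} [MetricSpace E] [CompleteSpace E]
    [SeparableSpace E] [MeasurableSpace E] [BorelSpace E]
    (p : ℝ) (hp0 : 0 < p) (K : E → Measure E) (hKmeas : Measurable K)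
    (hKprob : ∀ x, IsProbabilityMeasure (K x))
    (μ ν : Measure E) [IsProbabilityMeasure μ] [IsProbabilityMeasure ν] :
    Wp p (μ.bind K) (ν.bind K) ≤ ∫⁻ x, ∫⁻ y, Wp p (K x) (K y) ∂ν ∂μ := by
  let κ : Kernel E E := ⟨K, hKmeas⟩
  have : IsMarkovKernel κ := ⟨hKprob⟩
  have cost_continuous : Continuous fun q : E × E => ENNReal.ofReal (dist q.1 q.2 ^ p) :=
    ENNReal.continuous_ofReal.comp (continuous_dist.rpow_const fun _ => .inr hp0.le)
  simp only [Wp_eq_transportCost]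
  exact transportCost_comp_comp_le_lintegral_lintegral cost_continuous κ κ μ ν

theorem stmt14 {E : Type*} [MetricSpace E] [CompleteSpace E]
    [TopologicalSpace.SeparableSpace E] [MeasurableSpace E] [BorelSpace E]
    (p : ℝ) (hp0 : 0 < p) (hp1 : p ≤ 1)
    (K : E → Measure E) (hKmeas : Measurable K)
    (hKprob : ∀ x, IsProbabilityMeasure (K x))
    (hWmeas : Measurable fun q : E × E => Wp p (K q.1) (K q.2))
    (μ ν : Measure E) [IsProbabilityMeasure μ] [IsProbabilityMeasure ν] :
    Wp p (μ.bind K) (ν.bind K) ≤ ∫⁻ x, ∫⁻ y, Wp p (K x) (K y) ∂ν ∂μ :=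
  stmt14_general p hp0 K hKmeas hKprob μ ν
end
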